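/- Let k be a field with 2 ∈ k^×, let (R,*) be an involutive k-algebra, and let (D,P) : (R,*) → k be a weak symplectic determinant law of dimension 2d. Then there is an isomorphism of involutive k-algebras R/ker(D) ≅ Π_{i=1}^t (R_i, σ_i) in which each R_i is a central simple algebra over a field extension of k equipped with either a symplectic involution, an orthogonal involution, or a unitary (second-kind) involution over a quadratic étale extension (including the split case T × T^{op} with the swap involution); each factor (R_i, σ_i) carries a symplectic determinant law (D_i, P_i), and D = Π_{i=1}^t D_i ∘ π_i and P = Π_{i=1}^t P_i ∘ π_i, where π_i : R → R_i are the projections. In particular CH(P) ⊆ ker(D), i.e. every weak symplectic determinant law over a field with 2 invertible is a symplectic determinant law. -/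

import Mathlib

/-!
STATEMENT 6: structure theorem for weak symplectic determinant laws over a field `k` with
`2 ∈ k^×`: `R/ker(D)` decomposes as a finite product of involutive algebras, each a central
simple algebra with a symplectic, orthogonal, or unitary (second-kind/split) involution,
each carrying a symplectic determinant law `(D_i, P_i)`, with `D = ∏ D_i ∘ π_i` and
`P = ∏ P_i ∘ π_i`. In particular `CH(P) ⊆ ker(D)`, i.e. `(D, P)` is a symplectic
determinant law.
-/

open scoped TensorProduct
open Matrix

universe u

namespace SympDet

/-! ### Polynomial laws valued in the base ring -/

variable (A : Type u) [CommRing A]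

/-- An `A`-polynomial law on the `A`-module `M` with values in `A`: a family of maps
`M ⊗[A] B → B` (written `B ⊗[A] M → B`), one for each commutative `A`-algebra `B`,
natural in `B`. -/
structure PolyLaw (M : Type u) [AddCommGroup M] [Module A M] : Type (u + 1) where
  toFun : ∀ (B : Type u) [CommRing B] [Algebra A B], B ⊗[A] M → B
  natural : ∀ (B B' : Type u) [CommRing B] [Algebra A B] [CommRing B'] [Algebra A B']
      (f : B →ₐ[A] B') (x : B ⊗[A] M),
      f (toFun B x) = toFun B' (LinearMap.rTensor M f.toLinearMap x)

variable {A}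

/-- Homogeneity of degree `n` of a polynomial law. -/
def PolyLaw.IsHomog {M : Type u} [AddCommGroup M] [Module A M] (P : PolyLaw A M) (n : ℕ) : Prop :=
  ∀ (B : Type u) [CommRing B] [Algebra A B] (b : B) (x : B ⊗[A] M),
    P.toFun B (b • x) = b ^ n * P.toFun B x

/-- The kernel of a polynomial law. -/
def PolyLaw.lawKer {M : Type u} [AddCommGroup M] [Module A M] (P : PolyLaw A M) : Set M :=
  {m | ∀ (B : Type u) [CommRing B] [Algebra A B] (b : B) (y : B ⊗[A] M),
    P.toFun B (b ⊗ₜ[A] m + y) = P.toFun B y}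

/-- Multiplicativity of a polynomial law on an `A`-algebra `R`. -/
def PolyLaw.IsMult {R : Type u} [Ring R] [Algebra A R] (D : PolyLaw A R) : Prop :=
  ∀ (B : Type u) [CommRing B] [Algebra A B],
    D.toFun B 1 = 1 ∧ ∀ x y : B ⊗[A] R, D.toFun B (x * y) = D.toFun B x * D.toFun B y

/-! ### Involutive algebras -/

variable (A) in
/-- An involutive `A`-algebra structure: an `A`-linear involutive anti-automorphism. -/
structure InvAlg (R : Type u) [Ring R] [Algebra A R] : Type u where
  star : R →ₗ[A] R
  star_one : star 1 = 1
  star_mul : ∀ x y : R, star (x * y) = star y * star x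
  star_star : ∀ x : R, star (star x) = x

variable {R : Type u} [Ring R] [Algebra A R]

/-- The submodule of symmetric elements `R⁺`. -/
def InvAlg.plus (s : InvAlg A R) : Submodule A R :=
  LinearMap.ker (s.star - LinearMap.id)

theorem InvAlg.one_mem_plus (s : InvAlg A R) : (1 : R) ∈ s.plus := by
  simp [InvAlg.plus, LinearMap.mem_ker, LinearMap.sub_apply, s.star_one]

/-- `1` as an element of `R⁺`. -/
def InvAlg.onePlus (s : InvAlg A R) : s.plus := ⟨1, s.one_mem_plus⟩

/-- The inclusion `B ⊗[A] R⁺ → B ⊗[A] R`. -/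
noncomputable def InvAlg.incl (s : InvAlg A R) (B : Type u) [CommRing B] [Algebra A B] :
    B ⊗[A] ↥s.plus →ₗ[A] B ⊗[A] R :=
  LinearMap.lTensor B s.plus.subtype

/-- A weak symplectic determinant law of dimension `2d`. -/
structure IsWeakSympDet (s : InvAlg A R) (d : ℕ) (D : PolyLaw A R) (P : PolyLaw A ↥s.plus) :
    Prop where
  mult : D.IsMult
  homog : D.IsHomog (2 * d)
  starInv : ∀ (B : Type u) [CommRing B] [Algebra A B] (x : B ⊗[A] R),
      D.toFun B (LinearMap.lTensor B s.star x) = D.toFun B x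
  homogP : P.IsHomog d
  sq : ∀ (B : Type u) [CommRing B] [Algebra A B] (x : B ⊗[A] ↥s.plus),
      P.toFun B x ^ 2 = D.toFun B (s.incl B x)
  one : P.toFun A ((1 : A) ⊗ₜ[A] s.onePlus) = 1

/-! ### Characteristic polynomials and the Cayley-Hamilton ideal -/

/-- The characteristic polynomial `χ^P(x, t) = P_{B[t]}(t·e - x)` of a polynomial law,
relative to a marked element `e` (the unit). -/
noncomputable def chPoly {M : Type u} [AddCommGroup M] [Module A M] (P : PolyLaw A M) (e : M)
    (B : Type u) [CommRing B] [Algebra A B] (x : B ⊗[A] M) : Polynomial B :=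
  P.toFun (Polynomial B)
    ((Polynomial.X : Polynomial B) ⊗ₜ[A] e -
      LinearMap.rTensor M (IsScalarTower.toAlgHom A B (Polynomial B)).toLinearMap x)

/-- The coefficient `(-1)^i Λ_i` of `t^(n-i)` in the characteristic polynomial, with the
convention that it vanishes for `i > n`. -/
noncomputable def chCoeff {M : Type u} [AddCommGroup M] [Module A M] (P : PolyLaw A M) (e : M)
    (n i : ℕ) (B : Type u) [CommRing B] [Algebra A B] (x : B ⊗[A] M) : B :=
  if i ≤ n then (-1 : B) ^ i * (chPoly P e B x).coeff (n - i) else 0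

/-- `χ^P(x, x)`: the characteristic polynomial of `x ∈ (B ⊗ R)⁺` evaluated at `x` itself. -/
noncomputable def chEval (s : InvAlg A R) (P : PolyLaw A ↥s.plus) (B : Type u) [CommRing B]
    [Algebra A B] (x : B ⊗[A] ↥s.plus) : B ⊗[A] R :=
  Polynomial.aeval (s.incl B x) (chPoly P s.onePlus B x)

/-- The `A`-linear coefficient extraction map on multivariate polynomials. -/
noncomputable def mvLcoeff {n : ℕ} (α : Fin n →₀ ℕ) : MvPolynomial (Fin n) A →ₗ[A] A where
  toFun p := MvPolynomial.coeff α p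
  map_add' p q := MvPolynomial.coeff_add α p q
  map_smul' c p := MvPolynomial.coeff_smul α c p

/-- Extracting the coefficient of the monomial `t^α` from an element of `R[t_1,…,t_n]`. -/
noncomputable def tensorCoeff {n : ℕ} (α : Fin n →₀ ℕ) :
    (MvPolynomial (Fin n) A) ⊗[A] R →ₗ[A] R :=
  (TensorProduct.lid A R).toLinearMap ∘ₗ LinearMap.rTensor R (mvLcoeff α)

/-- The generators `χ^P_α(r_1, …, r_n)` of the Cayley–Hamilton ideal of `P`:
the multihomogeneous coefficients of `χ^P(t_1 r_1 + ⋯ + t_n r_n, t_1 r_1 + ⋯ + t_n r_n)`. -/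
def chGen (s : InvAlg A R) (P : PolyLaw A ↥s.plus) : Set R :=
  {y | ∃ (n : ℕ) (r : Fin n → ↥s.plus) (α : Fin n →₀ ℕ),
    y = tensorCoeff α
      (chEval s P (MvPolynomial (Fin n) A)
        (∑ i : Fin n, (MvPolynomial.X i : MvPolynomial (Fin n) A) ⊗ₜ[A] r i))}

/-- The Cayley–Hamilton ideal `CH(P)`: the two-sided ideal generated by the
multihomogeneous coefficients of the characteristic polynomials. -/
def chIdeal (s : InvAlg A R) (P : PolyLaw A ↥s.plus) : TwoSidedIdeal R :=
  TwoSidedIdeal.span (chGen s P)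

/-- A symplectic determinant law of dimension `2d`: a weak symplectic determinant law
such that `CH(P) ⊆ ker(D)`. -/
def IsSympDet (s : InvAlg A R) (d : ℕ) (D : PolyLaw A R) (P : PolyLaw A ↥s.plus) : Prop :=
  IsWeakSympDet s d D P ∧ ∀ y ∈ chIdeal s P, y ∈ D.lawKer

/-- A symplectic Cayley–Hamilton algebra of degree `2d`: a symplectic determinant law
such that `χ^P(r, r) = 0` for all symmetric `r` over all base extensions. -/
def IsSympCH (s : InvAlg A R) (d : ℕ) (D : PolyLaw A R) (P : PolyLaw A ↥s.plus) : Prop :=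
  IsSympDet s d D P ∧
    ∀ (B : Type u) [CommRing B] [Algebra A B] (x : B ⊗[A] ↥s.plus), chEval s P B x = 0


/-! ### Central simple algebras with involution: the possible factor forms -/

/-- `σ` is an additive, unital, involutive anti-automorphism. -/
def IsAntiAutOn (T : Type u) [Ring T] (σ : T → T) : Prop :=
  σ 1 = 1 ∧ (∀ x y : T, σ (x + y) = σ x + σ y) ∧ (∀ x y : T, σ (x * y) = σ y * σ x) ∧
    ∀ x : T, σ (σ x) = x

/-- A witness that `(T, σ)` is a (finite-dimensional) central simple algebra over a field `K`
with a `K`-linear involution of the first kind of type `ε` (`ε = -1`: symplectic, `ε = 1`: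
orthogonal): over some splitting field `L`, the involution becomes `x ↦ u xᵀ u⁻¹` with
`uᵀ = ε u`. -/
structure FirstKindCase (T : Type u) [Ring T] (σ : T → T) (ε : ℤ) : Type (u + 1) where
  K : Type u
  [fieldK : Field K]
  [algK : Algebra K T]
  central : Algebra.IsCentral K T
  simple : IsSimpleRing T
  findim : FiniteDimensional K T
  linear : ∀ (c : K) (x : T), σ (algebraMap K T c * x) = algebraMap K T c * σ x
  anti : IsAntiAutOn T σ
  n : ℕ
  L : Type u
  [fieldL : Field L]
  [algKL : Algebra K L]
  split : L ⊗[K] T ≃ₐ[L] Matrix (Fin n) (Fin n) L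
  u : Matrix (Fin n) (Fin n) L
  hu : IsUnit u.det
  hut : uᵀ = (ε : L) • u
  hconj : ∀ x : T, split ((1 : L) ⊗ₜ[K] σ x) = u * (split ((1 : L) ⊗ₜ[K] x))ᵀ * u⁻¹

/-- A witness that `(T, σ)` is a central simple algebra over a field `L` with a `K`-linear
involution of the second kind, for an index-2 subfield `K ⊆ L` with `L/K` separable. -/
structure SecondKindCase (T : Type u) [Ring T] (σ : T → T) : Type (u + 1) where
  K : Type u
  [fieldK : Field K]
  L : Type u
  [fieldL : Field L]
  [algKL : Algebra K L]
  [algLT : Algebra L T]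
  [algKT : Algebra K T]
  [tower : IsScalarTower K L T]
  quad : Module.finrank K L = 2
  separable : Algebra.IsSeparable K L
  central : Algebra.IsCentral L T
  simple : IsSimpleRing T
  findim : FiniteDimensional L T
  anti : IsAntiAutOn T σ
  linear : ∀ (c : K) (x : T), σ (algebraMap K T c * x) = algebraMap K T c * σ x
  secondKind : ∃ l : L, σ (algebraMap L T l) ≠ algebraMap L T l

/-- A witness that `(T, σ) ≅ (E × Eᵒᵖ, swap)` for a (finite-dimensional) central simple
algebra `E` over a field `K`. -/
structure SwapCase (T : Type u) [Ring T] (σ : T → T) : Type (u + 1) where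
  K : Type u
  [fieldK : Field K]
  E : Type u
  [ringE : Ring E]
  [algKE : Algebra K E]
  central : Algebra.IsCentral K E
  simple : IsSimpleRing E
  findim : FiniteDimensional K E
  e : T ≃+* E × Eᵐᵒᵖ
  swap : ∀ x : T, e (σ x) = ((e x).2.unop, MulOpposite.op (e x).1)


/-- A factor of the decomposition: a `k`-algebra with involution. -/
structure LawFactorData (k : Type u) [Field k] : Type (u + 1) where
  carrier : Type u
  [ring : Ring carrier]
  [alg : Algebra k carrier]
  inv : InvAlg k carrier

attribute [instance] LawFactorData.ring LawFactorData.alg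

/-- A decomposition of a weak symplectic determinant law `(D, P)` on `(R, *)` over a field:
a surjection `π : R ↠ ∏ R_i` with kernel `ker(D)`, compatible with the involutions, such
that each factor is a central simple algebra with involution of one of the possible kinds,
carries a symplectic determinant law `(D_i, P_i)`, and `D = ∏ D_i ∘ π_i`,
`P = ∏ P_i ∘ π_i`. -/
structure SympDetDecomposition {k : Type u} [Field k] {R : Type u} [Ring R] [Algebra k R]
    (s : InvAlg k R) (d : ℕ) (D : PolyLaw k R) (P : PolyLaw k ↥s.plus) : Type (u + 1) where
  t : ℕ
  F : Fin t → LawFactorData k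
  π : R →ₐ[k] ((i : Fin t) → (F i).carrier)
  surj : Function.Surjective π
  ker_eq : ∀ x : R, π x = 0 ↔ x ∈ D.lawKer
  compat : ∀ (x : R) (i : Fin t), π (s.star x) i = (F i).inv.star (π x i)
  di : Fin t → ℕ
  dimsum : ∑ i, di i = d
  Dlaw : ∀ i : Fin t, PolyLaw k (F i).carrier
  Plaw : ∀ i : Fin t, PolyLaw k ↥((F i).inv.plus)
  sympdet : ∀ i, IsSympDet (F i).inv (di i) (Dlaw i) (Plaw i)
  forms : ∀ i : Fin t,
    Nonempty (FirstKindCase (F i).carrier (⇑(F i).inv.star) (-1)) ∨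
    Nonempty (FirstKindCase (F i).carrier (⇑(F i).inv.star) 1) ∨
    Nonempty (SecondKindCase (F i).carrier (⇑(F i).inv.star)) ∨
    Nonempty (SwapCase (F i).carrier (⇑(F i).inv.star))
  factorD : ∀ (B : Type u) [CommRing B] [Algebra k B] (x : B ⊗[k] R),
    D.toFun B x =
      ∏ i, (Dlaw i).toFun B
        (LinearMap.lTensor B ((LinearMap.proj i) ∘ₗ π.toLinearMap) x)
  q : ∀ i : Fin t, ↥s.plus →ₗ[k] ↥((F i).inv.plus)
  hq : ∀ (i : Fin t) (y : ↥s.plus), ((q i y : (F i).carrier)) = π (y : R) i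
  factorP : ∀ (B : Type u) [CommRing B] [Algebra k B] (y : B ⊗[k] ↥s.plus),
    P.toFun B y = ∏ i, (Plaw i).toFun B (LinearMap.lTensor B (q i) y)

end SympDet

set_option linter.unusedSectionVars false
set_option linter.unusedSimpArgs false
set_option linter.style.longLine false
namespace SDL

/-- Multiplicative functions that are diagonals of multilinear forms. -/
structure DetFun (K : Type*) (R : Type*) [Field K] [Ring R] [Algebra K R] (n : ℕ) where
  toFun : R → K
  Φ : MultilinearMap K (fun _ : Fin n => R) K
  hΦ : ∀ y, toFun y = Φ (fun _ => y)
  one_eq : toFun 1 = 1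
  mul_eq : ∀ x y, toFun (x * y) = toFun x * toFun y

section VL
variable {K : Type*} [Field K] [Infinite K] {W : Type*} [AddCommGroup W] [Module K W]

theorem vl_one (V : Submodule K W) (N : ℕ) (Z : ℕ → W)
    (h : ∀ t : K, ∑ j ∈ Finset.range N, t ^ j • Z j ∈ V) (j : ℕ) (hj : j < N) : Z j ∈ V := by
  by_contra hn
  obtain ⟨f, hf, hV⟩ := Submodule.exists_le_ker_of_notMem hn
  have hp : (∑ j ∈ Finset.range N, Polynomial.C (f (Z j)) * Polynomial.X ^ j : Polynomial K) = 0 := by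
    apply Polynomial.funext
    intro t
    have := hV (h t)
    rw [LinearMap.mem_ker, map_sum] at this
    simp only [Polynomial.eval_finsetSum, Polynomial.eval_mul, Polynomial.eval_C,
      Polynomial.eval_pow, Polynomial.eval_X, Polynomial.eval_zero]
    rw [← this]
    refine Finset.sum_congr rfl fun j _ => ?_
    rw [map_smul, smul_eq_mul, mul_comm]
  have := congrArg (fun p => Polynomial.coeff p j) hp
  simp only [Polynomial.finsetSum_coeff, Polynomial.coeff_C_mul, Polynomial.coeff_X_pow,
    Polynomial.coeff_zero] at this
  simp only [mul_ite, mul_one, mul_zero, Finset.sum_ite_eq, Finset.mem_range, hj, if_true] at this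
  exact hf this

theorem vl_mv {m : ℕ} (V : Submodule K W) (F : Finset (Fin m →₀ ℕ)) (Z : (Fin m →₀ ℕ) → W)
    (h : ∀ t : Fin m → K, ∑ α ∈ F, (∏ i, t i ^ α i) • Z α ∈ V) (α) (hα : α ∈ F) : Z α ∈ V := by
  classical
  by_contra hn
  obtain ⟨f, hf, hV⟩ := Submodule.exists_le_ker_of_notMem hn
  have hp : (∑ α ∈ F, MvPolynomial.monomial α (f (Z α)) : MvPolynomial (Fin m) K) = 0 := by
    apply MvPolynomial.funext
    intro t
    have := hV (h t)
    rw [LinearMap.mem_ker, map_sum] at this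
    rw [map_sum, map_zero, ← this]
    refine Finset.sum_congr rfl fun j _ => ?_
    rw [map_smul, smul_eq_mul, mul_comm, MvPolynomial.eval_monomial, Finsupp.prod_fintype]
    intro i; simp
  have := congrArg (fun p => MvPolynomial.coeff α p) hp
  simp only [MvPolynomial.coeff_sum, MvPolynomial.coeff_monomial, Finset.sum_ite_eq', hα, if_true,
    MvPolynomial.coeff_zero] at this
  exact hf this

theorem vl_eq (N : ℕ) (a b : ℕ → K)
    (h : ∀ t : K, ∑ j ∈ Finset.range N, t ^ j * a j = ∑ j ∈ Finset.range N, t ^ j * b j)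
    (j : ℕ) (hj : j < N) : a j = b j := by
  have := vl_one (K := K) (W := K) ⊥ N (fun j => a j - b j) (fun t => by
    rw [Submodule.mem_bot, ← sub_eq_zero.2 (h t), ← Finset.sum_sub_distrib]
    refine Finset.sum_congr rfl fun j _ => ?_
    simp only [smul_eq_mul]; ring) j hj
  exact sub_eq_zero.1 ((Submodule.mem_bot K).1 this)
end VL

section CHabs
variable {K : Type*} [Field K] {W : Type*} [Ring W] [Algebra K W]
  {W0 : Type*} [CommRing W0] [Algebra K W0] (θ : W0 →ₐ[K] W) (V : Submodule K W) (φ : W →ₗ[K] K)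

theorem ch_abs {m : ℕ} (ε : Fin m → W0) (h1 : ∀ j, ∀ T ∈ V, θ (ε j) * T ∈ V)
    (h2 : ∀ j, ∀ T ∈ V, φ (θ (ε j) * T) = 0)
    (F : Finset (Fin m →₀ ℕ)) (Z : (Fin m →₀ ℕ) → W) (hZ : ∀ α ∈ F, Z α ∈ V) :
    φ (∑ α ∈ F, θ (∏ i, ε i ^ α i) * Z α) = φ (∑ α ∈ F, θ (∏ i, (0 : W0) ^ α i) * Z α) := by
  classical
  rw [map_sum, map_sum]
  refine Finset.sum_congr rfl fun α hα => ?_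
  by_cases h0 : α = 0
  · subst h0; simp
  obtain ⟨j, hj⟩ : ∃ j, α j ≠ 0 := by
    by_contra hc; push Not at hc; exact h0 (Finsupp.ext hc)
  have hz : (∏ i, (0 : W0) ^ α i) = 0 :=
    Finset.prod_eq_zero (Finset.mem_univ j) (by simp [hj])
  rw [hz, map_zero, zero_mul, map_zero]
  let A : Submonoid W0 :=
    { carrier := {w | ∀ T ∈ V, θ w * T ∈ V}
      one_mem' := fun T hT => by simpa using hT
      mul_mem' := fun {a b} ha hb T hT => by
        rw [map_mul, mul_assoc]; exact ha _ (hb _ hT) }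
  have hA : ∀ i (e : ℕ), ε i ^ e ∈ A := fun i e => A.pow_mem (h1 i) e
  obtain ⟨e, he⟩ := Nat.exists_eq_succ_of_ne_zero hj
  have : (∏ i, ε i ^ α i) = ε j * (ε j ^ e * ∏ i ∈ Finset.univ.erase j, ε i ^ α i) := by
    rw [← Finset.mul_prod_erase Finset.univ _ (Finset.mem_univ j), he, pow_succ]; ring
  rw [this, map_mul θ, mul_assoc]
  apply h2
  have hm : (ε j ^ e * ∏ i ∈ Finset.univ.erase j, ε i ^ α i) ∈ A :=
    A.mul_mem (hA _ _) (A.prod_mem fun i _ => hA _ _)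
  exact hm _ (hZ α hα)
end CHabs

section DetFunBasic
variable {K : Type*} [Field K] {R : Type*} [Ring R] [Algebra K R] {n : ℕ} (D : DetFun K R n)

theorem DetFun.exists_poly (a b : R) : ∃ p : Polynomial K, p.natDegree ≤ n ∧ p.coeff n = D.toFun b ∧
    ∀ t, p.eval t = D.toFun (a + t • b) := by
  classical
  refine ⟨∑ s : Finset (Fin n), Polynomial.C (D.Φ (s.piecewise (fun _ => b) (fun _ => a))) *
    Polynomial.X ^ s.card, ?_, ?_, ?_⟩
  · refine Polynomial.natDegree_sum_le_of_forall_le _ _ fun s _ => ?_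
    exact (Polynomial.natDegree_C_mul_X_pow_le _ _).trans (by simpa using s.card_le_univ)
  · simp only [Polynomial.finsetSum_coeff, Polynomial.coeff_C_mul, Polynomial.coeff_X_pow]
    rw [Finset.sum_eq_single Finset.univ]
    · simp [D.hΦ]
    · intro s _ hs
      rw [if_neg, mul_zero]
      intro h
      exact hs ((Finset.card_eq_iff_eq_univ s).1 (by simpa using h.symm))
    · simp
  · intro t
    rw [D.hΦ]
    have : (fun _ : Fin n => a + t • b) = (fun _ => t • b) + (fun _ => a) := by
      ext; simp [add_comm]
    rw [this, D.Φ.map_add_univ, Polynomial.eval_finsetSum]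
    refine Finset.sum_congr rfl fun s _ => ?_
    have e : s.piecewise (fun _ : Fin n => t • b) (fun _ => a) =
      s.piecewise (fun i => t • (s.piecewise (fun _ : Fin n => b) (fun _ => a)) i)
        (s.piecewise (fun _ : Fin n => b) (fun _ => a)) := by
      ext i; by_cases hi : i ∈ s <;> simp [hi]
    rw [e, D.Φ.map_piecewise_smul]
    rw [Finset.prod_const, Polynomial.eval_mul, Polynomial.eval_C, Polynomial.eval_pow,
      Polynomial.eval_X, smul_eq_mul, mul_comm]

theorem DetFun.smul (c : K) (y : R) : D.toFun (c • y) = c ^ n * D.toFun y := by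
  rw [D.hΦ, D.hΦ]
  have := D.Φ.map_smul_univ (fun _ => c) (fun _ => y)
  simpa using this

end DetFunBasic

section CH
variable {K : Type*} [Field K] [Infinite K] {R : Type*} [Ring R] [Algebra K R] {n : ℕ}
open PiTensorProduct

variable (K n) in
/-- tensor power of an element -/
noncomputable def pw (y : R) : ⨂[K] _ : Fin n, R := tprod K (fun _ => y)

variable (K n) in
/-- the map on tensor powers induced by evaluation at `x` -/
noncomputable def thetaHom (x : R) :
    (⨂[K] _ : Fin n, Polynomial K) →ₐ[K] (⨂[K] _ : Fin n, R) :=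
  liftAlgHom ((PiTensorProduct.tprod K).compLinearMap (fun _ => (Polynomial.aeval x).toLinearMap))
    (by simp [one_def]; rfl)
    (by intro p q; simp only [MultilinearMap.compLinearMap_apply, tprod_mul_tprod]
        congr 1; ext i; simp)

theorem thetaHom_tprod (x : R) (p : Fin n → Polynomial K) :
    thetaHom K n x (tprod K p) = tprod K (fun i => Polynomial.aeval x (p i)) := by
  simp [thetaHom]

theorem prod_single (I : Finset (Fin n)) (g : Polynomial K) :
    (∏ i ∈ I, singleAlgHom (R := K) (A := fun _ : Fin n => Polynomial K) i g) =
      tprod K (I.piecewise (fun _ => g) (fun _ => 1)) := by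
  classical
  simp only [singleAlgHom_apply]
  rw [← tprod_prod]
  congr 1
  ext1 i
  rw [Finset.prod_apply]
  by_cases hi : i ∈ I
  · rw [Finset.prod_eq_single i]
    · simp [hi]
    · intro j _ hj; simp [Pi.mulSingle_apply, hj.symm]
    · simp [hi]
  · rw [Finset.prod_eq_one]
    · simp [hi]
    · intro j hj
      have : i ≠ j := by rintro rfl; exact hi hj
      simp [Pi.mulSingle_apply, this]

theorem sum_theta (x y s : R) (g : Polynomial K) :
    ∑ I : Finset (Fin n), thetaHom K n x (∏ i ∈ I,
        singleAlgHom (R := K) (A := fun _ : Fin n => Polynomial K) i g) *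
        tprod K (I.piecewise (fun _ => s) (fun _ => y)) =
      pw K n (y + Polynomial.aeval x g * s) := by
  classical
  have : (fun _ : Fin n => y + Polynomial.aeval x g * s) =
    (fun _ => Polynomial.aeval x g * s) + (fun _ => y) := by
      ext; simp [add_comm]
  rw [pw, this, MultilinearMap.map_add_univ]
  refine Finset.sum_congr rfl fun I _ => ?_
  rw [prod_single, thetaHom_tprod, tprod_mul_tprod]
  congr 1
  ext i
  by_cases hi : i ∈ I <;> simp [hi]

theorem pw_mul (a b : R) : pw K n a * pw K n b = pw K n (a * b) := by
  simp [pw]; rfl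

theorem DetFun.cayley (D : DetFun K R n) (x y s : R) (f : Polynomial K) (hf : f.natDegree ≤ n)
    (hfe : ∀ t, f.eval t = D.toFun (t • 1 - x)) :
    D.toFun (y + Polynomial.aeval x f * s) = D.toFun y := by
  classical
  let W := ⨂[K] _ : Fin n, R
  let W0 := ⨂[K] _ : Fin n, Polynomial K
  let φ : W →ₗ[K] K := lift D.Φ
  have hφ : ∀ y, φ (pw K n y) = D.toFun y := fun y => by
    rw [D.hΦ]; exact lift.tprod _
  let V : Submodule K W := Submodule.span K (Set.range (pw K n))
  have hV : ∀ y, pw K n y ∈ V := fun y => Submodule.subset_span ⟨y, rfl⟩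
  let θ : W0 →ₐ[K] W := thetaHom K n x
  let σ : Fin n → Polynomial K →ₐ[K] W0 :=
    fun i => singleAlgHom (R := K) (A := fun _ : Fin n => Polynomial K) i
  let G : Polynomial W0 := ∏ i : Fin n, (Polynomial.X - Polynomial.C (σ i Polynomial.X))
  have hGd : G.natDegree ≤ n := by
    refine (Polynomial.natDegree_prod_le _ _).trans ?_
    refine (Finset.sum_le_card_nsmul _ _ 1 fun i _ => Polynomial.natDegree_X_sub_C_le _).trans ?_
    simp
  have hGe : ∀ t : K, θ (G.eval (algebraMap K W0 t)) = pw K n (t • 1 - x) := by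
    intro t
    have : G.eval (algebraMap K W0 t) = ∏ i : Fin n, σ i (Polynomial.C t - Polynomial.X) := by
      simp only [G, Polynomial.eval_prod, Polynomial.eval_sub, Polynomial.eval_X, Polynomial.eval_C,
        map_sub]
      refine Finset.prod_congr rfl fun i _ => ?_
      congr 1
      exact ((σ i).commutes t).symm
    rw [this]
    change thetaHom K n x (∏ i, singleAlgHom (R := K) (A := fun _ : Fin n => Polynomial K) i _) = _
    rw [prod_single, thetaHom_tprod]
    simp [pw, Algebra.algebraMap_eq_smul_one]
  have hGs : ∀ t : K, pw K n (t • 1 - x) =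
      ∑ j ∈ Finset.range (n + 1), t ^ j • θ (G.coeff j) := by
    intro t
    rw [← hGe, Polynomial.eval_eq_sum_range' (Nat.lt_succ_of_le hGd), map_sum]
    refine Finset.sum_congr rfl fun j _ => ?_
    rw [← map_pow, mul_comm, ← Algebra.smul_def, map_smul]
  have hGV : ∀ j < n + 1, ∀ T ∈ V, θ (G.coeff j) * T ∈ V := by
    intro j hj T hT
    refine Submodule.span_induction (p := fun T _ => θ (G.coeff j) * T ∈ V) ?_ ?_ ?_ ?_ hT
    · rintro _ ⟨z, rfl⟩
      refine vl_one V (n + 1) (fun j => θ (G.coeff j) * pw K n z) ?_ j hj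
      intro t
      have : ∑ j ∈ Finset.range (n + 1), t ^ j • (θ (G.coeff j) * pw K n z) =
        pw K n ((t • 1 - x) * z) := by
        rw [← pw_mul, hGs, Finset.sum_mul]
        refine Finset.sum_congr rfl fun j _ => ?_
        rw [smul_mul_assoc]
      rw [this]; exact hV _
    · simp
    · intro a b _ _ ha hb; rw [mul_add]; exact V.add_mem ha hb
    · intro c a _ ha; rw [mul_smul_comm]; exact V.smul_mem _ ha
  have hGφ : ∀ j < n + 1, ∀ T ∈ V, φ (θ (G.coeff j) * T) = f.coeff j * φ T := by
    intro j hj T hT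
    refine Submodule.span_induction (p := fun T _ => φ (θ (G.coeff j) * T) = f.coeff j * φ T)
      ?_ ?_ ?_ ?_ hT
    · rintro _ ⟨z, rfl⟩
      refine vl_eq (n + 1)
        (fun j => φ (θ (G.coeff j) * pw K n z)) (fun j => f.coeff j * φ (pw K n z)) ?_ j hj
      intro t
      have : ∑ j ∈ Finset.range (n + 1), t ^ j • (θ (G.coeff j) * pw K n z) =
        pw K n ((t • 1 - x) * z) := by
        rw [← pw_mul, hGs, Finset.sum_mul]
        refine Finset.sum_congr rfl fun j _ => ?_
        rw [smul_mul_assoc]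
      have h3 := congrArg φ this
      rw [map_sum, hφ, D.mul_eq, ← hfe, ← hφ z,
        Polynomial.eval_eq_sum_range' (Nat.lt_succ_of_le hf), Finset.sum_mul] at h3
      simp only [map_smul, smul_eq_mul] at h3
      rw [h3]
      refine Finset.sum_congr rfl fun j _ => ?_
      ring
    · simp
    · intro a b _ _ ha hb; rw [mul_add, map_add, ha, hb, map_add, mul_add]
    · intro c a _ ha; rw [mul_smul_comm, map_smul, ha, map_smul]; simp only [smul_eq_mul]; ring
  let ε : Fin (n + 1) → W0 := fun j => algebraMap K W0 (f.coeff j) - G.coeff j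
  have hε : ∀ j T, θ (ε j) * T = f.coeff j • T - θ (G.coeff j) * T := by
    intro j T
    simp only [ε, map_sub, AlgHom.commutes, sub_mul, Algebra.smul_def]
  let Q : Finset (Fin n) → MvPolynomial (Fin (n + 1)) W0 := fun I =>
    ∏ i ∈ I, ∑ j : Fin (n + 1), MvPolynomial.C (σ i Polynomial.X ^ (j : ℕ)) * MvPolynomial.X j
  let mI : Finset (Fin n) → W := fun I => tprod K (I.piecewise (fun _ => s) (fun _ => y))
  let F : Finset (Fin (n + 1) →₀ ℕ) := Finset.univ.biUnion fun I => (Q I).support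
  let Z : (Fin (n + 1) →₀ ℕ) → W := fun α => ∑ I, θ ((Q I).coeff α) * mI I
  have core : ∀ (e : Fin (n + 1) → W0) (g : Polynomial K)
      (_ : ∀ i, ∑ j : Fin (n + 1), σ i Polynomial.X ^ (j : ℕ) * e j = σ i g),
      ∑ α ∈ F, θ (∏ i, e i ^ α i) * Z α = pw K n (y + Polynomial.aeval x g * s) := by
    intro e g h
    rw [← sum_theta]
    have e1 : ∑ α ∈ F, θ (∏ i, e i ^ α i) * Z α =
        ∑ α ∈ F, ∑ I, θ (∏ i, e i ^ α i) * (θ ((Q I).coeff α) * mI I) :=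
      Finset.sum_congr rfl fun α _ => Finset.mul_sum _ _ _
    rw [e1, Finset.sum_comm]
    refine Finset.sum_congr rfl fun I _ => ?_
    simp only [← mul_assoc]
    rw [← Finset.sum_mul]
    congr 1
    have : ∏ i ∈ I, σ i g = (Q I).eval e := by
      simp only [Q, map_prod, map_sum, map_mul, MvPolynomial.eval_C, MvPolynomial.eval_X]
      exact Finset.prod_congr rfl fun i _ => (h i).symm
    change _ = θ (∏ i ∈ I, σ i g)
    rw [this, MvPolynomial.eval_eq', map_sum]
    symm
    have hsub : (Q I).support ⊆ F := Finset.subset_biUnion_of_mem (fun I => (Q I).support)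
      (Finset.mem_univ I)
    rw [Finset.sum_subset hsub]
    · refine Finset.sum_congr rfl fun α _ => ?_
      rw [← map_mul, mul_comm]
    · intro α _ hα
      rw [MvPolynomial.notMem_support_iff.1 hα, zero_mul, map_zero]
  have hZ : ∀ α ∈ F, Z α ∈ V := by
    refine vl_mv V F Z ?_
    intro t
    have := core (fun j => algebraMap K W0 (t j))
      (∑ j : Fin (n + 1), Polynomial.X ^ (j : ℕ) * Polynomial.C (t j)) (by
        intro i
        rw [map_sum]
        refine Finset.sum_congr rfl fun j _ => ?_
        rw [map_mul, map_pow]; congr 1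
        exact ((σ i).commutes _).symm)
    have e : ∑ α ∈ F, (∏ i, t i ^ α i) • Z α =
        ∑ α ∈ F, θ (∏ i, algebraMap K W0 (t i) ^ α i) * Z α := by
      refine Finset.sum_congr rfl fun α _ => ?_
      simp only [← map_pow, ← map_prod]
      rw [AlgHom.commutes, ← Algebra.smul_def]
    rw [e, this]
    exact hV _
  have main := ch_abs θ V φ ε
    (fun j T hT => by rw [hε]; exact V.sub_mem (V.smul_mem _ hT) (hGV _ j.2 _ hT))
    (fun j T hT => by rw [hε, map_sub, map_smul, hGφ _ j.2 _ hT, smul_eq_mul, sub_self]) F Z hZ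
  rw [core ε f, core (fun _ => 0) 0] at main
  · simpa [hφ] using main
  · intro i; simp
  · intro i
    have hr : G.eval (σ i Polynomial.X) = 0 := by
      simp only [G, Polynomial.eval_prod]
      exact Finset.prod_eq_zero (Finset.mem_univ i) (by simp)
    rw [Polynomial.eval_eq_sum_range' (Nat.lt_succ_of_le hGd)] at hr
    have hs : σ i f = ∑ j ∈ Finset.range (n + 1),
        algebraMap K W0 (f.coeff j) * σ i Polynomial.X ^ j := by
      conv_lhs => rw [f.as_sum_range_C_mul_X_pow' (Nat.lt_succ_of_le hf)]
      rw [map_sum]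
      refine Finset.sum_congr rfl fun j _ => ?_
      rw [map_mul, map_pow]; congr 1
      exact (σ i).commutes _
    rw [← sub_zero (σ i f), ← hr, hs, ← Finset.sum_sub_distrib, Finset.sum_range]
    refine Finset.sum_congr rfl fun j _ => ?_
    simp only [ε]; ring

end CH

end SDL

set_option linter.unusedSectionVars false
set_option linter.unusedSimpArgs false
namespace SDL

section Misc
variable {K : Type*} [Field K] [Infinite K]

theorem poly_eq_of_generic (p q g : Polynomial K) (hg : g ≠ 0)
    (h : ∀ t, g.eval t ≠ 0 → p.eval t = q.eval t) : p = q := by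
  have : g * (p - q) = 0 := by
    apply Polynomial.funext
    intro t
    by_cases ht : g.eval t = 0
    · simp [ht]
    · simp [h t ht]
  exact sub_eq_zero.1 ((mul_eq_zero.1 this).resolve_left hg)

end Misc

section DF
variable {K : Type*} [Field K] [Infinite K] {R : Type*} [Ring R] [Algebra K R] {n : ℕ}

theorem DetFun.exists_char (D : DetFun K R n) (x : R) : ∃ f : Polynomial K, f.Monic ∧
    f.natDegree = n ∧ ∀ t, f.eval t = D.toFun (t • 1 - x) := by
  obtain ⟨p, h1, h2, h3⟩ := D.exists_poly (-x) 1
  rw [D.one_eq] at h2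
  have hd : p.natDegree = n := le_antisymm h1 (Polynomial.le_natDegree_of_ne_zero (by simp [h2]))
  refine ⟨p, ?_, hd, fun t => by rw [h3]; congr 1; abel⟩
  rw [Polynomial.Monic, Polynomial.leadingCoeff, hd, h2]

/-- the opposite -/
noncomputable def DetFun.op (D : DetFun K R n) : DetFun K Rᵐᵒᵖ n where
  toFun y := D.toFun y.unop
  Φ := D.Φ.compLinearMap (fun _ => (MulOpposite.opLinearEquiv K).symm.toLinearMap)
  hΦ y := by rw [D.hΦ]; rfl
  one_eq := D.one_eq
  mul_eq x y := by simp [D.mul_eq, mul_comm]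

theorem aeval_op (x : R) (f : Polynomial K) :
    Polynomial.aeval (MulOpposite.op x) f = MulOpposite.op (Polynomial.aeval x f) := by
  induction f using Polynomial.induction_on' with
  | add p q hp hq => simp [hp, hq]
  | monomial m c => simp [Polynomial.aeval_monomial, Algebra.commutes]

theorem DetFun.cayley_right (D : DetFun K R n) (x y s : R) (f : Polynomial K) (hf : f.natDegree ≤ n)
    (hfe : ∀ t, f.eval t = D.toFun (t • 1 - x)) :
    D.toFun (y + s * Polynomial.aeval x f) = D.toFun y := by
  have := D.op.cayley (MulOpposite.op x) (MulOpposite.op y) (MulOpposite.op s) f hf hfe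
  rw [aeval_op] at this
  exact this

/-- kernel predicate -/
def DetFun.InKer (D : DetFun K R n) (m : R) : Prop := ∀ y, D.toFun (y + m) = D.toFun y

theorem DetFun.InKer.add {D : DetFun K R n} {a b : R} (ha : D.InKer a) (hb : D.InKer b) :
    D.InKer (a + b) := fun y => by rw [← add_assoc, hb, ha]

theorem DetFun.InKer.smul {D : DetFun K R n} {a : R} (ha : D.InKer a) (c : K) :
    D.InKer (c • a) := fun y => by
  by_cases hc : c = 0
  · simp [hc]
  have : y + c • a = c • (c⁻¹ • y + a) := by rw [smul_add, smul_inv_smul₀ hc]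
  rw [this, D.smul, ha, ← D.smul, smul_inv_smul₀ hc]

/-- partial inverse -/
theorem DetFun.exists_inv (D : DetFun K R n) (r : R) (hr : D.toFun r ≠ 0) :
    ∃ h : R, ∃ f : Polynomial K, ∃ c : K, f.natDegree ≤ n ∧ (∀ t, f.eval t = D.toFun (t • 1 - r)) ∧
      r * h = 1 - c • Polynomial.aeval r f ∧ h * r = 1 - c • Polynomial.aeval r f := by
  obtain ⟨f, -, hd, hf⟩ := D.exists_char r
  have h0 : f.coeff 0 ≠ 0 := by
    rw [Polynomial.coeff_zero_eq_eval_zero, hf, zero_smul, zero_sub, ← neg_one_smul K, D.smul]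
    exact mul_ne_zero (pow_ne_zero _ (by simp)) hr
  have e := congrArg (Polynomial.aeval r) f.divX_mul_X_add
  simp only [map_add, map_mul, Polynomial.aeval_X, Polynomial.aeval_C] at e
  have hc : Polynomial.aeval r f.divX * r = r * Polynomial.aeval r f.divX := by
    have h1 := congrArg (Polynomial.aeval r) (mul_comm f.divX Polynomial.X)
    simpa using h1
  have key : Polynomial.aeval r f.divX * r = Polynomial.aeval r f - (f.coeff 0) • 1 := by
    rw [← e, Algebra.algebraMap_eq_smul_one]; abel
  refine ⟨-(f.coeff 0)⁻¹ • Polynomial.aeval r f.divX, f, (f.coeff 0)⁻¹, hd.le, hf, ?_, ?_⟩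
  · rw [mul_smul_comm, ← hc, key, smul_sub, smul_smul]
    simp [h0]; abel
  · rw [smul_mul_assoc, key, smul_sub, smul_smul]
    simp [h0]; abel

theorem DetFun.InKer.mul_left_aux {D : DetFun K R n} {m : R} (hm : D.InKer m) (r : R)
    (hr : D.toFun r ≠ 0) : D.InKer (r * m) := by
  obtain ⟨h, f, c, hd, hf, h1, h2⟩ := D.exists_inv r hr
  intro y
  have e1 : ∀ z, D.toFun (z + Polynomial.aeval r f * (-(c • y))) = D.toFun z :=
    fun z => D.cayley r z _ f hd hf
  have e2 : r * (h * y) = y + Polynomial.aeval r f * (-(c • y)) := by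
    rw [← mul_assoc, h1, sub_mul, one_mul]; simp [sub_eq_add_neg]
  calc D.toFun (y + r * m) = D.toFun (y + r * m + Polynomial.aeval r f * (-(c • y))) := (e1 _).symm
    _ = D.toFun (r * (h * y + m)) := by rw [mul_add, e2]; congr 1; abel
    _ = D.toFun (r * (h * y)) := by rw [D.mul_eq, hm, ← D.mul_eq]
    _ = D.toFun y := by rw [e2, e1]

theorem DetFun.exists_ne (D : DetFun K R n) (r : R) : ∃ u : K, D.toFun (u • 1 + r) ≠ 0 := by
  obtain ⟨f, hm, -, hf⟩ := D.exists_char (-r)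
  by_contra hc
  push Not at hc
  apply hm.ne_zero
  apply Polynomial.funext
  intro t; rw [hf, sub_neg_eq_add, hc]; simp

theorem DetFun.InKer.mul_left {D : DetFun K R n} {m : R} (hm : D.InKer m) (r : R) :
    D.InKer (r * m) := by
  obtain ⟨u, hu⟩ := D.exists_ne r
  have := (hm.mul_left_aux _ hu).add (hm.smul (-u))
  have e : (u • 1 + r) * m + -u • m = r * m := by rw [add_mul]; simp
  rwa [e] at this

theorem DetFun.InKer.mul_right {D : DetFun K R n} {m : R} (hm : D.InKer m) (r : R) :
    D.InKer (m * r) := by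
  have h : D.op.InKer (MulOpposite.op m) := fun y => hm y.unop
  have := h.mul_left (MulOpposite.op r)
  exact fun y => this (MulOpposite.op y)

/-- the kernel as a left ideal -/
def DetFun.ker (D : DetFun K R n) : Ideal R where
  carrier := {m | D.InKer m}
  add_mem' ha hb := ha.add hb
  zero_mem' := fun y => by simp
  smul_mem' r _ hm := hm.mul_left r

instance (D : DetFun K R n) : D.ker.IsTwoSided := ⟨fun r hm => DetFun.InKer.mul_right hm r⟩

theorem DetFun.mem_ker (D : DetFun K R n) (m : R) : m ∈ D.ker ↔ ∀ y, D.toFun (y + m) = D.toFun y :=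
  Iff.rfl

/-- faithfulness -/
def DetFun.Faithful (D : DetFun K R n) : Prop := ∀ m, (∀ y, D.toFun (y + m) = D.toFun y) → m = 0

theorem DetFun.exists_quot (D : DetFun K R n) : ∃ D' : DetFun K (R ⧸ D.ker) n,
    (∀ x, D'.toFun (Ideal.Quotient.mk D.ker x) = D.toFun x) ∧ D'.Faithful := by
  let π : R →ₗ[K] (R ⧸ D.ker) := (Ideal.Quotient.mkₐ K D.ker).toLinearMap
  have hπ : ∀ x, π x = Ideal.Quotient.mk D.ker x := fun x => rfl
  have hs : Function.Surjective π := Ideal.Quotient.mk_surjective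
  obtain ⟨τ, hτ⟩ := LinearMap.exists_rightInverse_of_surjective π (LinearMap.range_eq_top.2 hs)
  have key : ∀ a x, π a = x → D.toFun (τ x) = D.toFun a := by
    intro a x h
    have h1 : π (τ x) = π a := by rw [h]; exact LinearMap.congr_fun hτ x
    have : τ x - a ∈ D.ker := by
      rw [← Ideal.Quotient.eq]; exact h1
    have := (D.mem_ker _).1 this a
    rwa [add_sub_cancel] at this
  refine ⟨⟨fun x => D.toFun (τ x), D.Φ.compLinearMap (fun _ => τ), fun y => by rw [D.hΦ]; rfl, ?_, ?_⟩,
    ?_, ?_⟩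
  · rw [key 1 1 rfl, D.one_eq]
  · intro x y
    obtain ⟨a, rfl⟩ := hs x
    obtain ⟨b, rfl⟩ := hs y
    rw [key a _ rfl, key b _ rfl, key (a * b) _ (by simp [hπ]), D.mul_eq]
  · intro x; exact key x _ rfl
  · intro m hm
    obtain ⟨a, rfl⟩ := hs m
    rw [hπ, Ideal.Quotient.eq_zero_iff_mem, D.mem_ker]
    intro y
    have := hm (π y)
    dsimp only at this
    rwa [key (y + a) _ (by simp), key y _ rfl] at this

theorem DetFun.one_add_comm (D : DetFun K R n) (a b : R) :
    D.toFun (1 + a * b) = D.toFun (1 + b * a) := by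
  obtain ⟨p, -, -, hp⟩ := D.exists_poly (1 + a * b) b
  obtain ⟨q, -, -, hq⟩ := D.exists_poly (1 + b * a) b
  obtain ⟨g, hm, -, hg⟩ := D.exists_char (-a)
  have := poly_eq_of_generic p q g hm.ne_zero (fun t ht => by
    rw [hg, sub_neg_eq_add] at ht
    rw [hp, hq]
    have e : (1 + a * b + t • b) * (t • 1 + a) = (t • 1 + a) * (1 + b * a + t • b) := by
      simp only [mul_add, add_mul, smul_mul_assoc, mul_smul_comm, one_mul, mul_one, mul_assoc,
        smul_add]
      abel
    have := congrArg D.toFun e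
    rw [D.mul_eq, D.mul_eq, mul_comm] at this
    exact mul_left_cancel₀ ht this)
  have e := congrArg (Polynomial.eval 0) this
  rw [hp, hq] at e
  simpa using e

theorem DetFun.inKer_of_one (D : DetFun K R n) (a : R) (h : ∀ s, D.toFun (1 + s * a) = 1) :
    D.InKer a := by
  have h1 : ∀ y, D.toFun y ≠ 0 → D.toFun (y + a) = D.toFun y := by
    intro y hy
    obtain ⟨w, f, c, hd, hf, e1, e2⟩ := D.exists_inv y hy
    have : y + a = y * (1 + w * a) + Polynomial.aeval y f * (c • a) := by
      rw [mul_add, ← mul_assoc, e1, sub_mul]; simp; abel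
    rw [this, D.cayley y _ _ f hd hf, D.mul_eq, h, mul_one]
  intro y
  obtain ⟨p, -, -, hp⟩ := D.exists_poly (y + a) 1
  obtain ⟨g, hm, -, hg⟩ := D.exists_char (-y)
  have := poly_eq_of_generic p g g hm.ne_zero (fun t ht => by
    rw [hg] at ht ⊢
    have := h1 _ ht
    rw [hp, ← this]; congr 1; abel)
  have e := congrArg (Polynomial.eval 0) this
  rw [hp, hg] at e
  simpa using e

end DF

section Faith
variable {K : Type*} [Field K] [Infinite K] {R : Type*} [Ring R] [Algebra K R] {n : ℕ}

theorem DetFun.Faithful.aeval {D : DetFun K R n} (hF : D.Faithful) (x : R) (f : Polynomial K)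
    (hf : f.natDegree ≤ n)
    (hfe : ∀ t, f.eval t = D.toFun (t • 1 - x)) : Polynomial.aeval x f = 0 := by
  apply hF
  intro y
  simpa using D.cayley x y 1 f hf hfe

theorem DetFun.Faithful.isIntegral {D : DetFun K R n} (hF : D.Faithful) (x : R) :
    IsIntegral K x := by
  obtain ⟨f, hm, hd, hf⟩ := D.exists_char x
  exact ⟨f, hm, hF.aeval x f hd.le hf⟩

variable [IsAlgClosed K]

theorem DetFun.nilp (D : DetFun K R n) (z : R) (hz : IsNilpotent z) : D.toFun (1 + z) = 1 := by
  obtain ⟨p, -, -, hp⟩ := D.exists_poly 1 z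
  have hne : ∀ t, p.eval t ≠ 0 := by
    intro t
    rw [hp]
    have : IsUnit (1 + t • z) := (hz.smul t).isUnit_one_add
    obtain ⟨⟨a, b, h1, h2⟩, h3⟩ := this
    dsimp only at h3
    rw [← h3]
    intro h0
    have := congrArg D.toFun h1
    rw [D.mul_eq, h0, zero_mul, D.one_eq] at this
    exact zero_ne_one this
  have hdeg : p.degree = 0 := by
    by_contra hd
    obtain ⟨t, ht⟩ := IsAlgClosed.exists_root p hd
    exact hne t ht
  rw [Polynomial.eq_C_of_degree_eq_zero hdeg] at hp
  have h0 := hp 0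
  have h1 := hp 1
  simp only [Polynomial.eval_C, zero_smul, add_zero, one_smul, D.one_eq] at h0 h1
  rw [← h1, h0]

theorem DetFun.exists_rk (D : DetFun K R n) (e : R) (he : IsIdempotentElem e) :
    ∃ r : ℕ, ∀ t : K, D.toFun (1 - e + t • e) = t ^ r := by
  obtain ⟨p, -, -, hp⟩ := D.exists_poly (1 - e) e
  have h1 : p.eval 1 = 1 := by rw [hp]; simp [D.one_eq]
  have hmul : ∀ t s, p.eval (t * s) = p.eval t * p.eval s := by
    intro t s
    rw [hp, hp, hp, ← D.mul_eq]
    congr 1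
    simp only [mul_add, add_mul, mul_sub, sub_mul, smul_mul_assoc, mul_smul_comm, he.eq, smul_smul,
      one_mul, mul_one]
    simp [mul_smul, smul_comm s t]
  have hp0 : p ≠ 0 := by rintro rfl; simp at h1
  obtain ⟨q, hq, hq0⟩ := Polynomial.exists_eq_pow_rootMultiplicity_mul_and_not_dvd p hp0 0
  have hqe : q.degree = 0 := by
    by_contra hd
    obtain ⟨t, ht⟩ := IsAlgClosed.exists_root q hd
    by_cases h0 : t = 0
    · subst h0; exact hq0 (Polynomial.dvd_iff_isRoot.2 ht)
    have : p.eval t = 0 := by rw [hq, Polynomial.eval_mul, ht.eq_zero, mul_zero]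
    have h2 := hmul t t⁻¹
    rw [mul_inv_cancel₀ h0, h1, this, zero_mul] at h2
    exact one_ne_zero h2
  refine ⟨p.rootMultiplicity 0, fun t => ?_⟩
  rw [Polynomial.eq_C_of_degree_eq_zero hqe] at hq
  have h3 : q.coeff 0 = 1 := by
    have := congrArg (Polynomial.eval 1) hq
    rw [h1] at this
    simpa using this.symm
  rw [h3, Polynomial.C_1, mul_one, Polynomial.C_0, sub_zero] at hq
  rw [← hp]
  have := congrArg (Polynomial.eval t) hq
  simpa using this

open Classical in
/-- rank of an idempotent -/
noncomputable def DetFun.rk (D : DetFun K R n) (e : R) : ℕ :=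
  if he : IsIdempotentElem e then (D.exists_rk e he).choose else 0

theorem DetFun.rk_spec (D : DetFun K R n) {e : R} (he : IsIdempotentElem e) (t : K) :
    D.toFun (1 - e + t • e) = t ^ D.rk e := by
  rw [DetFun.rk, dif_pos he]
  exact (D.exists_rk e he).choose_spec t

theorem pow_fun_inj {a b : ℕ} (h : ∀ t : K, t ^ a = t ^ b) : a = b := by
  have : (Polynomial.X ^ a : Polynomial K) = Polynomial.X ^ b := by
    apply Polynomial.funext; intro t; simpa using h t
  have := congrArg Polynomial.natDegree this
  simpa using this

theorem DetFun.rk_eq (D : DetFun K R n) {e : R} (he : IsIdempotentElem e) (r : ℕ)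
    (h : ∀ t : K, D.toFun (1 - e + t • e) = t ^ r) : D.rk e = r :=
  pow_fun_inj fun t => by rw [← D.rk_spec he, h]

theorem DetFun.rk_add (D : DetFun K R n) {e f : R} (he : IsIdempotentElem e)
    (hf : IsIdempotentElem f) (hef : e * f = 0) (hfe : f * e = 0) :
    D.rk (e + f) = D.rk e + D.rk f := by
  apply D.rk_eq
  · simp [IsIdempotentElem, mul_add, add_mul, he.eq, hf.eq, hef, hfe]
  intro t
  rw [pow_add, ← D.rk_spec he, ← D.rk_spec hf, ← D.mul_eq]
  congr 1
  simp only [mul_add, add_mul, mul_sub, sub_mul, smul_mul_assoc, mul_smul_comm, he.eq, hf.eq, hef,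
    hfe, one_mul, mul_one, smul_zero, smul_add]
  abel_nf

theorem DetFun.rk_one (D : DetFun K R n) : D.rk (1 : R) = n := by
  apply D.rk_eq (IsIdempotentElem.one)
  intro t
  rw [sub_self, zero_add, D.smul, D.one_eq, mul_one]

theorem DetFun.rk_le (D : DetFun K R n) {e : R} (he : IsIdempotentElem e) : D.rk e ≤ n := by
  have := D.rk_add he he.one_sub (by simp [mul_sub, he.eq]) (by simp [sub_mul, he.eq])
  rw [add_sub_cancel, D.rk_one] at this
  omega

theorem DetFun.Faithful.rk_zero {D : DetFun K R n} (hF : D.Faithful) {e : R}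
    (he : IsIdempotentElem e) (h : D.rk e = 0) : e = 0 := by
  apply hF
  apply D.inKer_of_one
  intro s
  have h0 := D.rk_spec he 0
  rw [h, pow_zero, zero_smul, add_zero] at h0
  have e1 : D.toFun (1 + s * e) = D.toFun (1 + e * (s * e)) := by
    rw [D.one_add_comm e, mul_assoc, he.eq]
  have e2 : (1 - e) * (1 + e * (s * e)) = 1 - e := by
    rw [mul_add, mul_one, ← mul_assoc, sub_mul, he.eq]; simp
  have := congrArg D.toFun e2
  rw [D.mul_eq, h0, one_mul] at this
  rw [e1, this]

theorem DetFun.rk_comm (D : DetFun K R n) (u v : R) (h1 : IsIdempotentElem (u * v))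
    (h2 : IsIdempotentElem (v * u)) : D.rk (u * v) = D.rk (v * u) := by
  apply D.rk_eq h1
  intro t
  rw [← D.rk_spec h2]
  have := D.one_add_comm ((t - 1) • u) v
  convert this using 2
  · rw [smul_mul_assoc, sub_smul, one_smul]; abel
  · rw [mul_smul_comm, sub_smul, one_smul]; abel

end Faith

section Semi

theorem exists_idem_of_integral {K : Type*} [Field K] {R : Type*} [Ring R] [Algebra K R] (a : R)
    (ha : IsIntegral K a) (hn : ¬ IsNilpotent a) : ∃ w : R, IsIdempotentElem (w * a) ∧ w * a ≠ 0 := by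
  obtain ⟨μ, hm, h0⟩ := ha
  replace h0 : Polynomial.aeval a μ = 0 := h0
  have hμ : μ * Polynomial.X ≠ 0 := mul_ne_zero hm.ne_zero Polynomial.X_ne_zero
  obtain ⟨g, hg, hg0⟩ := Polynomial.exists_eq_pow_rootMultiplicity_mul_and_not_dvd _ hμ 0
  simp only [Polynomial.C_0, sub_zero] at hg hg0
  have hr : 0 < (μ * Polynomial.X).rootMultiplicity 0 := by
    rw [Polynomial.rootMultiplicity_pos hμ]; simp
  obtain ⟨r, hr⟩ := Nat.exists_eq_succ_of_ne_zero hr.ne'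
  rw [hr] at hg
  have hcop : IsCoprime (Polynomial.X ^ r.succ : Polynomial K) g :=
    ((Polynomial.irreducible_X.coprime_iff_not_dvd).2 hg0).pow_left
  obtain ⟨u, v, huv⟩ := hcop
  have hz : Polynomial.aeval a (Polynomial.X ^ r.succ * g) = 0 := by rw [← hg, map_mul, h0, zero_mul]
  refine ⟨Polynomial.aeval a (u * Polynomial.X ^ r), ?_⟩
  have e : Polynomial.aeval a (u * Polynomial.X ^ r) * a =
      Polynomial.aeval a (u * Polynomial.X ^ r.succ) := by
    rw [pow_succ, ← mul_assoc, map_mul _ _ Polynomial.X, Polynomial.aeval_X]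
  rw [e]
  constructor
  · have h1 : (u * Polynomial.X ^ r.succ) * (u * Polynomial.X ^ r.succ) =
        u * Polynomial.X ^ r.succ - (u * v) * (Polynomial.X ^ r.succ * g) := by
      linear_combination (u * Polynomial.X ^ r.succ) * huv
    rw [IsIdempotentElem, ← map_mul, h1, map_sub, map_mul _ (u * v), hz, mul_zero, sub_zero]
  · intro h
    apply hn
    refine ⟨r.succ, ?_⟩
    have h1 : (Polynomial.X ^ r.succ : Polynomial K) = Polynomial.X ^ r.succ * (u * Polynomial.X ^ r.succ)
        + v * (Polynomial.X ^ r.succ * g) := by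
      linear_combination (-Polynomial.X ^ r.succ) * huv
    have := congrArg (Polynomial.aeval a) h1
    rw [map_add, map_mul, map_mul _ v, hz, h, mul_zero, mul_zero, add_zero] at this
    simpa using this

variable {S : Type*} [Ring S]

theorem leftIdeal_idem (ρ : S → ℕ) (n : ℕ)
    (hadd : ∀ e f : S, IsIdempotentElem e → IsIdempotentElem f → e * f = 0 → f * e = 0 →
      ρ (e + f) = ρ e + ρ f)
    (hle : ∀ e : S, IsIdempotentElem e → ρ e ≤ n)
    (hpos : ∀ e : S, IsIdempotentElem e → ρ e = 0 → e = 0)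
    (hid : ∀ J : Ideal S, J ≠ ⊥ → ∃ e ∈ J, e ≠ 0 ∧ IsIdempotentElem e) (J : Ideal S) :
    ∃ e ∈ J, IsIdempotentElem e ∧ ∀ x ∈ J, x * e = x := by
  classical
  let P : ℕ → Prop := fun m => ∃ e ∈ J, IsIdempotentElem e ∧ ρ e = m
  have hP : P (ρ 0) := ⟨0, J.zero_mem, IsIdempotentElem.zero, rfl⟩
  have hmax := Nat.findGreatest_spec (P := P) (hle 0 IsIdempotentElem.zero) hP
  obtain ⟨e, heJ, he, hρ⟩ := hmax
  refine ⟨e, heJ, he, ?_⟩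
  by_contra hc
  push Not at hc
  obtain ⟨x, hxJ, hx⟩ := hc
  let J' : Ideal S := J ⊓ LinearMap.ker (LinearMap.toSpanSingleton S S e)
  have hJ' : ∀ y, y ∈ J' ↔ y ∈ J ∧ y * e = 0 := by
    intro y; simp [J', Submodule.mem_inf]
  have hne : J' ≠ ⊥ := by
    intro h
    have : x - x * e ∈ J' := by
      rw [hJ']; exact ⟨J.sub_mem hxJ (J.mul_mem_left _ heJ), by rw [sub_mul, mul_assoc, he.eq, sub_self]⟩
    rw [h, Submodule.mem_bot, sub_eq_zero] at this
    exact hx this.symm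
  obtain ⟨f, hfJ, hf0, hf⟩ := hid J' hne
  rw [hJ'] at hfJ
  obtain ⟨hfJ, hfe⟩ := hfJ
  have hg : IsIdempotentElem (f - e * f) := by
    have h1 : f * (e * f) = 0 := by rw [← mul_assoc, hfe, zero_mul]
    rw [IsIdempotentElem, sub_mul, mul_sub, mul_sub, hf.eq, h1, mul_assoc e f, mul_assoc e f, hf.eq, h1]
    simp
  have hg0 : f - e * f ≠ 0 := by
    intro h
    rw [sub_eq_zero] at h
    apply hf0
    rw [← hf.eq]; nth_rw 2 [h]
    rw [← mul_assoc, hfe, zero_mul]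
  have h1 : e * (f - e * f) = 0 := by rw [mul_sub, ← mul_assoc, he.eq, sub_self]
  have h2 : (f - e * f) * e = 0 := by rw [sub_mul, mul_assoc, hfe, mul_zero, sub_zero]
  have hs : IsIdempotentElem (e + (f - e * f)) := by
    rw [IsIdempotentElem, mul_add, add_mul, add_mul, h1, h2, he.eq, hg.eq]; simp
  have hsJ : e + (f - e * f) ∈ J := J.add_mem heJ (J.sub_mem hfJ (J.mul_mem_left _ hfJ))
  have hle2 : ρ (e + (f - e * f)) ≤ Nat.findGreatest P n :=
    Nat.le_findGreatest (hle _ hs) ⟨_, hsJ, hs, rfl⟩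
  rw [hadd _ _ he hg h1 h2, hρ] at hle2
  exact hg0 (hpos _ hg (by omega))

theorem semisimple_of_idem
    (h : ∀ J : Ideal S, ∃ e ∈ J, IsIdempotentElem e ∧ ∀ x ∈ J, x * e = x) : IsSemisimpleRing S := by
  refine @IsSemisimpleModule.mk _ _ _ _ _ ⟨fun J => ?_⟩
  obtain ⟨e, heJ, he, hx⟩ := h J
  refine ⟨LinearMap.ker (LinearMap.toSpanSingleton S S e), ?_⟩
  constructor
  · rw [disjoint_iff]
    ext x
    simp only [Submodule.mem_inf, LinearMap.mem_ker, LinearMap.toSpanSingleton_apply, smul_eq_mul,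
      Submodule.mem_bot]
    constructor
    · rintro ⟨h1, h2⟩; rw [← hx x h1, h2]
    · rintro rfl; simp
  · rw [codisjoint_iff, Ideal.eq_top_iff_one]
    rw [Submodule.mem_sup]
    refine ⟨e, heJ, 1 - e, ?_, by simp⟩
    simp [sub_mul, he.eq]

theorem regular_of_idem
    (h : ∀ J : Ideal S, ∃ e ∈ J, IsIdempotentElem e ∧ ∀ x ∈ J, x * e = x) (a : S) :
    ∃ b, a * b * a = a := by
  obtain ⟨e, heJ, he, hx⟩ := h (Ideal.span {a})
  obtain ⟨b, rfl⟩ := Ideal.mem_span_singleton'.1 heJ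
  exact ⟨b, by rw [mul_assoc]; exact hx a (Ideal.subset_span rfl)⟩

variable {K : Type*} [Field K] [Infinite K] {R : Type*} [Ring R] [Algebra K R] {n : ℕ} [IsAlgClosed K]

theorem DetFun.Faithful.idem {D : DetFun K R n} (hF : D.Faithful) (J : Ideal R) :
    ∃ e ∈ J, IsIdempotentElem e ∧ ∀ x ∈ J, x * e = x := by
  apply leftIdeal_idem D.rk n (fun e f h1 h2 h3 h4 => D.rk_add h1 h2 h3 h4) (fun e he => D.rk_le he)
    (fun e he h => hF.rk_zero he h)
  intro J hJ
  obtain ⟨a, haJ, hn⟩ : ∃ a ∈ J, ¬ IsNilpotent a := by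
    by_contra hc
    push Not at hc
    apply hJ
    rw [eq_bot_iff]
    intro a ha
    exact hF a (D.inKer_of_one a fun s => D.nilp _ (hc _ (J.mul_mem_left _ ha)))
  obtain ⟨w, h1, h2⟩ := exists_idem_of_integral a (hF.isIntegral a) hn
  exact ⟨w * a, J.mul_mem_left _ haJ, h2, h1⟩

theorem DetFun.Faithful.wedderburn {D : DetFun K R n} (hF : D.Faithful) :
    ∃ (t : ℕ) (d : Fin t → ℕ), (∀ i, NeZero (d i)) ∧
      Nonempty (R ≃ₐ[K] ((i : Fin t) → Matrix (Fin (d i)) (Fin (d i)) K)) := by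
  have : IsSemisimpleRing R := semisimple_of_idem hF.idem
  obtain ⟨t, E, d, _, _, hd, ⟨e⟩⟩ := IsSemisimpleRing.exists_algEquiv_pi_matrix_divisionRing K R
  have hintg : ∀ i, Algebra.IsIntegral K (E i) := by
    intro i
    refine ⟨fun δ => ?_⟩
    have h1 := (hF.isIntegral (e.symm (Pi.single i (Matrix.scalar (Fin (d i)) δ)))).map e.toAlgHom
    have h2 := h1.map (Pi.evalAlgHom K (fun i => Matrix (Fin (d i)) (Fin (d i)) (E i)) i)
    have h3 : Pi.evalAlgHom K (fun i => Matrix (Fin (d i)) (Fin (d i)) (E i)) i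
        (e (e.symm (Pi.single i (Matrix.scalar (Fin (d i)) δ)))) = Matrix.scalar (Fin (d i)) δ := by
      rw [e.apply_symm_apply]; simp
    replace h2 : IsIntegral K (Matrix.scalar (Fin (d i)) δ) := h3 ▸ h2
    have hinj : Function.Injective (Matrix.scalarAlgHom (α := E i) (Fin (d i)) K) := by
      intro a b hab
      exact Matrix.scalar_inj.1 hab
    exact (isIntegral_algHom_iff _ hinj).1 h2
  exact ⟨t, d, hd, ⟨e.trans <| .piCongrRight fun i ↦ .mapMatrix <| .symm <| .ofBijective
    (Algebra.ofId K (E i)) IsAlgClosed.algebraMap_bijective_of_isIntegral⟩⟩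

end Semi
end SDL

set_option linter.unusedSectionVars false
set_option linter.unusedSimpArgs false
namespace SDL

section SymCH
variable {K : Type*} [Field K] [Infinite K] [IsAlgClosed K] {S : Type*} [Ring S] [Algebra K S] {n : ℕ}

theorem DetFun.rk_sum (D : DetFun K S n) {ι : Type*} (F : Finset ι) (e : ι → S)
    (hid : ∀ i ∈ F, IsIdempotentElem (e i)) (ho : ∀ i ∈ F, ∀ j ∈ F, i ≠ j → e i * e j = 0) :
    IsIdempotentElem (∑ i ∈ F, e i) ∧ D.rk (∑ i ∈ F, e i) = ∑ i ∈ F, D.rk (e i) := by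
  classical
  induction F using Finset.induction_on with
  | empty =>
    refine ⟨by simp [IsIdempotentElem.zero], ?_⟩
    simp only [Finset.sum_empty]
    exact D.rk_eq IsIdempotentElem.zero 0 (by simp [D.one_eq])
  | insert a F ha ih =>
    obtain ⟨h1, h2⟩ := ih (fun i hi => hid i (Finset.mem_insert_of_mem hi))
      (fun i hi j hj => ho i (Finset.mem_insert_of_mem hi) j (Finset.mem_insert_of_mem hj))
    have hae := hid a (Finset.mem_insert_self _ _)
    have o1 : e a * ∑ i ∈ F, e i = 0 := by
      rw [Finset.mul_sum]
      refine Finset.sum_eq_zero fun i hi => ho _ (Finset.mem_insert_self _ _) _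
        (Finset.mem_insert_of_mem hi) (by rintro rfl; exact ha hi)
    have o2 : (∑ i ∈ F, e i) * e a = 0 := by
      rw [Finset.sum_mul]
      refine Finset.sum_eq_zero fun i hi => ho _ (Finset.mem_insert_of_mem hi) _
        (Finset.mem_insert_self _ _) (by rintro rfl; exact ha hi)
    rw [Finset.sum_insert ha, Finset.sum_insert ha, ← h2]
    refine ⟨?_, D.rk_add hae h1 o1 o2⟩
    rw [IsIdempotentElem, mul_add, add_mul, add_mul, o1, o2, hae.eq, h1.eq]; simp

theorem DetFun.rk_mono (D : DetFun K S n) {e f : S} (he : IsIdempotentElem e)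
    (hf : IsIdempotentElem f) (h1 : e * f = f) (h2 : f * e = f) : D.rk f ≤ D.rk e := by
  have hg : IsIdempotentElem (e - f) := by
    rw [IsIdempotentElem, mul_sub, sub_mul, sub_mul, he.eq, hf.eq, h1, h2]; simp
  have := D.rk_add hf hg (by rw [mul_sub, hf.eq, h2, sub_self]) (by rw [sub_mul, hf.eq, h1, sub_self])
  rw [add_sub_cancel] at this
  omega

variable (D : DetFun K S n) (st : S →ₗ[K] S)

/-- the square hypothesis for determinants of symmetric elements -/
def SqHyp : Prop := ∀ a b : S, st a = a → st b = b →
  ∃ p : Polynomial K, ∀ t, p.eval t ^ 2 = D.toFun (a + t • b)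

variable {D st}

theorem rk_even (hsq : SqHyp D st) (h1 : st 1 = 1) {e : S} (he : IsIdempotentElem e)
    (hs : st e = e) : Even (D.rk e) := by
  obtain ⟨p, hp⟩ := hsq (1 - e) e (by simp [h1, hs]) hs
  have : p ^ 2 = Polynomial.X ^ (D.rk e) := by
    apply Polynomial.funext
    intro t
    rw [Polynomial.eval_pow, hp, D.rk_spec he]; simp
  have := congrArg Polynomial.natDegree this
  rw [Polynomial.natDegree_pow, Polynomial.natDegree_X_pow] at this
  exact ⟨p.natDegree, by omega⟩

theorem rk_ge_two (hF : D.Faithful) (hsq : SqHyp D st) (h1 : st 1 = 1) {e : S}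
    (he : IsIdempotentElem e) (hs : st e = e) (h0 : e ≠ 0) : 2 ≤ D.rk e := by
  obtain ⟨r, hr⟩ := rk_even hsq h1 he hs
  have : D.rk e ≠ 0 := fun h => h0 (hF.rk_zero he h)
  omega

/-- one step of the purification -/
theorem purify_step (h2 : (2 : K) ≠ 0) (hmul : ∀ x y, st (x * y) = st y * st x)
    (h1 : st 1 = 1) (ν : S) (hν : st ν = ν) (m : ℕ) (hz : ∀ j, m < j → ν ^ j = 0)
    (i : ℕ) (hi : i < m) (e0 a : S) (hea : e0 * a = a) (hae : a * e0 = a)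
    (heν : e0 * ν = ν * e0)
    (has : st a = a) (ha1 : ν ^ m * a * ν ^ m = ν ^ m) (ha2 : a * ν ^ m * a = a)
    (ha3 : ∀ j, i + 1 ≤ j → j < m → a * ν ^ j * a = 0) :
    ∃ a' : S, e0 * a' = a' ∧ a' * e0 = a' ∧ st a' = a' ∧ ν ^ m * a' * ν ^ m = ν ^ m ∧
      a' * ν ^ m * a' = a' ∧ ∀ j, i ≤ j → j < m → a' * ν ^ j * a' = 0 := by
  have hpow : ∀ j, st (ν ^ j) = ν ^ j := by
    intro j
    induction j with
    | zero => simp [h1]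
    | succ j ih => rw [pow_succ, hmul, ih, hν, ← pow_succ', pow_succ]
  have hcomm : ∀ j, e0 * ν ^ j = ν ^ j * e0 := fun j => (Commute.pow_right heν j : _)
  set Y := ν ^ (m - i) * a * ν ^ i with hY
  set Y' := ν ^ i * a * ν ^ (m - i) with hY'
  have sY : st Y = Y' := by rw [hY, hmul, hmul, hpow, hpow, has, hY', mul_assoc]
  have sY' : st Y' = Y := by rw [hY', hmul, hmul, hpow, hpow, has, hY, mul_assoc]
  have F1 : ν ^ m * Y = 0 := by
    rw [hY, ← mul_assoc, ← mul_assoc, ← pow_add, hz (m + (m - i)) (by omega)]; simp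
  have F1' : Y' * ν ^ m = 0 := by
    rw [hY', mul_assoc, ← pow_add, hz (m - i + m) (by omega)]; simp
  have F2 : ∀ j, i ≤ j → Y' * ν ^ j * Y = 0 := by
    intro j hj
    have : Y' * ν ^ j * Y = ν ^ i * a * ν ^ (m - i + j + (m - i)) * (a * ν ^ i) := by
      rw [hY, hY']; simp only [pow_add, mul_assoc]
    rw [this, hz (m - i + j + (m - i)) (by omega)]; simp
  have F3 : ∀ j, i < j → a * Y' * ν ^ j * a = 0 := by
    intro j hj
    have : a * Y' * ν ^ j * a = a * ν ^ i * a * ν ^ (m - i + j) * a := by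
      rw [hY']; simp only [pow_add, mul_assoc]
    rw [this, hz (m - i + j) (by omega)]; simp
  have F3' : ∀ j, i < j → a * ν ^ j * Y * a = 0 := by
    intro j hj
    have : a * ν ^ j * Y * a = a * ν ^ (j + (m - i)) * a * ν ^ i * a := by
      rw [hY]; simp only [pow_add, mul_assoc]
    rw [this, hz (j + (m - i)) (by omega)]; simp
  have F4 : a * Y' * ν ^ i * a = a * ν ^ i * a := by
    have : a * Y' * ν ^ i * a = a * ν ^ i * (a * ν ^ (m - i + i) * a) := by
      rw [hY']; simp only [pow_add, mul_assoc]
    rw [this, Nat.sub_add_cancel hi.le, ha2]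
  have F4' : a * ν ^ i * Y * a = a * ν ^ i * a := by
    have : a * ν ^ i * Y * a = (a * ν ^ (i + (m - i)) * a) * ν ^ i * a := by
      rw [hY]; simp only [pow_add, mul_assoc]
    rw [this, Nat.add_sub_cancel' hi.le, ha2]
  have key : ∀ j, i ≤ j → j < m →
      a * (1 - (2⁻¹ : K) • Y') * ν ^ j * (1 - (2⁻¹ : K) • Y) * a = 0 := by
    intro j hij hjm
    have e1 : a * (1 - (2⁻¹ : K) • Y') * ν ^ j * (1 - (2⁻¹ : K) • Y) * a =
      a * ν ^ j * a - (2⁻¹ : K) • (a * Y' * ν ^ j * a) - (2⁻¹ : K) • (a * ν ^ j * Y * a)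
        + (2⁻¹ * 2⁻¹ : K) • (a * (Y' * ν ^ j * Y) * a) := by
      simp only [mul_sub, sub_mul, mul_one, one_mul, mul_smul_comm, smul_mul_assoc, mul_assoc,
        smul_sub, smul_smul]
      abel
    rw [e1, F2 j hij]
    rcases hij.eq_or_lt with rfl | hlt
    · rw [F4, F4', mul_zero, zero_mul, smul_zero, add_zero]
      have : a * ν ^ i * a = ((2⁻¹ : K) + 2⁻¹) • (a * ν ^ i * a) := by
        rw [← two_mul, mul_inv_cancel₀ h2, one_smul]
      nth_rw 1 [this]
      rw [add_smul]; abel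
    · rw [F3 j hlt, F3' j hlt, ha3 j hlt hjm]; simp
  have F0 : ν ^ m * (1 - (2⁻¹ : K) • Y) = ν ^ m := by
    rw [mul_sub, mul_one, mul_smul_comm, F1, smul_zero, sub_zero]
  have F0' : (1 - (2⁻¹ : K) • Y') * ν ^ m = ν ^ m := by
    rw [sub_mul, one_mul, smul_mul_assoc, F1', smul_zero, sub_zero]
  have eY : e0 * Y = Y * e0 := by
    rw [hY]
    rw [← mul_assoc, ← mul_assoc, hcomm, mul_assoc _ e0 a, hea, mul_assoc _ _ e0, ← hcomm,
      ← mul_assoc _ e0, mul_assoc _ a e0, hae]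
  have eY' : e0 * Y' = Y' * e0 := by
    rw [hY']
    rw [← mul_assoc, ← mul_assoc, hcomm, mul_assoc _ e0 a, hea, mul_assoc _ _ e0, ← hcomm,
      ← mul_assoc _ e0, mul_assoc _ a e0, hae]
  refine ⟨(1 - (2⁻¹ : K) • Y) * a * (1 - (2⁻¹ : K) • Y'), ?_, ?_, ?_, ?_, ?_, ?_⟩
  · have : e0 * (1 - (2⁻¹ : K) • Y) = (1 - (2⁻¹ : K) • Y) * e0 := by
      rw [mul_sub, sub_mul, mul_smul_comm, eY, smul_mul_assoc]; simp
    rw [← mul_assoc, ← mul_assoc, this, mul_assoc _ e0, hea]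
  · have : e0 * (1 - (2⁻¹ : K) • Y') = (1 - (2⁻¹ : K) • Y') * e0 := by
      rw [mul_sub, sub_mul, mul_smul_comm, eY', smul_mul_assoc]; simp
    rw [mul_assoc, ← this, ← mul_assoc, mul_assoc _ a e0, hae]
  · rw [hmul, hmul, has, map_sub, map_sub, map_smul, map_smul, sY, sY', h1, mul_assoc]
  · calc _ = (ν ^ m * (1 - (2⁻¹ : K) • Y)) * a * ((1 - (2⁻¹ : K) • Y') * ν ^ m) := by
          simp only [mul_assoc]
      _ = _ := by rw [F0, F0', ha1]
  · calc _ = (1 - (2⁻¹ : K) • Y) * a * ((1 - (2⁻¹ : K) • Y') * ν ^ m) * (1 - (2⁻¹ : K) • Y) * a *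
            (1 - (2⁻¹ : K) • Y') := by simp only [mul_assoc]
      _ = (1 - (2⁻¹ : K) • Y) * (a * (ν ^ m * (1 - (2⁻¹ : K) • Y)) * a) *
            (1 - (2⁻¹ : K) • Y') := by rw [F0']; simp only [mul_assoc]
      _ = _ := by rw [F0, ha2]
  · intro j hij hjm
    calc _ = (1 - (2⁻¹ : K) • Y) * (a * (1 - (2⁻¹ : K) • Y') * ν ^ j * (1 - (2⁻¹ : K) • Y) * a) *
            (1 - (2⁻¹ : K) • Y') := by simp only [mul_assoc]
      _ = 0 := by rw [key j hij hjm]; simp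

theorem rk_core (h2 : (2 : K) ≠ 0) (hF : D.Faithful) (hsq : SqHyp D st)
    (hmul : ∀ x y, st (x * y) = st y * st x) (hst : ∀ x, st (st x) = x)
    (h1 : st 1 = 1) (ν : S) (hν : st ν = ν) (m : ℕ) (hm : 1 ≤ m) (hz : ν ^ (m + 1) = 0)
    (hne : ν ^ m ≠ 0)
    (e0 : S) (he : IsIdempotentElem e0) (hes : st e0 = e0) (heν : e0 * ν = ν) (hνe : ν * e0 = ν) :
    2 * (m + 1) ≤ D.rk e0 := by
  have hpow : ∀ j, st (ν ^ j) = ν ^ j := by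
    intro j
    induction j with
    | zero => simp [h1]
    | succ j ih => rw [pow_succ, hmul, ih, hν, ← pow_succ', pow_succ]
  have hz' : ∀ j, m < j → ν ^ j = 0 := fun j hj => by
    rw [← Nat.sub_add_cancel hj, pow_add]
    change _ * ν ^ (m + 1) = 0
    rw [hz, mul_zero]
  have heνj : ∀ j, 1 ≤ j → e0 * ν ^ j = ν ^ j := fun j hj => by
    rw [← Nat.sub_add_cancel hj, pow_succ', ← mul_assoc, heν]
  have hνej : ∀ j, 1 ≤ j → ν ^ j * e0 = ν ^ j := fun j hj => by
    rw [← Nat.sub_add_cancel hj, pow_succ, mul_assoc, hνe]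
  have claim : ∀ q, q ≤ m → ∃ a : S, e0 * a = a ∧ a * e0 = a ∧ st a = a ∧
      ν ^ m * a * ν ^ m = ν ^ m ∧ a * ν ^ m * a = a ∧
      ∀ j, m - q ≤ j → j < m → a * ν ^ j * a = 0 := by
    intro q
    induction q with
    | zero =>
      intro _
      obtain ⟨b, hb⟩ := regular_of_idem hF.idem (ν ^ m)
      set a0 := e0 * b * e0 with ha0
      have h0 : ν ^ m * a0 * ν ^ m = ν ^ m := by
        rw [ha0]
        calc _ = (ν ^ m * e0) * b * (e0 * ν ^ m) := by simp only [mul_assoc]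
          _ = _ := by rw [hνej m hm, heνj m hm, hb]
      have h0' : ν ^ m * st a0 * ν ^ m = ν ^ m := by
        have := congrArg st h0
        rwa [hmul, hmul, hpow, ← mul_assoc] at this
      set a1 := (2⁻¹ : K) • (a0 + st a0) with ha1
      have e1 : ν ^ m * a1 * ν ^ m = ν ^ m := by
        rw [ha1, mul_smul_comm, smul_mul_assoc, mul_add, add_mul, h0, h0', ← two_smul K, smul_smul,
          inv_mul_cancel₀ h2, one_smul]
      have hs1 : st a1 = a1 := by rw [ha1, map_smul, map_add, hst, add_comm]
      have l0 : e0 * a0 = a0 := by rw [ha0, ← mul_assoc, ← mul_assoc, he.eq]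
      have r0 : a0 * e0 = a0 := by rw [ha0, mul_assoc, he.eq]
      have l0' : e0 * st a0 = st a0 := by
        have := congrArg st r0
        rwa [hmul, hes] at this
      have r0' : st a0 * e0 = st a0 := by
        have := congrArg st l0
        rwa [hmul, hes] at this
      have l1 : e0 * a1 = a1 := by rw [ha1, mul_smul_comm, mul_add, l0, l0']
      have r1 : a1 * e0 = a1 := by rw [ha1, smul_mul_assoc, add_mul, r0, r0']
      refine ⟨a1 * ν ^ m * a1, ?_, ?_, ?_, ?_, ?_, ?_⟩
      · rw [← mul_assoc, ← mul_assoc, l1]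
      · rw [mul_assoc, r1]
      · rw [hmul, hmul, hs1, hpow, mul_assoc]
      · calc _ = (ν ^ m * a1 * ν ^ m) * a1 * ν ^ m := by simp only [mul_assoc]
          _ = _ := by rw [e1, e1]
      · calc _ = a1 * (ν ^ m * a1 * ν ^ m) * a1 * ν ^ m * a1 := by simp only [mul_assoc]
          _ = a1 * ν ^ m * a1 * ν ^ m * a1 := by rw [e1]
          _ = a1 * (ν ^ m * a1 * ν ^ m) * a1 := by simp only [mul_assoc]
          _ = _ := by rw [e1]
      · intro j h3 h4; omega
    | succ q ih =>
      intro hq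
      obtain ⟨a, b1, b2, b3, b4, b5, b6⟩ := ih (by omega)
      exact purify_step h2 hmul h1 ν hν m hz' (m - (q + 1)) (by omega) e0 a b1 b2
        (by rw [heν, hνe]) b3 b4 b5 (fun j h3 h4 => b6 j (by omega) h4)
  obtain ⟨a, b1, b2, b3, b4, b5, b6⟩ := claim m le_rfl
  replace b6 : ∀ j, j < m → a * ν ^ j * a = 0 := fun j hj => b6 j (by omega) hj
  let E : ℕ → S := fun i => ν ^ i * a * ν ^ (m - i)
  have hmulE : ∀ i j, E i * E j = ν ^ i * (a * ν ^ (m - i + j) * a) * ν ^ (m - j) := by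
    intro i j; simp only [E, pow_add, mul_assoc]
  have hE : ∀ i ∈ Finset.range (m + 1), IsIdempotentElem (E i) := by
    intro i hi
    rw [Finset.mem_range] at hi
    rw [IsIdempotentElem, hmulE, Nat.sub_add_cancel (by omega), b5]
  have hEo : ∀ i ∈ Finset.range (m + 1), ∀ j ∈ Finset.range (m + 1), i ≠ j → E i * E j = 0 := by
    intro i hi j hj hij
    rw [Finset.mem_range] at hi hj
    rw [hmulE]
    rcases lt_or_gt_of_ne hij with h | h
    · rw [hz' (m - i + j) (by omega)]; simp
    · rw [b6 (m - i + j) (by omega)]; simp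
  obtain ⟨hEid, hEs⟩ := D.rk_sum (Finset.range (m + 1)) E hE hEo
  have hrk0 : ∀ i ∈ Finset.range (m + 1), D.rk (E i) = D.rk (a * ν ^ m) := by
    intro i hi
    have hid := hE i hi
    rw [Finset.mem_range] at hi
    have e1 : E i = ν ^ i * (a * ν ^ (m - i)) := mul_assoc _ _ _
    have e2 : a * ν ^ m = (a * ν ^ (m - i)) * ν ^ i := by
      rw [mul_assoc, ← pow_add, Nat.sub_add_cancel (by omega)]
    have hid2 : IsIdempotentElem (a * ν ^ m) := by
      rw [IsIdempotentElem, ← mul_assoc, b5]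
    rw [e1] at hid ⊢
    rw [e2] at hid2 ⊢
    exact D.rk_comm _ _ hid hid2
  rw [Finset.sum_congr rfl hrk0, Finset.sum_const, Finset.card_range, smul_eq_mul] at hEs
  have hle : D.rk (∑ i ∈ Finset.range (m + 1), E i) ≤ D.rk e0 := by
    apply D.rk_mono he hEid
    · rw [Finset.mul_sum]
      refine Finset.sum_congr rfl fun i hi => ?_
      rcases Nat.eq_zero_or_pos i with h | h
      · simp only [E, h, pow_zero, one_mul]; rw [← mul_assoc, b1]
      · simp only [E]; rw [← mul_assoc, ← mul_assoc, heνj i h]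
    · rw [Finset.sum_mul]
      refine Finset.sum_congr rfl fun i hi => ?_
      rcases Nat.eq_zero_or_pos (m - i) with h | h
      · simp only [E, h, pow_zero, mul_one]; rw [mul_assoc, b2]
      · simp only [E]; rw [mul_assoc, hνej (m - i) h]
  have hr2 : 2 ≤ D.rk (a * ν ^ m) := by
    set n' := ν ^ m with hn'
    have aa : a * a = 0 := by simpa using b6 0 (by omega)
    have nn : n' * n' = 0 := by rw [hn', ← pow_add]; exact hz' _ (by omega)
    set v := a * n' + n' with hv
    set u := (2⁻¹ : K) • (a * n' + a) with hu
    have huv : u * v = a * n' := by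
      have : (a * n' + a) * (a * n' + n') = (2 : K) • (a * n') := by
        simp only [mul_add, add_mul]
        rw [← mul_assoc (a * n') a n', b5, mul_assoc a n' n', nn, ← mul_assoc a a n', aa, two_smul]
        simp
      rw [hu, hv, smul_mul_assoc, this, smul_smul, inv_mul_cancel₀ h2, one_smul]
    have hvu : v * u = (2⁻¹ : K) • (a * n' + a + (n' + n' * a)) := by
      rw [hu, hv, mul_smul_comm]
      congr 1
      simp only [mul_add, add_mul]
      rw [← mul_assoc (a * n') a n', b5, ← mul_assoc n' a n', b4]
      abel
    have id1 : IsIdempotentElem (u * v) := by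
      rw [huv, IsIdempotentElem, ← mul_assoc, b5]
    have id2 : IsIdempotentElem (v * u) := by
      have : a * n' * u = u := by
        rw [hu, mul_smul_comm, mul_add, ← mul_assoc (a * n') a n', b5]
      rw [IsIdempotentElem, mul_assoc, ← mul_assoc u, huv, this]
    have hn's : st n' = n' := hpow m
    have hs : st (v * u) = v * u := by
      rw [hvu, map_smul]
      simp only [map_add, hmul, hn's, b3]
      congr 1; abel
    rw [← huv, D.rk_comm u v id1 id2]
    apply rk_ge_two hF hsq h1 id2 hs
    intro h0
    have : n' = 0 := by
      rw [← b4, mul_assoc, ← huv, ← id1.eq, mul_assoc u v, ← mul_assoc v u v, h0]; simp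
    exact hne this
  calc 2 * (m + 1) ≤ (m + 1) * D.rk (a * ν ^ m) := by nlinarith
    _ ≤ _ := hEs ▸ hle

/-- Symmetric Cayley--Hamilton. -/
theorem sym_cayley (h2 : (2 : K) ≠ 0) (hF : D.Faithful) (hsq : SqHyp D st)
    (hmul : ∀ x y, st (x * y) = st y * st x) (hst : ∀ x, st (st x) = x)
    (h1 : st 1 = 1) (x : S) (hx : st x = x) (p : Polynomial K)
    (hp : ∀ t, p.eval t ^ 2 = D.toFun (t • 1 - x)) : Polynomial.aeval x p = 0 := by
  classical
  obtain ⟨f, hfm, hfd, hf⟩ := D.exists_char x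
  have hfp : f = p ^ 2 := by
    apply Polynomial.funext; intro t; rw [hf, Polynomial.eval_pow, hp]
  have hp0 : p ≠ 0 := by
    rintro rfl
    apply hfm.ne_zero; rw [hfp]; simp
  have hintg : IsIntegral K x := hF.isIntegral x
  have hμ0 : minpoly K x ≠ 0 := minpoly.ne_zero hintg
  suffices minpoly K x ∣ p by
    obtain ⟨q, hq⟩ := this
    rw [hq, map_mul, minpoly.aeval, zero_mul]
  have hst_aeval : ∀ q : Polynomial K, st (Polynomial.aeval x q) = Polynomial.aeval x q := by
    intro q
    induction q using Polynomial.induction_on' with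
    | add p q hp hq => simp [hp, hq]
    | monomial m c =>
      have hpow : ∀ j, st (x ^ j) = x ^ j := by
        intro j
        induction j with
        | zero => simp [h1]
        | succ j ih => rw [pow_succ, hmul, ih, hx, ← pow_succ', pow_succ]
      simp [Polynomial.aeval_monomial, ← Algebra.smul_def, hpow]
  have main : ∀ l : K, (minpoly K x).rootMultiplicity l ≤ p.rootMultiplicity l := by
    intro l
    set M := (minpoly K x).rootMultiplicity l with hM
    rcases Nat.eq_zero_or_pos M with h0 | hMpos
    · omega
    obtain ⟨g, hg, hgd⟩ := Polynomial.exists_eq_pow_rootMultiplicity_mul_and_not_dvd _ hμ0 l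
    rw [← hM] at hg
    have hcop : IsCoprime ((Polynomial.X - Polynomial.C l) ^ M) g :=
      (((Polynomial.irreducible_X_sub_C l).coprime_iff_not_dvd).2 hgd).pow_left
    obtain ⟨u, v, huv⟩ := hcop
    set L := (Polynomial.X - Polynomial.C l : Polynomial K) with hL
    set e0 := Polynomial.aeval x (v * g) with he0
    have hmin : Polynomial.aeval x (L ^ M * g) = 0 := by rw [← hg]; exact minpoly.aeval K x
    have hvan : ∀ q, Polynomial.aeval x (q * (L ^ M * g)) = 0 := by
      intro q; rw [map_mul, hmin, mul_zero]
    have he : IsIdempotentElem e0 := by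
      rw [IsIdempotentElem, he0, ← map_mul]
      have : v * g * (v * g) = v * g - (u * v) * (L ^ M * g) := by
        linear_combination (v * g) * huv
      rw [this, map_sub, hvan, sub_zero]
    have hes : st e0 = e0 := hst_aeval _
    set ν := Polynomial.aeval x (L * (v * g)) with hν
    have hνs : st ν = ν := hst_aeval _
    have hνL : ν = Polynomial.aeval x L * e0 := by rw [hν, map_mul]
    have hLe : Polynomial.aeval x L * e0 = e0 * Polynomial.aeval x L := by
      rw [he0, ← map_mul, ← map_mul, mul_comm]
    have heν : e0 * ν = ν := by rw [hνL, hLe, ← mul_assoc, he.eq]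
    have hνe : ν * e0 = ν := by rw [hνL, mul_assoc, he.eq]
    have hpowν : ∀ j, ν ^ (j + 1) = Polynomial.aeval x (L ^ (j + 1) * (v * g)) := by
      intro j
      induction j with
      | zero => simp [hν]
      | succ j ih =>
        rw [pow_succ, ih, hνL, map_mul, mul_assoc, hLe, ← mul_assoc (Polynomial.aeval x (v * g)),
          ← he0, he.eq, ← hLe, ← mul_assoc, he0, ← map_mul, ← map_mul, ← pow_succ]
    have hnz : ∀ j, j < M → Polynomial.aeval x (L ^ j * (v * g)) ≠ 0 := by
      intro j hj h0
      have hd := minpoly.dvd K x h0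
      rw [hg] at hd
      have hg0 : g ≠ 0 := by rintro rfl; simp at hgd
      have h3 : L ^ (j + 1) * g ∣ L ^ j * (v * g) :=
        (mul_dvd_mul_right (pow_dvd_pow L (by omega)) g).trans hd
      have h4 : L ∣ v := by
        have e1 : L ^ (j + 1) * g = (L ^ j * g) * L := by ring
        have e2 : L ^ j * (v * g) = (L ^ j * g) * v := by ring
        rw [e1, e2] at h3
        exact (mul_dvd_mul_iff_left (mul_ne_zero (pow_ne_zero _ (Polynomial.X_sub_C_ne_zero l)) hg0)).1 h3
      have h5 : L ∣ 1 := by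
        rw [← huv]
        exact dvd_add (dvd_mul_of_dvd_right (dvd_pow_self _ hMpos.ne') _) (dvd_mul_of_dvd_left h4 _)
      exact Polynomial.not_isUnit_X_sub_C l (isUnit_of_dvd_one h5)
    have he0ne : e0 ≠ 0 := by
      have := hnz 0 hMpos
      rwa [pow_zero, one_mul] at this
    have hrk : 2 * M ≤ D.rk e0 := by
      rcases Nat.lt_or_ge 1 M with hM1 | hM1
      · have := rk_core h2 hF hsq hmul hst h1 ν hνs (M - 1) (by omega) ?_ ?_ e0 he hes heν hνe
        · omega
        · rw [hpowν, Nat.sub_add_cancel hMpos]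
          have : L ^ M * (v * g) = v * (L ^ M * g) := by ring
          rw [this, hvan]
        · obtain ⟨j, hj⟩ : ∃ j, M - 1 = j + 1 := ⟨M - 2, by omega⟩
          rw [hj, hpowν]
          exact hnz _ (by omega)
      · have := rk_ge_two hF hsq h1 he hes he0ne
        omega
    have hnil : IsNilpotent ν := by
      refine ⟨M - 1 + 1, ?_⟩
      rw [hpowν, Nat.sub_add_cancel hMpos]
      have : L ^ M * (v * g) = v * (L ^ M * g) := by ring
      rw [this, hvan]
    obtain ⟨q, -, -, hq⟩ := D.exists_poly ((1 - e0) * (-(Polynomial.aeval x L)) + e0) (1 - e0)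
    have hz : Polynomial.aeval x L = x - l • 1 := by
      rw [hL]; simp [Algebra.algebraMap_eq_smul_one]
    have hfac : f = L ^ (D.rk e0) * q.comp L := by
      apply poly_eq_of_generic f _ L (Polynomial.X_sub_C_ne_zero l)
      intro t ht
      have htl : L.eval t = t - l := by simp [hL]
      rw [htl] at ht
      rw [hf, Polynomial.eval_mul, Polynomial.eval_pow, Polynomial.eval_comp, htl, hq,
        ← D.rk_spec he]
      have h3 : D.toFun (1 - e0 + (t - l) • e0 - ν) = D.toFun (1 - e0 + (t - l) • e0) := by
        have : 1 - e0 + (t - l) • e0 - ν =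
            (1 - e0 + (t - l) • e0) * (1 + (-(t - l)⁻¹) • ν) := by
          simp only [mul_add, add_mul, sub_mul, mul_one, one_mul, mul_smul_comm, smul_mul_assoc, heν,
            sub_self, smul_zero, zero_add, smul_smul]
          rw [neg_mul, inv_mul_cancel₀ ht]; simp [sub_eq_add_neg]
        rw [this, D.mul_eq, D.nilp _ (hnil.smul _), mul_one]
      rw [← h3, ← D.mul_eq]
      congr 1
      have h4 : t • (1 : S) - x = (t - l) • 1 - Polynomial.aeval x L := by
        rw [hz, sub_smul]; abel
      rw [h4, hνL]
      set z := Polynomial.aeval x L with hzz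
      simp only [mul_add, add_mul, sub_mul, mul_sub, mul_one, one_mul, mul_smul_comm, smul_mul_assoc,
        mul_neg, neg_mul, mul_assoc, he.eq, ← hLe, smul_add, smul_sub]
      have h5 : e0 * (z * e0) = z * e0 := by rw [hLe, ← mul_assoc, he.eq]
      simp only [h5, he.eq]
      abel
    have hle : D.rk e0 ≤ f.rootMultiplicity l :=
      (Polynomial.le_rootMultiplicity_iff hfm.ne_zero).2 ⟨_, hfac⟩
    rw [hfp, pow_two, Polynomial.rootMultiplicity_mul (mul_ne_zero hp0 hp0)] at hle
    omega
  have hsp : (minpoly K x).Splits := IsAlgClosed.splits _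
  refine (Polynomial.Splits.dvd_iff_roots_le_roots hsp hμ0 hp0).2 ?_
  rw [Multiset.le_iff_count]
  intro l
  rw [Polynomial.count_roots, Polynomial.count_roots]
  exact main l

end SymCH
end SDL

set_option linter.unusedSectionVars false
set_option linter.unusedSimpArgs false
namespace SDL
open SympDet

section Bridge
variable {k : Type u} [Field k] {M : Type u} [AddCommGroup M] [Module k M]

theorem bc_smul {B B' : Type u} [CommRing B] [Algebra k B] [CommRing B'] [Algebra k B']
    (f : B →ₐ[k] B') (b : B) (x : B ⊗[k] M) :
    LinearMap.rTensor M f.toLinearMap (b • x) = f b • LinearMap.rTensor M f.toLinearMap x := by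
  induction x with
  | zero => simp
  | add x y hx hy => rw [smul_add, map_add, hx, hy, map_add, smul_add]
  | tmul c m => simp [TensorProduct.smul_tmul', LinearMap.rTensor_tmul]

theorem bc_comp {B B' B'' : Type u} [CommRing B] [Algebra k B] [CommRing B'] [Algebra k B']
    [CommRing B''] [Algebra k B'']
    (f : B →ₐ[k] B') (g : B' →ₐ[k] B'') (x : B ⊗[k] M) :
    LinearMap.rTensor M g.toLinearMap (LinearMap.rTensor M f.toLinearMap x) =
      LinearMap.rTensor M (g.comp f).toLinearMap x := by
  rw [← LinearMap.comp_apply, ← LinearMap.rTensor_comp]; rfl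

theorem bc_id {B : Type u} [CommRing B] [Algebra k B] (f : B →ₐ[k] B) (hf : ∀ b, f b = b) (x : B ⊗[k] M) :
    LinearMap.rTensor M f.toLinearMap x = x := by
  have : f.toLinearMap = LinearMap.id := LinearMap.ext hf
  rw [this, LinearMap.rTensor_id]; rfl

theorem bc_mul {R : Type u} [Ring R] [Algebra k R]
    {B B' : Type u} [CommRing B] [Algebra k B] [CommRing B'] [Algebra k B']
    (f : B →ₐ[k] B') (x y : B ⊗[k] R) :
    LinearMap.rTensor R f.toLinearMap (x * y) =
      LinearMap.rTensor R f.toLinearMap x * LinearMap.rTensor R f.toLinearMap y :=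
  map_mul (Algebra.TensorProduct.map f (AlgHom.id k R)) x y

theorem bc_one {R : Type u} [Ring R] [Algebra k R]
    {B B' : Type u} [CommRing B] [Algebra k B] [CommRing B'] [Algebra k B']
    (f : B →ₐ[k] B') :
    LinearMap.rTensor R f.toLinearMap (1 : B ⊗[k] R) = 1 :=
  map_one (Algebra.TensorProduct.map f (AlgHom.id k R))

variable {K : Type u} [Field K] [Algebra k K]

/-- evaluating a law on a linear combination of `K`-points is polynomial -/
theorem law_poly (Q : PolyLaw k M) {m : ℕ} (y : Fin m → K ⊗[k] M) :
    ∃ p : MvPolynomial (Fin m) K, ∀ u : Fin m → K,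
      MvPolynomial.eval u p = Q.toFun K (∑ i, u i • y i) := by
  let B := MvPolynomial (Fin m) K
  let j : K →ₐ[k] B := IsScalarTower.toAlgHom k K B
  refine ⟨Q.toFun B (∑ i, (MvPolynomial.X i : B) • LinearMap.rTensor M j.toLinearMap (y i)), fun u => ?_⟩
  let ev : B →ₐ[k] K := (MvPolynomial.aeval u : B →ₐ[K] K).restrictScalars k
  have h := Q.natural B K ev (∑ i, (MvPolynomial.X i : B) • LinearMap.rTensor M j.toLinearMap (y i))
  have hev : ∀ b, ev b = MvPolynomial.eval u b := fun b => by
    simp only [ev, AlgHom.restrictScalars_apply]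
    exact congrArg (fun f : B →+* K => f b) (MvPolynomial.coe_aeval_eq_eval u)
  rw [← hev, h, map_sum]
  congr 1
  refine Finset.sum_congr rfl fun i _ => ?_
  rw [bc_smul, bc_comp, bc_id, hev]
  · simp
  · intro b
    rw [AlgHom.comp_apply, hev]
    exact MvPolynomial.eval_C b

variable [Infinite K]

theorem law_poly_homog (Q : PolyLaw k M) {n : ℕ} (hQ : Q.IsHomog n) {m : ℕ} (y : Fin m → K ⊗[k] M) :
    ∃ p : MvPolynomial (Fin m) K, p.IsHomogeneous n ∧ ∀ u : Fin m → K,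
      MvPolynomial.eval u p = Q.toFun K (∑ i, u i • y i) := by
  obtain ⟨p, hp⟩ := law_poly Q y
  refine ⟨MvPolynomial.homogeneousComponent n p, MvPolynomial.homogeneousComponent_isHomogeneous n p,
    fun u => ?_⟩
  rw [← hp]
  set N := max p.totalDegree n + 1
  have hsum : ∑ i ∈ Finset.range N, MvPolynomial.homogeneousComponent i p = p := by
    conv_rhs => rw [← MvPolynomial.sum_homogeneousComponent p]
    symm
    apply Finset.sum_subset
    · intro i; simp only [Finset.mem_range, N]; omega
    · intro i _ hi
      simp only [Finset.mem_range] at hi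
      exact MvPolynomial.homogeneousComponent_eq_zero _ _ (by omega)
  have := vl_eq N (fun i => MvPolynomial.eval u (MvPolynomial.homogeneousComponent i p))
    (fun i => if i = n then MvPolynomial.eval u p else 0) (fun t => by
      have e1 : MvPolynomial.eval (fun i => t * u i) p = t ^ n * MvPolynomial.eval u p := by
        rw [hp, hp, ← hQ K t]
        congr 1
        rw [Finset.smul_sum]
        simp only [mul_smul]
      have e2 : MvPolynomial.eval (fun i => t * u i) p = ∑ j ∈ Finset.range N,
          t ^ j * MvPolynomial.eval u (MvPolynomial.homogeneousComponent j p) := by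
        conv_lhs => rw [← hsum, map_sum]
        refine Finset.sum_congr rfl fun j _ => ?_
        have := (MvPolynomial.homogeneousComponent_isHomogeneous j p)
        rw [MvPolynomial.eval_eq, MvPolynomial.eval_eq, Finset.mul_sum]
        refine Finset.sum_congr rfl fun α hα => ?_
        have hd := this (MvPolynomial.mem_support_iff.1 hα)
        simp only [mul_pow, Finset.prod_mul_distrib]
        have : ∏ i ∈ α.support, t ^ α i = t ^ j := by
          rw [Finset.prod_pow_eq_pow_sum, ← hd]
          congr 1
          simp [Finsupp.weight_apply, Finsupp.sum]
        rw [this]; ring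
      rw [← e2, e1]
      rw [Finset.sum_eq_single_of_mem n (by simp [N])]
      · simp
      · intro b _ hb; simp [hb]) n (by simp [N])
  simpa using this

/-- A monomial of degree `n` is the diagonal of a multilinear form. -/
theorem homog_multilin {W : Type*} [AddCommGroup W] [Module K W] {n m : ℕ} (c : Fin m → W →ₗ[K] K)
    (p : MvPolynomial (Fin m) K) (hp : p.IsHomogeneous n) :
    ∃ Φ : MultilinearMap K (fun _ : Fin n => W) K, ∀ w, Φ (fun _ => w) =
      MvPolynomial.eval (fun i => c i w) p := by
  classical
  have mono : ∀ α : Fin m →₀ ℕ, p.coeff α ≠ 0 → ∃ Φ : MultilinearMap K (fun _ : Fin n => W) K,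
      ∀ w, Φ (fun _ => w) = ∏ i ∈ α.support, (c i w) ^ α i := by
    intro α hα
    have hd := hp hα
    obtain ⟨l, hl⟩ : ∃ l : List (Fin m), (l : Multiset (Fin m)) = Finsupp.toMultiset α :=
      ⟨_, Multiset.coe_toList _⟩
    have hlen : l.length = n := by
      have := congrArg Multiset.card hl
      rw [Multiset.coe_card, Finsupp.card_toMultiset] at this
      rw [this, ← hd]; simp [Finsupp.weight_apply, Finsupp.sum]
    subst hlen
    refine ⟨(MultilinearMap.mkPiAlgebra K (Fin l.length) K).compLinearMap (fun j => c (l.get j)), fun w => ?_⟩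
    rw [MultilinearMap.compLinearMap_apply, MultilinearMap.mkPiAlgebra_apply]
    have e1 : ∏ i, (c (l.get i)) w = ((l : Multiset (Fin m)).map (fun i => c i w)).prod := by
      rw [Multiset.map_coe, Multiset.prod_coe]
      rw [← List.prod_ofFn]
      congr 1
      apply List.ext_getElem <;> simp
    rw [e1, hl, Finsupp.toMultiset_map, Finsupp.prod_toMultiset]
    rw [Finsupp.prod_mapDomain_index]
    · rfl
    · simp
    · intros; rw [pow_add]
  choose! Φ hΦ using mono
  refine ⟨∑ α ∈ p.support, p.coeff α • Φ α, fun w => ?_⟩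
  rw [MvPolynomial.eval_eq, _root_.sum_apply]
  refine Finset.sum_congr rfl fun α hα => ?_
  rw [_root_.smul_apply, hΦ α (MvPolynomial.mem_support_iff.1 hα), smul_eq_mul]

theorem global_multilin {W : Type*} [AddCommGroup W] [Module K W] {n : ℕ} (q : W → K)
    (hq : ∀ (m : ℕ) (y : Fin m → W), ∃ p : MvPolynomial (Fin m) K, p.IsHomogeneous n ∧
      ∀ u : Fin m → K, MvPolynomial.eval u p = q (∑ i, u i • y i)) :
    ∃ Φ : MultilinearMap K (fun _ : Fin n => W) K, ∀ y, q y = Φ (fun _ => y) := by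
  classical
  have loc : ∀ F : Finset W, ∃ Φ : MultilinearMap K (fun _ : Fin n => W) K,
      ∀ y ∈ F, q y = Φ (fun _ => y) := by
    intro F
    let V := Submodule.span K (F : Set W)
    have : Module.Finite K V := Module.Finite.span_of_finite K F.finite_toSet
    let b := Module.finBasis K V
    obtain ⟨p, hp, hpe⟩ := hq _ (fun i => (b i : W))
    obtain ⟨r, hr⟩ := LinearMap.exists_leftInverse_of_injective V.subtype V.ker_subtype
    obtain ⟨Φ, hΦ⟩ := homog_multilin (fun i => (b.coord i) ∘ₗ r) p hp
    refine ⟨Φ, fun y hy => ?_⟩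
    rw [hΦ, hpe]
    congr 1
    have hyV : y ∈ V := Submodule.subset_span hy
    have hry : r y = ⟨y, hyV⟩ := LinearMap.congr_fun hr ⟨y, hyV⟩
    have := congrArg V.subtype (b.sum_repr ⟨y, hyV⟩)
    rw [map_sum] at this
    simp only [LinearMap.comp_apply, hry, Module.Basis.coord_apply]
    exact this.symm
  let pwr : W → ⨂[K] _ : Fin n, W := fun y => PiTensorProduct.tprod K (fun _ => y)
  let L : (W →₀ K) →ₗ[K] ⨂[K] _ : Fin n, W := Finsupp.linearCombination K pwr
  let L' : (W →₀ K) →ₗ[K] K := Finsupp.linearCombination K (fun y => q y)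
  have hker : LinearMap.ker L ≤ LinearMap.ker L' := by
    intro c hc
    obtain ⟨Φ, hΦ⟩ := loc c.support
    rw [LinearMap.mem_ker] at hc ⊢
    have := congrArg (PiTensorProduct.lift Φ) hc
    rw [map_zero] at this
    rw [← this]
    simp only [L, L', Finsupp.linearCombination_apply, Finsupp.sum, map_sum, map_smul]
    refine Finset.sum_congr rfl fun y hy => ?_
    rw [hΦ y hy, PiTensorProduct.lift.tprod]
  obtain ⟨g, hg⟩ := (LinearMap.exists_extend ((LinearMap.ker L).liftQ L' hker ∘ₗ L.quotKerEquivRange.symm.toLinearMap))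
  refine ⟨g.compMultilinearMap (PiTensorProduct.tprod K), fun y => ?_⟩
  have h1 : L (Finsupp.single y 1) = pwr y := by simp [L]
  have h2 : L' (Finsupp.single y 1) = q y := by simp [L']
  have h3 := LinearMap.congr_fun hg ⟨L (Finsupp.single y 1), LinearMap.mem_range_self _ _⟩
  have h4 : L.quotKerEquivRange.symm ⟨L (Finsupp.single y 1), LinearMap.mem_range_self _ _⟩ =
      (LinearMap.ker L).mkQ (Finsupp.single y 1) := by
    rw [LinearEquiv.symm_apply_eq]; rfl
  simp only [LinearMap.comp_apply, LinearEquiv.coe_coe, h4] at h3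
  rw [Submodule.mkQ_apply, Submodule.liftQ_apply, h2] at h3
  rw [← h3]
  change _ = g (pwr y)
  rw [← h1]; rfl

/-- a homogeneous law is globally the diagonal of a multilinear form on `K`-points -/
theorem law_multilin (Q : PolyLaw k M) {n : ℕ} (hQ : Q.IsHomog n) :
    ∃ Φ : MultilinearMap K (fun _ : Fin n => K ⊗[k] M) K, ∀ y, Q.toFun K y = Φ (fun _ => y) :=
  global_multilin _ fun _ y => law_poly_homog Q hQ y

/-- the determinant function on `K`-points of a determinant law -/
theorem law_detFun {R : Type u} [Ring R] [Algebra k R] (D : PolyLaw k R) {n : ℕ} (hD : D.IsHomog n)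
    (hm : D.IsMult) : ∃ DF : DetFun K (K ⊗[k] R) n, ∀ y, DF.toFun y = D.toFun K y := by
  obtain ⟨Φ, hΦ⟩ := law_multilin (K := K) D hD
  exact ⟨⟨D.toFun K, Φ, hΦ, (hm K).1, (hm K).2⟩, fun _ => rfl⟩

end Bridge
end SDL

set_option linter.unusedSectionVars false
set_option linter.unusedSimpArgs false
namespace SDL
open SympDet

section Fam
variable {k : Type u} [Field k]

/-- natural family of functions of `N` scalars -/
def NatFam (k : Type u) [Field k] {N : ℕ}
    (F : ∀ (B : Type u) [CommRing B] [Algebra k B], (Fin N → B) → B) : Prop :=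
  ∀ (B B' : Type u) [CommRing B] [Algebra k B] [CommRing B'] [Algebra k B'] (f : B →ₐ[k] B')
    (b : Fin N → B), f (F B b) = F B' (fun i => f (b i))

theorem fam_ext (K : Type u) [Field K] [Algebra k K] [Infinite K] {N : ℕ}
    (F G : ∀ (B : Type u) [CommRing B] [Algebra k B], (Fin N → B) → B)
    (hF : NatFam k F) (hG : NatFam k G) (h : ∀ u : Fin N → K, F K u = G K u)
    (B : Type u) [CommRing B] [Algebra k B] (b : Fin N → B) : F B b = G B b := by
  have key : F (MvPolynomial (Fin N) k) MvPolynomial.X = G (MvPolynomial (Fin N) k) MvPolynomial.X := by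
    apply MvPolynomial.map_injective (algebraMap k K) (algebraMap k K).injective
    apply MvPolynomial.funext
    intro u
    have e1 := hF _ K (MvPolynomial.aeval u) MvPolynomial.X
    have e2 := hG _ K (MvPolynomial.aeval u) MvPolynomial.X
    simp only [MvPolynomial.aeval_X] at e1 e2
    rw [MvPolynomial.eval_map, MvPolynomial.eval_map, ← MvPolynomial.aeval_def,
      ← MvPolynomial.aeval_def, e1, e2]
    exact h u
  have e1 := hF _ B (MvPolynomial.aeval b) MvPolynomial.X
  have e2 := hG _ B (MvPolynomial.aeval b) MvPolynomial.X
  simp only [MvPolynomial.aeval_X] at e1 e2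
  exact e1.symm.trans ((congrArg _ key).trans e2)

theorem fam_sqrt (h2 : (2 : k) ≠ 0) {N : ℕ}
    (F G : ∀ (B : Type u) [CommRing B] [Algebra k B], (Fin N → B) → B)
    (hF : NatFam k F) (hG : NatFam k G)
    (h : ∀ (B : Type u) [CommRing B] [Algebra k B] (b : Fin N → B), F B b ^ 2 = G B b ^ 2)
    (b0 : Fin N → k) (h0 : F k b0 = G k b0) (h0' : G k b0 ≠ 0)
    (B : Type u) [CommRing B] [Algebra k B] (b : Fin N → B) : F B b = G B b := by
  have key : F (MvPolynomial (Fin N) k) MvPolynomial.X = G (MvPolynomial (Fin N) k) MvPolynomial.X := by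
    rcases sq_eq_sq_iff_eq_or_eq_neg.1 (h (MvPolynomial (Fin N) k) MvPolynomial.X) with h1 | h1
    · exact h1
    · exfalso
      have e1 := hF _ k (MvPolynomial.aeval b0) MvPolynomial.X
      have e2 := hG _ k (MvPolynomial.aeval b0) MvPolynomial.X
      simp only [MvPolynomial.aeval_X] at e1 e2
      rw [h1, map_neg, e2] at e1
      have e3 : -G k b0 = G k b0 := e1.trans h0
      have e4 : (2 : k) * G k b0 = 0 := by linear_combination -e3
      exact (mul_ne_zero h2 h0') e4
  have e1 := hF _ B (MvPolynomial.aeval b) MvPolynomial.X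
  have e2 := hG _ B (MvPolynomial.aeval b) MvPolynomial.X
  simp only [MvPolynomial.aeval_X] at e1 e2
  exact e1.symm.trans ((congrArg _ key).trans e2)

variable {M : Type u} [AddCommGroup M] [Module k M]

theorem tensor_exists {B : Type u} [CommRing B] [Algebra k B] (x : B ⊗[k] M) :
    ∃ (N : ℕ) (b : Fin N → B) (m : Fin N → M), x = ∑ i, b i ⊗ₜ[k] m i := by
  induction x with
  | zero => exact ⟨0, Fin.elim0, Fin.elim0, by simp⟩
  | tmul b m => exact ⟨1, fun _ => b, fun _ => m, by simp⟩
  | add x y hx hy =>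
    obtain ⟨N, b, m, rfl⟩ := hx
    obtain ⟨N', b', m', rfl⟩ := hy
    refine ⟨N + N', Fin.append b b', Fin.append m m', ?_⟩
    rw [Fin.sum_univ_add]; simp

theorem bc_sum {B B' : Type u} [CommRing B] [Algebra k B] [CommRing B'] [Algebra k B']
    (f : B →ₐ[k] B') {N : ℕ} (b : Fin N → B) (m : Fin N → M) :
    LinearMap.rTensor M f.toLinearMap (∑ i, b i ⊗ₜ[k] m i) = ∑ i, f (b i) ⊗ₜ[k] m i := by
  simp [map_sum]

theorem law_ext (K : Type u) [Field K] [Algebra k K] [Infinite K] (F G : PolyLaw k M)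
    (h : ∀ y : K ⊗[k] M, F.toFun K y = G.toFun K y)
    (B : Type u) [CommRing B] [Algebra k B] (x : B ⊗[k] M) : F.toFun B x = G.toFun B x := by
  obtain ⟨N, b, m, rfl⟩ := tensor_exists x
  exact fam_ext K (fun B _ _ b => F.toFun B (∑ i : Fin N, b i ⊗ₜ[k] m i))
    (fun B _ _ b => G.toFun B (∑ i : Fin N, b i ⊗ₜ[k] m i))
    (fun B B' _ _ _ _ f b => by rw [F.natural, bc_sum]) (fun B B' _ _ _ _ f b => by rw [G.natural, bc_sum])
    (fun u => h _) B b

theorem law_sqrt (h2 : (2 : k) ≠ 0) (F G : PolyLaw k M)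
    (h : ∀ (B : Type u) [CommRing B] [Algebra k B] (x : B ⊗[k] M), F.toFun B x ^ 2 = G.toFun B x ^ 2)
    (m0 : M) (h0 : F.toFun k (1 ⊗ₜ m0) = G.toFun k (1 ⊗ₜ m0)) (h0' : G.toFun k (1 ⊗ₜ m0) ≠ 0)
    (B : Type u) [CommRing B] [Algebra k B] (x : B ⊗[k] M) : F.toFun B x = G.toFun B x := by
  obtain ⟨N, b, m, rfl⟩ := tensor_exists x
  have := fam_sqrt h2 (N := N + 1)
    (fun B _ _ b => F.toFun B (∑ i, b i ⊗ₜ[k] (Fin.cons m0 m : Fin (N + 1) → M) i))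
    (fun B _ _ b => G.toFun B (∑ i, b i ⊗ₜ[k] (Fin.cons m0 m : Fin (N + 1) → M) i))
    (fun B B' _ _ _ _ f b => by rw [F.natural, bc_sum]) (fun B B' _ _ _ _ f b => by rw [G.natural, bc_sum])
    (fun B _ _ b => h B _) (Fin.cons 1 0) (by simpa [Fin.sum_univ_succ] using h0)
    (by simpa [Fin.sum_univ_succ] using h0') B (Fin.cons 0 b)
  simpa [Fin.sum_univ_succ] using this

end Fam

section Pkg
variable {k : Type u} [Field k] {K : Type u} [Field K] [Algebra k K] [Infinite K]
  {R : Type u} [Ring R] [Algebra k R]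

theorem mem_lawKer_iff (D : PolyLaw k R) {n : ℕ} (DF : DetFun K (K ⊗[k] R) n)
    (hDF : ∀ y, DF.toFun y = D.toFun K y) (m : R) :
    m ∈ D.lawKer ↔ (1 ⊗ₜ[k] m : K ⊗[k] R) ∈ DF.ker := by
  rw [DF.mem_ker]
  constructor
  · intro h y
    rw [hDF, hDF, add_comm, h]
  · intro h B _ _ b y
    obtain ⟨N, c, r, rfl⟩ := tensor_exists y
    have := fam_ext K (N := N + 1)
      (fun B _ _ b => D.toFun B (∑ i, b i ⊗ₜ[k] (Fin.cons m r : Fin (N + 1) → R) i))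
      (fun B _ _ b => D.toFun B (∑ i : Fin N, b i.succ ⊗ₜ[k] r i))
      (fun B B' _ _ _ _ f b => by rw [D.natural, bc_sum]) (fun B B' _ _ _ _ f b => by rw [D.natural, bc_sum])
      (fun u => by
        rw [Fin.sum_univ_succ, Fin.cons_zero, ← hDF, ← hDF, add_comm]
        have h1 : DF.InKer (u 0 • (1 ⊗ₜ[k] m : K ⊗[k] R)) := DetFun.InKer.smul h (u 0)
        rw [TensorProduct.smul_tmul', smul_eq_mul, mul_one] at h1
        simpa using h1 (∑ i : Fin N, u i.succ ⊗ₜ[k] r i)) B (Fin.cons b c)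
    simpa [Fin.sum_univ_succ] using this

/-- transport a determinant function along an algebra equivalence -/
noncomputable def DetFun.transport {A : Type*} [Ring A] [Algebra K A] {A' : Type*} [Ring A'] [Algebra K A']
    {n : ℕ} (D : DetFun K A n) (e : A ≃ₐ[K] A') : DetFun K A' n where
  toFun x := D.toFun (e.symm x)
  Φ := D.Φ.compLinearMap (fun _ => e.symm.toLinearMap)
  hΦ y := by rw [D.hΦ]; rfl
  one_eq := by rw [map_one, D.one_eq]
  mul_eq x y := by rw [map_mul, D.mul_eq]

variable [IsAlgClosed K]

theorem law_pkg (D : PolyLaw k R) {n : ℕ} (hD : D.IsHomog n) (hm : D.IsMult) :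
    ∃ (t : ℕ) (c : Fin t → ℕ) (_ : ∀ i, NeZero (c i))
      (pr : K ⊗[k] R →ₐ[K] ((i : Fin t) → Matrix (Fin (c i)) (Fin (c i)) K))
      (E : DetFun K ((i : Fin t) → Matrix (Fin (c i)) (Fin (c i)) K) n),
      Function.Surjective pr ∧ E.Faithful ∧ (∀ y, E.toFun (pr y) = D.toFun K y) ∧
      (∀ y, pr y = 0 ↔ ∀ z, D.toFun K (z + y) = D.toFun K z) ∧
      ∀ x : R, pr (1 ⊗ₜ x) = 0 ↔ x ∈ D.lawKer := by
  obtain ⟨DF, hDF⟩ := law_detFun (K := K) D hD hm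
  obtain ⟨D', h1, h2⟩ := DF.exists_quot
  obtain ⟨t, c, hc, ⟨e⟩⟩ := h2.wedderburn
  have hker : ∀ y, e (Ideal.Quotient.mkₐ K DF.ker y) = 0 ↔ y ∈ DF.ker := fun y => by
    rw [map_eq_zero_iff e e.injective]; exact Ideal.Quotient.eq_zero_iff_mem
  refine ⟨t, c, hc, e.toAlgHom.comp (Ideal.Quotient.mkₐ K DF.ker), D'.transport e,
    e.surjective.comp Ideal.Quotient.mk_surjective, ?_, ?_, ?_, ?_⟩
  · intro m hm'
    apply e.symm.injective
    rw [map_zero]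
    apply h2
    intro y
    have := hm' (e y)
    simpa [DetFun.transport] using this
  · intro y
    rw [← hDF, ← h1]
    simp [DetFun.transport]
  · intro y
    refine (hker y).trans ?_
    rw [DF.mem_ker]; simp only [hDF]
  · intro x
    exact (hker _).trans (mem_lawKer_iff D DF hDF x).symm

end Pkg
end SDL

set_option linter.unusedSectionVars false
set_option linter.unusedSimpArgs false
namespace SDL
open SympDet

section CH
variable {k : Type u} [Field k] {M : Type u} [AddCommGroup M] [Module k M]

theorem chPoly_natural (P : PolyLaw k M) (e : M) {B B' : Type u} [CommRing B] [Algebra k B]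
    [CommRing B'] [Algebra k B'] (f : B →ₐ[k] B') (x : B ⊗[k] M) :
    (chPoly P e B x).map f.toRingHom = chPoly P e B' (LinearMap.rTensor M f.toLinearMap x) := by
  have := P.natural _ _ (Polynomial.mapAlgHom f) ((Polynomial.X : Polynomial B) ⊗ₜ[k] e -
      LinearMap.rTensor M (IsScalarTower.toAlgHom k B (Polynomial B)).toLinearMap x)
  refine this.trans ?_
  rw [chPoly, map_sub, bc_comp, bc_comp, LinearMap.rTensor_tmul]
  congr 2
  · simp
  · congr 1
    congr 2
    ext b
    simp [Polynomial.algebraMap_eq]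

theorem chPoly_eval (P : PolyLaw k M) (e : M) {B : Type u} [CommRing B] [Algebra k B]
    (x : B ⊗[k] M) (t : B) : (chPoly P e B x).eval t = P.toFun B (t ⊗ₜ e - x) := by
  have := P.natural _ _ ((Polynomial.aeval t : Polynomial B →ₐ[B] B).restrictScalars k)
    ((Polynomial.X : Polynomial B) ⊗ₜ[k] e -
      LinearMap.rTensor M (IsScalarTower.toAlgHom k B (Polynomial B)).toLinearMap x)
  rw [map_sub, bc_comp, LinearMap.rTensor_tmul] at this
  have h1 : ((Polynomial.aeval t : Polynomial B →ₐ[B] B).restrictScalars k) (chPoly P e B x) =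
    (chPoly P e B x).eval t := by simp [Polynomial.aeval_def, Polynomial.eval₂_eq_eval_map]
  rw [← h1]
  refine this.trans ?_
  rw [bc_id]
  · simp
  · intro b; simp

variable {R : Type u} [Ring R] [Algebra k R] (s : InvAlg k R)

theorem incl_bc {B B' : Type u} [CommRing B] [Algebra k B]
    [CommRing B'] [Algebra k B'] (f : B →ₐ[k] B') (x : B ⊗[k] s.plus) :
    LinearMap.rTensor R f.toLinearMap (s.incl B x) = s.incl B' (LinearMap.rTensor s.plus f.toLinearMap x) := by
  induction x with
  | zero => simp
  | add x y hx hy => simp only [map_add, hx, hy]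
  | tmul b m => simp [InvAlg.incl]

theorem chEval_natural (P : PolyLaw k s.plus) {B B' : Type u} [CommRing B] [Algebra k B]
    [CommRing B'] [Algebra k B'] (f : B →ₐ[k] B') (x : B ⊗[k] s.plus) :
    LinearMap.rTensor R f.toLinearMap (chEval s P B x) =
      chEval s P B' (LinearMap.rTensor s.plus f.toLinearMap x) := by
  rw [chEval, chEval, ← chPoly_natural, ← incl_bc]
  set p := chPoly P s.onePlus B x
  set y := s.incl B x
  induction p using Polynomial.induction_on' with
  | add p q hp hq => simp only [map_add, Polynomial.map_add, hp, hq]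
  | monomial n a =>
    rw [Polynomial.map_monomial, Polynomial.aeval_monomial, Polynomial.aeval_monomial,
      ← Algebra.smul_def, ← Algebra.smul_def, bc_smul]
    congr 1
    exact map_pow (Algebra.TensorProduct.map f (AlgHom.id k R)) y n

theorem incl_smul {B : Type u} [CommRing B] [Algebra k B] (b : B) (x : B ⊗[k] s.plus) :
    s.incl B (b • x) = b • s.incl B x := by
  induction x with
  | zero => simp
  | add x y hx hy => simp only [smul_add, map_add, hx, hy]
  | tmul b m => simp [InvAlg.incl, TensorProduct.smul_tmul']

theorem incl_one {B : Type u} [CommRing B] [Algebra k B] (b : B) :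
    s.incl B (b ⊗ₜ s.onePlus) = b • 1 := by
  simp [InvAlg.incl, InvAlg.onePlus, Algebra.TensorProduct.one_def, TensorProduct.smul_tmul']

theorem star_lT_mul {B : Type u} [CommRing B] [Algebra k B] (x y : B ⊗[k] R) :
    LinearMap.lTensor B s.star (x * y) = LinearMap.lTensor B s.star y * LinearMap.lTensor B s.star x := by
  induction x with
  | zero => simp
  | add x x' hx hy => simp only [add_mul, mul_add, map_add, hx, hy]
  | tmul b m =>
    induction y with
    | zero => simp
    | add x x' hx hy => simp only [add_mul, mul_add, map_add, hx, hy]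
    | tmul b' m' => simp [s.star_mul, mul_comm]

theorem star_lT_star {B : Type u} [CommRing B] [Algebra k B] (x : B ⊗[k] R) :
    LinearMap.lTensor B s.star (LinearMap.lTensor B s.star x) = x := by
  induction x with
  | zero => simp
  | add x x' hx hy => simp only [map_add, hx, hy]
  | tmul b m => simp [s.star_star]

theorem star_lT_one {B : Type u} [CommRing B] [Algebra k B] :
    LinearMap.lTensor B s.star (1 : B ⊗[k] R) = 1 := by
  simp [Algebra.TensorProduct.one_def, s.star_one]

theorem star_lT_smul {B : Type u} [CommRing B] [Algebra k B] (b : B) (x : B ⊗[k] R) :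
    LinearMap.lTensor B s.star (b • x) = b • LinearMap.lTensor B s.star x := by
  induction x with
  | zero => simp
  | add x y hx hy => simp only [smul_add, map_add, hx, hy]
  | tmul b m => simp [TensorProduct.smul_tmul']

theorem mem_plus (x : R) : x ∈ s.plus ↔ s.star x = x := by
  simp [InvAlg.plus, sub_eq_zero]

theorem star_lT_incl {B : Type u} [CommRing B] [Algebra k B] (x : B ⊗[k] s.plus) :
    LinearMap.lTensor B s.star (s.incl B x) = s.incl B x := by
  induction x with
  | zero => simp
  | add x y hx hy => simp only [map_add, hx, hy]
  | tmul b m => simp [InvAlg.incl, (mem_plus s m.1).1 m.2]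

/-- `x + x^*` lies in the image of `R⁺` -/
theorem add_star_incl {B : Type u} [CommRing B] [Algebra k B] (x : B ⊗[k] R) :
    ∃ y : B ⊗[k] s.plus, s.incl B y = x + LinearMap.lTensor B s.star x := by
  induction x with
  | zero => exact ⟨0, by simp⟩
  | add x x' hx hx' =>
    obtain ⟨y, hy⟩ := hx
    obtain ⟨z, hz⟩ := hx'
    exact ⟨y + z, by rw [map_add, hy, hz, map_add]; abel⟩
  | tmul b m =>
    refine ⟨b ⊗ₜ ⟨m + s.star m, ?_⟩, ?_⟩
    · rw [mem_plus, map_add, s.star_star, add_comm]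
    · simp [InvAlg.incl, TensorProduct.tmul_add]

variable {K : Type u} [Field K] [Algebra k K] [Infinite K] [IsAlgClosed K]
  {s} {d : ℕ} {D : PolyLaw k R} {P : PolyLaw k s.plus}

/-- the involution on the `K`-points modulo the kernel -/
theorem star_pkg (h2 : (2 : K) ≠ 0) (h : IsWeakSympDet s d D P) {W : Type*} [Ring W] [Algebra K W]
    (pr : K ⊗[k] R →ₐ[K] W) (E : DetFun K W (2 * d)) (hs : Function.Surjective pr)
    (hE : ∀ y, E.toFun (pr y) = D.toFun K y)
    (hk : ∀ y, pr y = 0 ↔ ∀ z, D.toFun K (z + y) = D.toFun K z) :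
    ∃ st : W →ₗ[K] W, (∀ y, st (pr y) = pr (LinearMap.lTensor K s.star y)) ∧
      (∀ x y, st (x * y) = st y * st x) ∧ (∀ x, st (st x) = x) ∧ st 1 = 1 ∧ SqHyp E st := by
  obtain ⟨τ, hτ⟩ := LinearMap.exists_rightInverse_of_surjective pr.toLinearMap (LinearMap.range_eq_top.2 hs)
  have hτ' : ∀ x, pr (τ x) = x := fun x => LinearMap.congr_fun hτ x
  let stK : K ⊗[k] R →ₗ[K] K ⊗[k] R :=
    { toFun := LinearMap.lTensor K s.star
      map_add' := map_add _
      map_smul' := star_lT_smul s }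
  have hstK : ∀ y, stK y = LinearMap.lTensor K s.star y := fun _ => rfl
  have hstable : ∀ y, pr y = 0 → pr (stK y) = 0 := by
    intro y hy
    rw [hk] at hy ⊢
    intro z
    rw [← h.starInv, map_add, hstK, star_lT_star, hy, h.starInv]
  let st : W →ₗ[K] W := pr.toLinearMap ∘ₗ stK ∘ₗ τ
  have hst : ∀ y, st (pr y) = pr (stK y) := by
    intro y
    have : pr (stK (τ (pr y) - y)) = 0 := hstable _ (by rw [map_sub, hτ', sub_self])
    rw [map_sub, map_sub, sub_eq_zero] at this
    exact this
  have hss : ∀ x, st (st x) = x := by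
    intro x
    obtain ⟨x, rfl⟩ := hs x
    rw [hst, hst, hstK, hstK, star_lT_star]
  have hlift : ∀ a, st a = a → ∃ z : K ⊗[k] s.plus, pr (s.incl K z) = a := by
    intro a ha
    obtain ⟨x, rfl⟩ := hs a
    obtain ⟨y, hy⟩ := add_star_incl s x
    refine ⟨(2⁻¹ : K) • y, ?_⟩
    rw [incl_smul, hy, map_smul, map_add, ← hstK, ← hst, ha, ← two_smul K, smul_smul,
      inv_mul_cancel₀ h2, one_smul]
  refine ⟨st, hst, ?_, hss, ?_, ?_⟩
  · intro x y
    obtain ⟨x, rfl⟩ := hs x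
    obtain ⟨y, rfl⟩ := hs y
    rw [← map_mul, hst, hst, hst, hstK, star_lT_mul, map_mul, hstK, hstK]
  · rw [← map_one pr, hst, hstK, star_lT_one]
  · intro a b ha hb
    obtain ⟨x, rfl⟩ := hlift a ha
    obtain ⟨y, rfl⟩ := hlift b hb
    obtain ⟨p, hp⟩ := law_poly P ![x, y]
    refine ⟨p.aeval ![Polynomial.C 1, Polynomial.X], fun t => ?_⟩
    have : (p.aeval ![Polynomial.C 1, Polynomial.X]).eval t = MvPolynomial.eval ![1, t] p := by
      rw [MvPolynomial.aeval_def, ← Polynomial.coe_evalRingHom, MvPolynomial.hom_eval₂, ← MvPolynomial.eval₂_id]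
      congr 1
      · ext; simp
      · ext i; fin_cases i <;> simp
    rw [this, hp, h.sq, ← map_smul, ← map_add, hE]
    simp [Fin.sum_univ_two, incl_smul]

/-- Cayley--Hamilton on `K`-points. -/
theorem chEval_K (h2 : (2 : K) ≠ 0) (h : IsWeakSympDet s d D P) {W : Type*} [Ring W] [Algebra K W]
    (pr : K ⊗[k] R →ₐ[K] W) (E : DetFun K W (2 * d)) (hs : Function.Surjective pr) (hF : E.Faithful)
    (hE : ∀ y, E.toFun (pr y) = D.toFun K y)
    (hk : ∀ y, pr y = 0 ↔ ∀ z, D.toFun K (z + y) = D.toFun K z) (y : K ⊗[k] s.plus) :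
    pr (chEval s P K y) = 0 := by
  obtain ⟨st, h3, hmul, hst, h1, hsq⟩ := star_pkg h2 h pr E hs hE hk
  rw [chEval, ← Polynomial.aeval_algHom_apply]
  apply sym_cayley h2 hF hsq hmul hst h1
  · rw [h3, star_lT_incl]
  · intro t
    rw [chPoly_eval, h.sq, map_sub, incl_one, ← hE, map_sub, map_smul, map_one]

theorem tensorCoeff_exp {n : ℕ} (z : MvPolynomial (Fin n) k ⊗[k] R) :
    ∃ F0 : Finset (Fin n →₀ ℕ), ∀ F, F0 ⊆ F →
      z = ∑ α ∈ F, (MvPolynomial.monomial α (1 : k)) ⊗ₜ tensorCoeff α z := by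
  classical
  induction z with
  | zero => exact ⟨∅, fun F _ => by simp⟩
  | add x y hx hy =>
    obtain ⟨F1, h1⟩ := hx
    obtain ⟨F2, h2⟩ := hy
    refine ⟨F1 ∪ F2, fun F hF => ?_⟩
    simp only [map_add, TensorProduct.tmul_add, Finset.sum_add_distrib]
    rw [← h1 F (Finset.union_subset_left hF), ← h2 F (Finset.union_subset_right hF)]
  | tmul p r =>
    refine ⟨p.support, fun F hF => ?_⟩
    have : ∀ α, (MvPolynomial.monomial α (1 : k)) ⊗ₜ[k] tensorCoeff α (p ⊗ₜ[k] r) =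
        (MvPolynomial.monomial α (p.coeff α)) ⊗ₜ[k] r := by
      intro α
      simp only [tensorCoeff, LinearMap.comp_apply, LinearMap.rTensor_tmul, mvLcoeff,
        LinearMap.coe_mk, AddHom.coe_mk, LinearEquiv.coe_coe, TensorProduct.lid_tmul]
      rw [← TensorProduct.smul_tmul, MvPolynomial.smul_monomial, smul_eq_mul, mul_one]
    simp only [this]
    rw [← TensorProduct.sum_tmul]
    congr 1
    conv_lhs => rw [p.as_sum]
    apply Finset.sum_subset hF
    intro α _ hα
    rw [MvPolynomial.notMem_support_iff.1 hα, map_zero]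

variable (K) in
/-- a weak symplectic determinant law over a field with `2` invertible is symplectic -/
theorem weak_isSymp_aux (h2 : (2 : K) ≠ 0) (h : IsWeakSympDet s d D P) : IsSympDet s d D P := by
  classical
  refine ⟨h, ?_⟩
  obtain ⟨t, c, hc, pr, E, hs, hF, hE, hk, hk'⟩ := law_pkg (K := K) D h.homog h.mult
  let ψ : R →+* ((i : Fin t) → Matrix (Fin (c i)) (Fin (c i)) K) :=
    pr.toRingHom.comp (Algebra.TensorProduct.includeRight : R →ₐ[k] K ⊗[k] R).toRingHom
  have hψ : ∀ x, ψ x = pr (1 ⊗ₜ x) := fun x => rfl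
  suffices chIdeal s P ≤ TwoSidedIdeal.ker ψ by
    intro y hy
    have := this hy
    rw [TwoSidedIdeal.mem_ker, hψ, hk'] at this
    exact this
  rw [chIdeal, TwoSidedIdeal.span_le]
  rintro y ⟨n, r, α, rfl⟩
  rw [SetLike.mem_coe, TwoSidedIdeal.mem_ker, hψ]
  set z := chEval s P (MvPolynomial (Fin n) k)
        (∑ i : Fin n, (MvPolynomial.X i : MvPolynomial (Fin n) k) ⊗ₜ[k] r i) with hz
  obtain ⟨F0, hF0⟩ := tensorCoeff_exp z
  have := vl_mv (K := K) ⊥ (insert α F0) (fun α => pr (1 ⊗ₜ tensorCoeff α z)) (fun u => ?_) α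
    (Finset.mem_insert_self _ _)
  · simpa using this
  · rw [Submodule.mem_bot]
    have e1 : pr (LinearMap.rTensor R (MvPolynomial.aeval u : MvPolynomial (Fin n) k →ₐ[k] K).toLinearMap z) = 0 := by
      rw [hz, chEval_natural]
      exact chEval_K h2 h pr E hs hF hE hk _
    rw [← e1]
    conv_rhs => rw [hF0 (insert α F0) (Finset.subset_insert _ _)]
    rw [map_sum, map_sum]
    refine Finset.sum_congr rfl fun β _ => ?_
    rw [LinearMap.rTensor_tmul, ← map_smul, TensorProduct.smul_tmul', smul_eq_mul, mul_one,
      AlgHom.toLinearMap_apply, MvPolynomial.aeval_monomial, map_one, one_mul, Finsupp.prod_fintype]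
    intro i; simp

theorem weak_isSymp (h2 : (2 : k) ≠ 0) (h : IsWeakSympDet s d D P) : IsSympDet s d D P := by
  refine weak_isSymp_aux (AlgebraicClosure k) ?_ h
  have := (map_ne_zero (algebraMap k (AlgebraicClosure k))).2 h2
  rwa [map_ofNat] at this

end CH
end SDL

set_option linter.unusedSectionVars false
set_option linter.unusedSimpArgs false
namespace SDL
open SympDet

section Comb
variable {k : Type u} [Field k] {M M' : Type u} [AddCommGroup M] [Module k M] [AddCommGroup M'] [Module k M']

theorem bc_lT {B B' : Type u} [CommRing B] [Algebra k B] [CommRing B'] [Algebra k B']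
    (f : B →ₐ[k] B') (L : M' →ₗ[k] M) (x : B ⊗[k] M') :
    LinearMap.rTensor M f.toLinearMap (LinearMap.lTensor B L x) =
      LinearMap.lTensor B' L (LinearMap.rTensor M' f.toLinearMap x) := by
  rw [← LinearMap.comp_apply, ← LinearMap.comp_apply, LinearMap.rTensor_comp_lTensor,
    LinearMap.lTensor_comp_rTensor]

theorem lT_smul {B : Type u} [CommRing B] [Algebra k B] (L : M' →ₗ[k] M) (b : B) (x : B ⊗[k] M') :
    LinearMap.lTensor B L (b • x) = b • LinearMap.lTensor B L x := by
  induction x with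
  | zero => simp
  | add x y hx hy => simp only [smul_add, map_add, hx, hy]
  | tmul b m => simp [TensorProduct.smul_tmul']

theorem lT_comp {M'' : Type u} [AddCommGroup M''] [Module k M''] {B : Type u} [CommRing B] [Algebra k B]
    (L : M' →ₗ[k] M) (L' : M'' →ₗ[k] M') (x : B ⊗[k] M'') :
    LinearMap.lTensor B L (LinearMap.lTensor B L' x) = LinearMap.lTensor B (L ∘ₗ L') x := by
  rw [LinearMap.lTensor_comp]; rfl

theorem lT_id {B : Type u} [CommRing B] [Algebra k B]
    (L : M →ₗ[k] M) (hL : ∀ m, L m = m) (x : B ⊗[k] M) :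
    LinearMap.lTensor B L x = x := by
  have : L = LinearMap.id := LinearMap.ext hL
  rw [this, LinearMap.lTensor_id]; rfl

/-- affine pullback of a law: `x ↦ Q(L x + e)` -/
noncomputable def shiftLaw (Q : PolyLaw k M) (L : M' →ₗ[k] M) (e : M) : PolyLaw k M' where
  toFun B _ _ x := Q.toFun B (LinearMap.lTensor B L x + 1 ⊗ₜ e)
  natural B B' _ _ _ _ f x := by
    rw [Q.natural, map_add, bc_lT, LinearMap.rTensor_tmul]; simp

/-- pullback of a law -/
noncomputable def compLaw (Q : PolyLaw k M) (L : M' →ₗ[k] M) : PolyLaw k M' where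
  toFun B _ _ x := Q.toFun B (LinearMap.lTensor B L x)
  natural B B' _ _ _ _ f x := by rw [Q.natural, bc_lT]

/-- finite product of laws -/
noncomputable def prodLaw {t : ℕ} (Q : Fin t → PolyLaw k M) : PolyLaw k M where
  toFun B _ _ x := ∏ i, (Q i).toFun B x
  natural B B' _ _ _ _ f x := by
    rw [map_prod]; exact Finset.prod_congr rfl fun i _ => (Q i).natural _ _ f x

theorem law_congr_ker {R S : Type u} [Ring R] [Algebra k R] [Ring S] [Algebra k S] (D : PolyLaw k R)
    (L : R →ₗ[k] R) (hL : ∀ x, L x - x ∈ D.lawKer)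
    {B : Type u} [CommRing B] [Algebra k B] (x : B ⊗[k] R) :
    D.toFun B (LinearMap.lTensor B L x) = D.toFun B x := by
  have key : ∀ y, D.toFun B ((LinearMap.lTensor B L x - x) + y) = D.toFun B y := by
    induction x with
    | zero => simp
    | add x x' hx hx' =>
      intro y
      have : LinearMap.lTensor B L (x + x') - (x + x') + y =
        (LinearMap.lTensor B L x - x) + ((LinearMap.lTensor B L x' - x') + y) := by
        rw [map_add]; abel
      rw [this, hx, hx']
    | tmul b m =>
      intro y
      rw [LinearMap.lTensor_tmul, ← TensorProduct.tmul_sub]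
      exact hL m B b y
  have := key x
  rwa [sub_add_cancel] at this

theorem lT_algHom_mul {R S : Type u} [Ring R] [Algebra k R] [Ring S] [Algebra k S] (θ : R →ₐ[k] S)
    {B : Type u} [CommRing B] [Algebra k B] (x y : B ⊗[k] R) :
    LinearMap.lTensor B θ.toLinearMap (x * y) =
      LinearMap.lTensor B θ.toLinearMap x * LinearMap.lTensor B θ.toLinearMap y :=
  map_mul (Algebra.TensorProduct.map (AlgHom.id k B) θ) x y

theorem lT_algHom_one {R S : Type u} [Ring R] [Algebra k R] [Ring S] [Algebra k S] (θ : R →ₐ[k] S)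
    {B : Type u} [CommRing B] [Algebra k B] :
    LinearMap.lTensor B θ.toLinearMap (1 : B ⊗[k] R) = 1 :=
  map_one (Algebra.TensorProduct.map (AlgHom.id k B) θ)

end Comb

section Descend
variable {k : Type u} [Field k] {R : Type u} [Ring R] [Algebra k R] {s : InvAlg k R}
  {d : ℕ} {D : PolyLaw k R} {P : PolyLaw k s.plus}

theorem descend (h2 : (2 : k) ≠ 0) (h : IsWeakSympDet s d D P) {S : Type u} [Ring S] [Algebra k S]
    (θ : R →ₐ[k] S) (hs : Function.Surjective θ) (hk : ∀ x, θ x = 0 → x ∈ D.lawKer)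
    (hstar : ∀ x, θ x = 0 → θ (s.star x) = 0) :
    ∃ (sS : InvAlg k S) (D' : PolyLaw k S) (P' : PolyLaw k sS.plus) (θp : s.plus →ₗ[k] sS.plus),
      (∀ x, θ (s.star x) = sS.star (θ x)) ∧ (∀ y, (θp y : S) = θ (y : R)) ∧
      IsWeakSympDet sS d D' P' ∧
      (∀ (B : Type u) [CommRing B] [Algebra k B] (x : B ⊗[k] R),
        D.toFun B x = D'.toFun B (LinearMap.lTensor B θ.toLinearMap x)) ∧
      (∀ (B : Type u) [CommRing B] [Algebra k B] (y : B ⊗[k] s.plus),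
        P.toFun B y = P'.toFun B (LinearMap.lTensor B θp y)) := by
  obtain ⟨τ, hτ⟩ := LinearMap.exists_rightInverse_of_surjective θ.toLinearMap (LinearMap.range_eq_top.2 hs)
  have hτ' : ∀ x, θ (τ x) = x := fun x => LinearMap.congr_fun hτ x
  have hst : ∀ x, θ (s.star (τ (θ x))) = θ (s.star x) := by
    intro x
    have : θ (s.star (τ (θ x) - x)) = 0 := hstar _ (by rw [map_sub, hτ', sub_self])
    rwa [map_sub, map_sub, sub_eq_zero] at this
  let sS : InvAlg k S :=
    { star := θ.toLinearMap ∘ₗ s.star ∘ₗ τ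
      star_one := by
        change θ (s.star (τ 1)) = 1
        rw [← map_one θ, hst, s.star_one]
      star_mul := fun x y => by
        change θ (s.star (τ (x * y))) = θ (s.star (τ y)) * θ (s.star (τ x))
        obtain ⟨x, rfl⟩ := hs x
        obtain ⟨y, rfl⟩ := hs y
        rw [← map_mul, hst, hst, hst, s.star_mul, map_mul]
      star_star := fun x => by
        change θ (s.star (τ (θ (s.star (τ x))))) = x
        rw [hst, s.star_star, hτ'] }
  have hc : ∀ x, θ (s.star x) = sS.star (θ x) := fun x => (hst x).symm
  let θp : s.plus →ₗ[k] sS.plus := (θ.toLinearMap ∘ₗ s.plus.subtype).codRestrict sS.plus (fun y => by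
    rw [mem_plus]
    change sS.star (θ y) = θ y
    rw [← hc, (mem_plus s _).1 y.2])
  have hθp : ∀ y, (θp y : S) = θ (y : R) := fun y => rfl
  let τp : sS.plus →ₗ[k] s.plus :=
    ((2⁻¹ : k) • (τ + s.star ∘ₗ τ) ∘ₗ sS.plus.subtype).codRestrict s.plus (fun y => by
      rw [mem_plus]
      simp [s.star_star, add_comm])
  have hτp : ∀ y : sS.plus, θ (τp y : R) = y := by
    intro y
    change θ ((2⁻¹ : k) • (τ y + s.star (τ y))) = y
    rw [map_smul, map_add, hc, hτ', (mem_plus sS _).1 y.2, ← two_smul k, smul_smul, inv_mul_cancel₀ h2,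
      one_smul]
  have hD : ∀ (B : Type u) [CommRing B] [Algebra k B] (x : B ⊗[k] R),
        D.toFun B x = (compLaw D τ).toFun B (LinearMap.lTensor B θ.toLinearMap x) := by
    intro B _ _ x
    change _ = D.toFun B (LinearMap.lTensor B τ (LinearMap.lTensor B θ.toLinearMap x))
    rw [lT_comp, law_congr_ker (S := S) D]
    intro x
    apply hk
    simp [hτ']
  have hsurjB : ∀ (B : Type u) [CommRing B] [Algebra k B] (x : B ⊗[k] S),
      ∃ y, LinearMap.lTensor B θ.toLinearMap y = x := by
    intro B _ _ x
    exact ⟨LinearMap.lTensor B τ x, by rw [lT_comp, lT_id]; exact hτ'⟩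
  have hinclB : ∀ (B : Type u) [CommRing B] [Algebra k B] (y : B ⊗[k] sS.plus),
      LinearMap.lTensor B θ.toLinearMap (s.incl B (LinearMap.lTensor B τp y)) = sS.incl B y := by
    intro B _ _ y
    rw [InvAlg.incl, InvAlg.incl, lT_comp, lT_comp]
    congr 2
    ext y
    exact hτp y
  have hincl' : ∀ (B : Type u) [CommRing B] [Algebra k B] (y : B ⊗[k] s.plus),
      LinearMap.lTensor B θ.toLinearMap (s.incl B y) = sS.incl B (LinearMap.lTensor B θp y) := by
    intro B _ _ y
    rw [InvAlg.incl, InvAlg.incl, lT_comp, lT_comp]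
    rfl
  -- `P` is `1` at the lift of `1`
  have hray : ∀ m : s.plus, θ (m : R) = 0 → P.toFun k (1 ⊗ₜ (s.onePlus + m)) = 1 := by
    intro m hm
    have := fam_sqrt h2 (N := 1)
      (fun B _ _ b => P.toFun B (1 ⊗ₜ s.onePlus + b 0 ⊗ₜ m)) (fun B _ _ b => 1)
      (fun B B' _ _ _ _ f b => by rw [P.natural, map_add]; simp)
      (fun B B' _ _ _ _ f b => by simp)
      (fun B _ _ b => by
        rw [h.sq, map_add, incl_one, one_smul, add_comm, one_pow]
        have := hk _ hm B (b 0) 1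
        rw [(h.mult B).1] at this
        exact this) 0 (by simpa using h.one) one_ne_zero k 1
    simpa [TensorProduct.tmul_add] using this
  have hP : ∀ (B : Type u) [CommRing B] [Algebra k B] (y : B ⊗[k] s.plus),
        P.toFun B y = (compLaw P τp).toFun B (LinearMap.lTensor B θp y) := by
    intro B _ _ y
    have key := law_sqrt h2 (compLaw P (τp ∘ₗ θp)) P (fun B _ _ x => ?_) s.onePlus ?_ ?_ B y
    · rw [← key]
      change _ = P.toFun B (LinearMap.lTensor B τp (LinearMap.lTensor B θp y))
      rw [lT_comp]; rfl
    · change P.toFun B (LinearMap.lTensor B (τp ∘ₗ θp) x) ^ 2 = _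
      rw [h.sq, h.sq, hD, ← lT_comp, hinclB, ← hincl', ← hD]
    · rw [h.one]
      change P.toFun k (LinearMap.lTensor k (τp ∘ₗ θp) (1 ⊗ₜ[k] s.onePlus)) = 1
      have := hray (τp (θp s.onePlus) - s.onePlus) (by
        rw [Submodule.coe_sub, map_sub, hτp, hθp, sub_self])
      rw [add_sub_cancel] at this
      rw [LinearMap.lTensor_tmul]; exact this
    · rw [h.one]; exact one_ne_zero
  refine ⟨sS, compLaw D τ, compLaw P τp, θp, hc, hθp, ?_, hD, hP⟩
  refine ⟨?_, ?_, ?_, ?_, ?_, ?_⟩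
  · intro B _ _
    refine ⟨?_, fun x y => ?_⟩
    · rw [← lT_algHom_one θ, ← hD, (h.mult B).1]
    · obtain ⟨x, rfl⟩ := hsurjB B x
      obtain ⟨y, rfl⟩ := hsurjB B y
      rw [← lT_algHom_mul, ← hD, ← hD, ← hD, (h.mult B).2]
  · intro B _ _ b x
    change D.toFun B (LinearMap.lTensor B τ (b • x)) = _ * D.toFun B _
    rw [lT_smul, h.homog]
  · intro B _ _ x
    obtain ⟨x, rfl⟩ := hsurjB B x
    rw [← hD, lT_comp]
    have : sS.star ∘ₗ θ.toLinearMap = θ.toLinearMap ∘ₗ s.star := LinearMap.ext fun x => (hc x).symm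
    rw [this, ← lT_comp, ← hD, h.starInv]
  · intro B _ _ b x
    change P.toFun B (LinearMap.lTensor B τp (b • x)) = _ * P.toFun B _
    rw [lT_smul, h.homogP]
  · intro B _ _ x
    change P.toFun B (LinearMap.lTensor B τp x) ^ 2 = _
    rw [h.sq, hD, hinclB]
  · have := hP k (1 ⊗ₜ s.onePlus)
    rw [h.one, LinearMap.lTensor_tmul] at this
    have e : θp s.onePlus = sS.onePlus := Subtype.ext (map_one θ)
    rw [e] at this
    exact this.symm

end Descend
end SDL

set_option linter.unusedSectionVars false
set_option linter.unusedSimpArgs false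
namespace SDL
open SympDet

section Split
variable {k : Type u} [Field k] {S : Type u} [Ring S] [Algebra k S] {s : InvAlg k S}
  {d : ℕ} {D : PolyLaw k S} {P : PolyLaw k s.plus}

theorem scalar_pow (h : IsWeakSympDet s d D P) (c : S) (hc : c * c = c) (hs : s.star c = c) :
    ∃ d' : ℕ, ∀ (B : Type u) [CommRing B] [Algebra k B] (b : B),
      D.toFun B (b ⊗ₜ c + 1 ⊗ₜ (1 - c)) = b ^ (2 * d') := by
  let K := AlgebraicClosure k
  obtain ⟨DF, hDF⟩ := law_detFun (K := K) D h.homog h.mult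
  have he : IsIdempotentElem ((1 : K) ⊗ₜ[k] c) := by
    simp [IsIdempotentElem, hc]
  have hr : ∀ (B : Type u) [CommRing B] [Algebra k B] (b : B),
      D.toFun B (b ⊗ₜ c + 1 ⊗ₜ (1 - c)) = b ^ (DF.rk ((1 : K) ⊗ₜ[k] c)) := by
    intro B _ _ b
    exact fam_ext K (N := 1) (fun B _ _ b => D.toFun B (b 0 ⊗ₜ c + 1 ⊗ₜ (1 - c)))
      (fun B _ _ b => b 0 ^ (DF.rk ((1 : K) ⊗ₜ[k] c)))
      (fun B B' _ _ _ _ f b => by rw [D.natural, map_add]; simp)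
      (fun B B' _ _ _ _ f b => by simp)
      (fun t => by
        rw [← DF.rk_spec he, hDF, TensorProduct.smul_tmul', smul_eq_mul, mul_one,
          TensorProduct.tmul_sub, add_comm]; rfl) B (fun _ => b)
  have hm : c ∈ s.plus := (mem_plus s _).2 hs
  have hm' : 1 - c ∈ s.plus := (mem_plus s _).2 (by rw [map_sub, s.star_one, hs])
  have := h.sq (Polynomial k) ((Polynomial.X) ⊗ₜ ⟨c, hm⟩ + 1 ⊗ₜ ⟨1 - c, hm'⟩)
  rw [map_add] at this
  have e := (hr (Polynomial k) Polynomial.X)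
  have e2 : s.incl (Polynomial k) (Polynomial.X ⊗ₜ ⟨c, hm⟩) + s.incl (Polynomial k) (1 ⊗ₜ ⟨1 - c, hm'⟩) =
    Polynomial.X ⊗ₜ c + 1 ⊗ₜ (1 - c) := rfl
  rw [e2, e] at this
  have h3 := congrArg Polynomial.natDegree this
  rw [Polynomial.natDegree_pow, Polynomial.natDegree_X_pow] at h3
  exact ⟨_, fun B _ _ b => by rw [hr, ← h3]⟩

theorem lT_jmul {T : Type u} [Ring T] [Algebra k T] (j : T →ₗ[k] S)
    (hj : ∀ x y, j (x * y) = j x * j y) {B : Type u} [CommRing B] [Algebra k B] (x y : B ⊗[k] T) :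
    LinearMap.lTensor B j (x * y) = LinearMap.lTensor B j x * LinearMap.lTensor B j y := by
  induction x with
  | zero => simp
  | add x x' hx hx' => simp only [add_mul, map_add, hx, hx']
  | tmul b m =>
    induction y with
    | zero => simp
    | add x x' hx hx' => simp only [mul_add, map_add, hx, hx']
    | tmul b' m' => simp [hj]

theorem lT_jz {T : Type u} [Ring T] [Algebra k T] (j : T →ₗ[k] S)
    (hj : ∀ x y, j (x * y) = j x * j y) {B : Type u} [CommRing B] [Algebra k B] (x : B ⊗[k] T) :
    LinearMap.lTensor B j x * (1 ⊗ₜ (1 - j 1)) = 0 ∧ (1 ⊗ₜ (1 - j 1)) * LinearMap.lTensor B j x = 0 := by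
  induction x with
  | zero => simp
  | add x x' hx hx' => simp only [mul_add, add_mul, map_add, hx, hx', add_zero, and_self]
  | tmul b m =>
    simp [mul_sub, sub_mul, ← hj]

theorem factor_law (h2 : (2 : k) ≠ 0) (h : IsWeakSympDet s d D P) {T : Type u} [Ring T] [Algebra k T]
    (j : T →ₗ[k] S) (hj : ∀ x y, j (x * y) = j x * j y) (sT : InvAlg k T)
    (hs : ∀ x, j (sT.star x) = s.star (j x)) :
    ∃ (d' : ℕ) (D' : PolyLaw k T) (P' : PolyLaw k sT.plus), IsWeakSympDet sT d' D' P' ∧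
      (∀ (B : Type u) [CommRing B] [Algebra k B] (x : B ⊗[k] T),
        D'.toFun B x = D.toFun B (LinearMap.lTensor B j x + 1 ⊗ₜ (1 - j 1))) ∧
      (∀ (B : Type u) [CommRing B] [Algebra k B] (b : B),
      D.toFun B (b ⊗ₜ j 1 + 1 ⊗ₜ (1 - j 1)) = b ^ (2 * d')) := by
  have hc : j 1 * j 1 = j 1 := by rw [← hj, one_mul]
  have hcs : s.star (j 1) = j 1 := by rw [← hs, sT.star_one]
  obtain ⟨d', hd'⟩ := scalar_pow h (j 1) hc hcs
  have hm' : 1 - j 1 ∈ s.plus := (mem_plus s _).2 (by rw [map_sub, s.star_one, hcs])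
  let jp : sT.plus →ₗ[k] s.plus := (j ∘ₗ sT.plus.subtype).codRestrict s.plus (fun y => by
    rw [mem_plus]
    change s.star (j y) = j y
    rw [← hs, (mem_plus sT _).1 y.2])
  let D' := shiftLaw D j (1 - j 1)
  let P' := shiftLaw P jp ⟨1 - j 1, hm'⟩
  have hD' : ∀ (B : Type u) [CommRing B] [Algebra k B] (x : B ⊗[k] T),
        D'.toFun B x = D.toFun B (LinearMap.lTensor B j x + 1 ⊗ₜ (1 - j 1)) := fun B _ _ x => rfl
  have hsq : ∀ (B : Type u) [CommRing B] [Algebra k B] (x : B ⊗[k] sT.plus),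
      P'.toFun B x ^ 2 = D'.toFun B (sT.incl B x) := by
    intro B _ _ x
    change P.toFun B _ ^ 2 = D.toFun B _
    rw [h.sq, map_add, InvAlg.incl, InvAlg.incl, lT_comp, lT_comp]
    rfl
  have hmult : D'.IsMult := by
    intro B _ _
    refine ⟨?_, fun x y => ?_⟩
    · rw [hD', Algebra.TensorProduct.one_def, LinearMap.lTensor_tmul, ← TensorProduct.tmul_add,
        add_sub_cancel, ← Algebra.TensorProduct.one_def, (h.mult B).1]
    · rw [hD', hD', hD', ← (h.mult B).2, mul_add, add_mul, add_mul, (lT_jz j hj x).1, (lT_jz j hj y).2,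
        lT_jmul j hj]
      have hz : ((1 : B) ⊗ₜ[k] (1 - j 1)) * (1 ⊗ₜ[k] (1 - j 1)) = 1 ⊗ₜ[k] (1 - j 1) := by
        rw [Algebra.TensorProduct.tmul_mul_tmul, one_mul]
        simp [mul_sub, sub_mul, hc]
      rw [hz, add_zero, zero_add]
  have hhom : D'.IsHomog (2 * d') := by
    intro B _ _ b x
    have : b • x = (b • (1 : B ⊗[k] T)) * x := by rw [smul_mul_assoc, one_mul]
    rw [this, (hmult B).2]
    congr 1
    rw [hD', ← hd', Algebra.TensorProduct.one_def, TensorProduct.smul_tmul', LinearMap.lTensor_tmul,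
      smul_eq_mul, mul_one]
  have hone : P'.toFun k (1 ⊗ₜ sT.onePlus) = 1 := by
    change P.toFun k (LinearMap.lTensor k jp _ + _) = 1
    rw [LinearMap.lTensor_tmul, ← TensorProduct.tmul_add]
    refine Eq.trans ?_ h.one
    congr 2
    apply Subtype.ext
    change j 1 + (1 - j 1) = 1
    abel
  refine ⟨d', D', P', ⟨hmult, hhom, ?_, ?_, hsq, hone⟩, hD', hd'⟩
  · intro B _ _ x
    rw [hD', hD', lT_comp, show j ∘ₗ sT.star = s.star ∘ₗ j from LinearMap.ext hs, ← lT_comp,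
      ← h.starInv B (LinearMap.lTensor B j x + _), map_add, LinearMap.lTensor_tmul, map_sub, s.star_one, hcs]
  · intro B _ _ b x
    obtain ⟨N, β, m, rfl⟩ := tensor_exists x
    let v : (Fin (N + 1) → sT.plus) := Fin.cons sT.onePlus m
    have := fam_sqrt h2 (N := N + 2)
      (fun B _ _ b => P'.toFun B (b 0 • ∑ i : Fin (N + 1), b i.succ ⊗ₜ[k] v i))
      (fun B _ _ b => b 0 ^ d' * P'.toFun B (∑ i : Fin (N + 1), b i.succ ⊗ₜ[k] v i))
      (fun B B' _ _ _ _ f b => by rw [P'.natural, bc_smul, bc_sum])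
      (fun B B' _ _ _ _ f b => by rw [map_mul, map_pow, P'.natural, bc_sum])
      (fun B _ _ b => by
        rw [mul_pow, hsq, hsq, incl_smul, hhom, ← pow_mul, mul_comm 2 d'])
      (Fin.cons 1 (Fin.cons 1 0)) (by simp [Fin.sum_univ_succ])
      (by simp [Fin.sum_univ_succ, v, hone]) B (Fin.cons b (Fin.cons 0 β))
    simpa [Fin.sum_univ_succ, v] using this

theorem prod_factor {W N : Type*} [Ring W] [CommMonoid N] (δ : W → N) (h1 : δ 1 = 1)
    (hm : ∀ x y, δ (x * y) = δ x * δ y) {ι : Type*} (c : ι → W)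
    (ho : ∀ i j, i ≠ j → c i * c j = 0) (x : W) (hx : ∀ i, c i * x = x * c i) (F : Finset ι) :
    δ ((∑ i ∈ F, c i) * x + (1 - ∑ i ∈ F, c i)) = ∏ i ∈ F, δ (c i * x + (1 - c i)) := by
  classical
  induction F using Finset.induction_on with
  | empty => simp [h1]
  | insert a F ha ih =>
    rw [Finset.sum_insert ha, Finset.prod_insert ha, ← ih, ← hm]
    have e1 : c a * ∑ i ∈ F, c i = 0 := by
      rw [Finset.mul_sum]; exact Finset.sum_eq_zero fun i hi => ho _ _ (by rintro rfl; exact ha hi)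
    have e2 : ∀ y, c a * ((∑ i ∈ F, c i) * y) = 0 := fun y => by rw [← mul_assoc, e1, zero_mul]
    congr 1
    generalize (∑ i ∈ F, c i) = C at *
    have e3 : c a * x * (C * x) = 0 := by rw [hx, mul_assoc, e2, mul_zero]
    have e4 : c a * x * C = 0 := by rw [hx, mul_assoc, e1, mul_zero]
    simp only [mul_add, add_mul, mul_sub, sub_mul, e1, e2, e3, e4, mul_one, one_mul]
    abel

theorem split_laws (h2 : (2 : k) ≠ 0) (h : IsWeakSympDet s d D P) {t : ℕ} (T : Fin t → Type u)
    [∀ i, Ring (T i)] [∀ i, Algebra k (T i)]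
    (q : ∀ i, S →ₐ[k] T i)
    (j : ∀ i, T i →ₗ[k] S) (hj : ∀ i x y, j i (x * y) = j i x * j i y)
    (hjq : ∀ i x, j i (q i x) = j i 1 * x) (hjq' : ∀ i x, j i (q i x) = x * j i 1)
    (ho : ∀ a b, a ≠ b → j a 1 * j b 1 = 0) (hsum : ∑ i, j i 1 = 1)
    (sT : ∀ i, InvAlg k (T i))
    (hs : ∀ i x, j i ((sT i).star x) = s.star (j i x))
    (qp : ∀ i, s.plus →ₗ[k] (sT i).plus) (hqp : ∀ i y, (qp i y : T i) = q i (y : S)) :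
    ∃ (di : Fin t → ℕ) (D' : ∀ i, PolyLaw k (T i)) (P' : ∀ i, PolyLaw k (sT i).plus),
      ∑ i, di i = d ∧ (∀ i, IsWeakSympDet (sT i) (di i) (D' i) (P' i)) ∧
      (∀ (B : Type u) [CommRing B] [Algebra k B] (x : B ⊗[k] S),
        D.toFun B x = ∏ i, (D' i).toFun B (LinearMap.lTensor B (q i).toLinearMap x)) ∧
      (∀ (B : Type u) [CommRing B] [Algebra k B] (y : B ⊗[k] s.plus),
        P.toFun B y = ∏ i, (P' i).toFun B (LinearMap.lTensor B (qp i) y)) := by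
  choose di D' P' hw hD' hd' using fun i => factor_law h2 h (j i) (hj i) (sT i) (hs i)
  have hfac : ∀ (B : Type u) [CommRing B] [Algebra k B] (x : B ⊗[k] S),
        D.toFun B x = ∏ i, D.toFun B ((1 ⊗ₜ j i 1) * x + 1 ⊗ₜ (1 - j i 1)) := by
    intro B _ _ x
    have hx : ∀ i, ((1 : B) ⊗ₜ[k] j i 1) * x = x * (1 ⊗ₜ j i 1) := by
      intro i
      induction x with
      | zero => simp
      | add x y hx hy => rw [mul_add, add_mul, hx, hy]
      | tmul b m => simp [← hjq, ← hjq']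
    have := prod_factor (D.toFun B) (h.mult B).1 (h.mult B).2 (fun i => (1 : B) ⊗ₜ[k] j i 1)
      (fun a b hab => by simp [ho a b hab]) x hx Finset.univ
    rw [← TensorProduct.tmul_sum, hsum, ← Algebra.TensorProduct.one_def, one_mul, sub_self, add_zero] at this
    rw [this]
    refine Finset.prod_congr rfl fun i _ => ?_
    rw [TensorProduct.tmul_sub, ← Algebra.TensorProduct.one_def]
  have hfD : ∀ (B : Type u) [CommRing B] [Algebra k B] (x : B ⊗[k] S),
        D.toFun B x = ∏ i, (D' i).toFun B (LinearMap.lTensor B (q i).toLinearMap x) := by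
    intro B _ _ x
    rw [hfac]
    refine Finset.prod_congr rfl fun i _ => ?_
    rw [hD', lT_comp]
    congr 2
    induction x with
    | zero => simp
    | add x y hx hy => rw [mul_add, map_add, hx, hy]
    | tmul b m => simp [hjq]
  refine ⟨di, D', P', ?_, hw, hfD, ?_⟩
  · have e1 := hfac (Polynomial k) ((Polynomial.X : Polynomial k) • 1)
    rw [h.homog, (h.mult _).1, mul_one] at e1
    have : ∀ i, D.toFun (Polynomial k) ((1 ⊗ₜ j i 1) * ((Polynomial.X : Polynomial k) • 1) + 1 ⊗ₜ (1 - j i 1)) =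
        Polynomial.X ^ (2 * di i) := by
      intro i
      rw [← hd', mul_smul_comm, mul_one, TensorProduct.smul_tmul', smul_eq_mul, mul_one]
    rw [Finset.prod_congr rfl (fun i _ => this i), Finset.prod_pow_eq_pow_sum, ← Finset.mul_sum] at e1
    have := congrArg Polynomial.natDegree e1
    simp only [Polynomial.natDegree_X_pow] at this
    omega
  · intro B _ _ y
    refine law_sqrt h2 P (prodLaw fun i => compLaw (P' i) (qp i)) (fun B _ _ x => ?_) s.onePlus ?_ ?_ B y
    · change _ = (∏ i, (P' i).toFun B (LinearMap.lTensor B (qp i) x)) ^ 2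
      rw [h.sq, hfD, ← Finset.prod_pow]
      refine Finset.prod_congr rfl fun i _ => ?_
      rw [(hw i).sq, InvAlg.incl, InvAlg.incl, lT_comp, lT_comp]
      congr 3
      ext y
      exact (hqp i y).symm
    all_goals
      have : ∏ i, (P' i).toFun k (LinearMap.lTensor k (qp i) (1 ⊗ₜ s.onePlus)) = 1 := by
        refine Finset.prod_eq_one fun i _ => ?_
        rw [LinearMap.lTensor_tmul]
        refine Eq.trans ?_ (hw i).one
        congr 2
        apply Subtype.ext
        rw [hqp]; exact map_one (q i)
      change _
    · rw [h.one]; exact this.symm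
    · exact (this.symm ▸ one_ne_zero : (∏ i, (P' i).toFun k (LinearMap.lTensor k (qp i) (1 ⊗ₜ s.onePlus))) ≠ 0)

end Split
end SDL

set_option linter.unusedSectionVars false
set_option linter.unusedSimpArgs false
namespace SDL
open SympDet

section Semis
variable {k : Type u} [Field k] {R : Type u} [Ring R] [Algebra k R] {D : PolyLaw k R} {n : ℕ}
variable (K : Type u) [Field K] [Algebra k K] [IsAlgClosed K]

theorem span_range_block {t : ℕ} {c : Fin t → ℕ}
    (pr : K ⊗[k] R →ₐ[K] ((i : Fin t) → Matrix (Fin (c i)) (Fin (c i)) K))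
    (hpr : Function.Surjective pr) (l : Fin t) :
    Submodule.span K (Set.range fun x : R => pr (1 ⊗ₜ x) l) = ⊤ := by
  rw [eq_top_iff]
  intro M _
  obtain ⟨y, hy⟩ := hpr (Pi.single l M)
  have hM : M = pr y l := by rw [hy, Pi.single_eq_same]
  rw [hM]
  clear hM hy
  induction y with
  | zero => simp
  | add x y hx hy => rw [map_add]; exact Submodule.add_mem _ hx hy
  | tmul b r =>
    have : (b ⊗ₜ[k] r : K ⊗[k] R) = b • (1 ⊗ₜ r) := by rw [TensorProduct.smul_tmul', smul_eq_mul, mul_one]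
    rw [this, map_smul]
    exact Submodule.smul_mem _ _ (Submodule.subset_span ⟨r, rfl⟩)

theorem integral_range (hD : D.IsHomog n) (hm : D.IsMult) {t : ℕ} {c : Fin t → ℕ}
    (pr : K ⊗[k] R →ₐ[K] ((i : Fin t) → Matrix (Fin (c i)) (Fin (c i)) K))
    (E : DetFun K ((i : Fin t) → Matrix (Fin (c i)) (Fin (c i)) K) n)
    (hE : E.Faithful) (hEpr : ∀ y, E.toFun (pr y) = D.toFun K y) (x : R) :
    IsIntegral k (pr (1 ⊗ₜ x)) := by
  have : Infinite K := IsAlgClosed.instInfinite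
  obtain ⟨f, hfm, hfd, hf⟩ := E.exists_char (pr (1 ⊗ₜ x))
  let χ := chPoly D 1 k ((1 : k) ⊗ₜ[k] x)
  have hmap : χ.map (algebraMap k K) = f := by
    apply Polynomial.funext
    intro t
    have := chPoly_natural D 1 (Algebra.ofId k K) ((1 : k) ⊗ₜ[k] x)
    have e2 : χ.map (algebraMap k K) = chPoly D 1 K (1 ⊗ₜ x) := by
      simpa using this
    rw [e2, chPoly_eval, hf, ← hEpr, map_sub]
    congr 2
    rw [← map_one pr, ← map_smul, Algebra.TensorProduct.one_def, TensorProduct.smul_tmul', smul_eq_mul,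
      mul_one]
  refine ⟨χ, Polynomial.monic_of_injective (algebraMap k K).injective (hmap ▸ hfm), ?_⟩
  have := hE.aeval _ f hfd.le hf
  rw [← hmap, Polynomial.aeval_map_algebraMap] at this
  exact this

theorem range_semisimple (hD : D.IsHomog n) (hm : D.IsMult) {t : ℕ} {c : Fin t → ℕ}
    (pr : K ⊗[k] R →ₐ[K] ((i : Fin t) → Matrix (Fin (c i)) (Fin (c i)) K)) (hpr : Function.Surjective pr)
    (E : DetFun K ((i : Fin t) → Matrix (Fin (c i)) (Fin (c i)) K) n)
    (hE : E.Faithful) (hEpr : ∀ y, E.toFun (pr y) = D.toFun K y)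
    (ψ : R →ₐ[k] ((i : Fin t) → Matrix (Fin (c i)) (Fin (c i)) K)) (hψ : ∀ x, ψ x = pr (1 ⊗ₜ x)) :
    IsSemisimpleRing ψ.range := by
  have : Infinite K := IsAlgClosed.instInfinite
  apply semisimple_of_idem
  have hco : ∀ e : ψ.range, IsIdempotentElem e →
    IsIdempotentElem (e : (i : Fin t) → Matrix (Fin (c i)) (Fin (c i)) K) :=
    fun e he => congrArg Subtype.val he
  apply leftIdeal_idem (S := ψ.range) (fun e => E.rk (e : (i : Fin t) → Matrix (Fin (c i)) (Fin (c i)) K)) n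
  · intro e f he hf h1 h2
    exact E.rk_add (hco e he) (hco f hf) (congrArg Subtype.val h1) (congrArg Subtype.val h2)
  · intro e he
    exact E.rk_le (hco e he)
  · intro e he h0
    exact Subtype.ext (hE.rk_zero (hco e he) h0)
  · intro J hJ
    by_cases hn : ∃ a ∈ J, ¬ IsNilpotent a
    · obtain ⟨a, haJ, ha⟩ := hn
      have hintg : IsIntegral k a := by
        obtain ⟨x, hx⟩ := a.2
        have := integral_range K hD hm pr E hE hEpr x
        rw [← hψ] at this
        have hx' : ψ x = a := hx
        rw [hx'] at this
        exact (isIntegral_algHom_iff ψ.range.val Subtype.val_injective).1 this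
      obtain ⟨w, hw1, hw2⟩ := exists_idem_of_integral a hintg ha
      exact ⟨w * a, J.mul_mem_left _ haJ, hw2, hw1⟩
    · exfalso
      push Not at hn
      apply hJ
      rw [eq_bot_iff]
      intro a ha
      rw [Ideal.mem_bot]
      apply Subtype.ext
      change (a : (i : Fin t) → Matrix (Fin (c i)) (Fin (c i)) K) = 0
      funext l
      rw [Pi.zero_apply, Matrix.ext_iff_trace_mul_left]
      intro M
      rw [mul_zero, Matrix.trace_zero]
      have hM : M ∈ Submodule.span K (Set.range fun x : R => pr (1 ⊗ₜ x) l) := by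
        rw [span_range_block K pr hpr l]; trivial
      induction hM using Submodule.span_induction with
      | zero => simp
      | add x y _ _ hx hy => rw [add_mul, Matrix.trace_add, hx, hy, add_zero]
      | smul b x _ hx => rw [smul_mul_assoc, Matrix.trace_smul, hx, smul_zero]
      | mem x hx =>
        obtain ⟨r, rfl⟩ := hx
        have h1 := hn ((⟨ψ r, r, rfl⟩ : ψ.range) * a) (J.mul_mem_left _ ha)
        obtain ⟨N, hN⟩ := h1
        have h2 := congrArg Subtype.val hN
        have h3 : (pr (1 ⊗ₜ r) l * (a : (i : Fin t) → Matrix (Fin (c i)) (Fin (c i)) K) l) ^ N = 0 := by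
          have := congrFun h2 l
          simpa [hψ] using this
        exact (Matrix.isNilpotent_trace_of_isNilpotent ⟨N, h3⟩).eq_zero

theorem semis_pkg (hD : D.IsHomog n) (hm : D.IsMult) :
    ∃ (N : ℕ) (A : Fin N → Type u) (_ : ∀ i, Ring (A i)) (_ : ∀ i, Algebra k (A i))
      (θ : R →ₐ[k] ((i : Fin N) → A i)),
      (∀ i, IsSimpleRing (A i)) ∧ Function.Surjective θ ∧ (∀ x, θ x = 0 ↔ x ∈ D.lawKer) ∧
      ∀ a, ∃ (m : ℕ) (_ : NeZero m) (φ : A a →+* Matrix (Fin m) (Fin m) K),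
        Submodule.span K (Set.range φ) = ⊤ := by
  have : Infinite K := IsAlgClosed.instInfinite
  obtain ⟨t, c, hc, pr, E, hpr, hE, hEpr, -, hker⟩ := law_pkg (K := K) D hD hm
  let ψ : R →ₐ[k] ((i : Fin t) → Matrix (Fin (c i)) (Fin (c i)) K) :=
    (pr.restrictScalars k).comp Algebra.TensorProduct.includeRight
  have hψ : ∀ x, ψ x = pr (1 ⊗ₜ x) := fun x => rfl
  have := range_semisimple K hD hm pr hpr E hE hEpr ψ hψ
  obtain ⟨N, Dv, dm, _, _, hd, ⟨ε⟩⟩ := IsSemisimpleRing.exists_algEquiv_pi_matrix_divisionRing k ψ.range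
  refine ⟨N, fun i => Matrix (Fin (dm i)) (Fin (dm i)) (Dv i), inferInstance, inferInstance,
    ε.toAlgHom.comp ψ.rangeRestrict, fun i => inferInstance,
    ε.surjective.comp ψ.rangeRestrict_surjective, ?_, ?_⟩
  · intro x
    rw [← hker, ← hψ]
    change ε (ψ.rangeRestrict x) = 0 ↔ _
    rw [map_eq_zero_iff ε ε.injective, ← Subtype.val_inj]
    rfl
  · intro a
    let Ψ : ((i : Fin N) → Matrix (Fin (dm i)) (Fin (dm i)) (Dv i)) →ₐ[k]
      ((i : Fin t) → Matrix (Fin (c i)) (Fin (c i)) K) := ψ.range.val.comp ε.symm.toAlgHom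
    have hΨ : Function.Injective Ψ := Subtype.val_injective.comp ε.symm.injective
    have hrange : ∀ x, ∃ y, Ψ y = pr (1 ⊗ₜ x) := fun x =>
      ⟨ε (ψ.rangeRestrict x), by simp [Ψ]; rfl⟩
    have hne : Ψ (Pi.single a 1) ≠ 0 := by
      rw [Ne, map_eq_zero_iff Ψ hΨ, Pi.single_eq_zero_iff]
      exact one_ne_zero
    obtain ⟨l, hl⟩ := Function.ne_iff.1 hne
    rw [Pi.zero_apply] at hl
    have hcen : ∀ y : ((i : Fin N) → Matrix (Fin (dm i)) (Fin (dm i)) (Dv i)), Pi.single a 1 * y = y * Pi.single a 1 ∧ y * Pi.single a 1 = Pi.single a (y a) := by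
      intro y
      constructor <;>
      · funext i
        by_cases hi : i = a
        · subst hi; simp
        · simp [hi]
    have hcom : ∀ M, Ψ (Pi.single a 1) l * M = M * Ψ (Pi.single a 1) l := by
      intro M
      have hM : M ∈ Submodule.span K (Set.range fun x : R => pr (1 ⊗ₜ x) l) := by
        rw [span_range_block K pr hpr l]; trivial
      induction hM using Submodule.span_induction with
      | zero => simp
      | add x y _ _ hx hy => rw [add_mul, mul_add, hx, hy]
      | smul b x _ hx => rw [smul_mul_assoc, mul_smul_comm, hx]
      | mem x hx =>
        obtain ⟨r, rfl⟩ := hx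
        obtain ⟨y, hy⟩ := hrange r
        simp only [← hy, ← Pi.mul_apply, ← map_mul, (hcen y).1]
    have h1 : Ψ (Pi.single a 1) l = 1 := by
      obtain ⟨b, hb⟩ := mem_range_scalar_of_commute_single (M := Ψ (Pi.single a 1) l)
        (fun i j _ => (hcom _).symm)
      have hid : Ψ (Pi.single a 1) l * Ψ (Pi.single a 1) l = Ψ (Pi.single a 1) l := by
        rw [← Pi.mul_apply, ← map_mul, ← Pi.single_mul, one_mul]
      have := hc l
      rw [← hb, ← map_mul] at hid
      have hb2 : b * b = b := Matrix.scalar_inj.1 hid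
      have hb0 : b ≠ 0 := by
        rintro rfl
        exact hl (by rw [← hb, map_zero])
      have : b = 1 := mul_left_cancel₀ hb0 (by rw [hb2, mul_one])
      rw [← hb, this, map_one]
    let φ : Matrix (Fin (dm a)) (Fin (dm a)) (Dv a) →+* Matrix (Fin (c l)) (Fin (c l)) K :=
      { toFun := fun x => Ψ (Pi.single a x) l
        map_one' := h1
        map_mul' := fun x y => by rw [Pi.single_mul, map_mul, Pi.mul_apply]
        map_zero' := by rw [Pi.single_zero, map_zero]; rfl
        map_add' := fun x y => by rw [Pi.single_add, map_add, Pi.add_apply] }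
    refine ⟨c l, hc l, φ, ?_⟩
    rw [eq_top_iff, ← span_range_block K pr hpr l]
    apply Submodule.span_mono
    rintro _ ⟨r, rfl⟩
    obtain ⟨y, hy⟩ := hrange r
    refine ⟨y a, ?_⟩
    change Ψ (Pi.single a (y a)) l = _
    rw [← (hcen y).2, map_mul, Pi.mul_apply, h1, mul_one, hy]

end Semis
end SDL

set_option linter.unusedSectionVars false
set_option linter.unusedSimpArgs false
namespace SDL
open SympDet

section CSA

theorem lin_disj {Z T K : Type*} [Field Z] [Ring T] [Algebra Z T] [Algebra.IsCentral Z T] [IsSimpleRing T]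
    [Field K] [Algebra Z K] {m : ℕ} [NeZero m] (φ : T →ₐ[Z] Matrix (Fin m) (Fin m) K)
    {ι : Type*} (c : ι → K) (hc : LinearIndependent Z c) (F : Finset ι) :
    ∀ t : ι → T, ∑ i ∈ F, c i • φ (t i) = 0 → ∀ i ∈ F, t i = 0 := by
  classical
  induction F using Finset.induction_on with
  | empty => simp
  | insert a F ha ih =>
    intro t ht
    rw [Finset.sum_insert ha] at ht
    have h0 : t a = 0 := by
      by_contra hta
      let J : TwoSidedIdeal T := TwoSidedIdeal.mk'
        {u | ∃ t' : ι → T, c a • φ u + ∑ i ∈ F, c i • φ (t' i) = 0}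
        ⟨0, by simp⟩
        (by
          rintro x y ⟨t1, h1⟩ ⟨t2, h2⟩
          refine ⟨t1 + t2, ?_⟩
          rw [← add_zero (0 : Matrix (Fin m) (Fin m) K)]
          nth_rewrite 1 [← h1]
          rw [← h2]
          simp only [map_add, Pi.add_apply, smul_add, Finset.sum_add_distrib]
          abel)
        (by
          rintro x ⟨t1, h1⟩
          refine ⟨-t1, ?_⟩
          rw [← neg_zero, ← h1]
          simp only [map_neg, Pi.neg_apply, smul_neg, Finset.sum_neg_distrib]
          abel)
        (by
          rintro x y ⟨t1, h1⟩
          refine ⟨fun i => x * t1 i, ?_⟩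
          rw [← mul_zero (φ x), ← h1]
          simp only [map_mul, mul_add, Finset.mul_sum, mul_smul_comm])
        (by
          rintro x y ⟨t1, h1⟩
          refine ⟨fun i => t1 i * y, ?_⟩
          rw [← zero_mul (φ y), ← h1]
          simp only [map_mul, add_mul, Finset.sum_mul, smul_mul_assoc])
      have hJ : ∀ u, u ∈ J ↔ ∃ t' : ι → T, c a • φ u + ∑ i ∈ F, c i • φ (t' i) = 0 := by
        intro u
        exact TwoSidedIdeal.mem_mk' _ _ _ _ _ _ u
      have h1 : (1 : T) ∈ J := IsSimpleRing.one_mem_of_ne_zero_mem J hta ((hJ _).2 ⟨t, ht⟩)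
      obtain ⟨t', ht'⟩ := (hJ 1).1 h1
      have hcomm : ∀ i ∈ F, ∀ y, y * t' i = t' i * y := by
        intro i hi y
        have e1 : φ y * (c a • φ 1 + ∑ i ∈ F, c i • φ (t' i)) -
          (c a • φ 1 + ∑ i ∈ F, c i • φ (t' i)) * φ y = 0 := by rw [ht']; simp
        rw [← sub_eq_zero]
        refine ih (fun i => y * t' i - t' i * y) ?_ i hi
        rw [← e1]
        simp only [map_one, mul_add, add_mul, Finset.mul_sum, Finset.sum_mul, mul_smul_comm, smul_mul_assoc,
          mul_one, one_mul, map_sub, map_mul, smul_sub, Finset.sum_sub_distrib]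
        abel
      have hz : ∀ i, ∃ z : Z, i ∈ F → algebraMap Z T z = t' i := by
        intro i
        by_cases hi : i ∈ F
        · have : t' i ∈ Subalgebra.center Z T := Subalgebra.mem_center_iff.2 (hcomm i hi)
          obtain ⟨z, hz⟩ := Algebra.mem_bot.1 (Algebra.IsCentral.out this)
          exact ⟨z, fun _ => hz⟩
        · exact ⟨0, fun h => absurd h hi⟩
      choose z hz using hz
      have e2 : c a + ∑ i ∈ F, z i • c i = 0 := by
        have h3 := congrFun (congrFun ht' 0) 0
        have h4 : ∀ i ∈ F, c i • φ (t' i) = (z i • c i) • (1 : Matrix (Fin m) (Fin m) K) := by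
          intro i hi
          rw [← hz i hi, AlgHom.commutes, Algebra.algebraMap_eq_smul_one, smul_comm, smul_assoc]
        rw [Finset.sum_congr rfl h4, ← Finset.sum_smul, map_one, ← add_smul] at h3
        simpa using h3
      have := linearIndependent_iff'.1 hc (insert a F) (fun i => if i = a then 1 else z i) (by
        rw [Finset.sum_insert ha, if_pos rfl, one_smul, ← e2]
        congr 1
        refine Finset.sum_congr rfl fun i hi => ?_
        rw [if_neg]
        rintro rfl; exact ha hi) a (Finset.mem_insert_self _ _)
      simp at this
    rw [h0, map_zero, smul_zero, zero_add] at ht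
    intro i hi
    rcases Finset.mem_insert.1 hi with rfl | hi
    · exact h0
    · exact ih t ht i hi

theorem csa_split {Z T K : Type*} [Field Z] [Ring T] [Algebra Z T] [Algebra.IsCentral Z T] [IsSimpleRing T]
    [Field K] [Algebra Z K] {m : ℕ} [NeZero m] (φ : T →ₐ[Z] Matrix (Fin m) (Fin m) K)
    (hφ : Submodule.span K (Set.range φ) = ⊤) :
    Nonempty (K ⊗[Z] T ≃ₐ[K] Matrix (Fin m) (Fin m) K) := by
  let Φ : K ⊗[Z] T →ₐ[K] Matrix (Fin m) (Fin m) K :=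
    Algebra.TensorProduct.lift (Algebra.ofId K _) φ (fun x y => Algebra.commutes _ _)
  have hΦ : ∀ c t, Φ (c ⊗ₜ t) = c • φ t := by
    intro c t
    rw [Algebra.smul_def]
    exact Algebra.TensorProduct.lift_tmul _ _ _ _ _
  refine ⟨AlgEquiv.ofBijective Φ ⟨?_, ?_⟩⟩
  · rw [injective_iff_map_eq_zero]
    intro x hx
    let b := Module.Basis.ofVectorSpace Z K
    obtain ⟨f, rfl⟩ := TensorProduct.eq_repr_basis_left b x
    rw [Finsupp.sum, map_sum] at hx
    simp only [hΦ] at hx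
    have := lin_disj φ b b.linearIndependent f.support f hx
    rw [Finsupp.sum]
    exact Finset.sum_eq_zero fun i hi => by rw [this i hi, TensorProduct.tmul_zero]
  · rw [← AlgHom.coe_toLinearMap, ← LinearMap.range_eq_top, eq_top_iff, ← hφ, Submodule.span_le]
    rintro _ ⟨t, rfl⟩
    exact ⟨1 ⊗ₜ t, by simp [hΦ]⟩

theorem csa_pkg {T K : Type u} [Ring T] [IsSimpleRing T] [Field K] {m : ℕ} [NeZero m]
    (φ : T →+* Matrix (Fin m) (Fin m) K) (hφ : Submodule.span K (Set.range φ) = ⊤) :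
    ∃ (Z : Type u) (_ : Field Z) (_ : Algebra Z T) (_ : Algebra Z K),
      Algebra.IsCentral Z T ∧ FiniteDimensional Z T ∧
      Nonempty (K ⊗[Z] T ≃ₐ[K] Matrix (Fin m) (Fin m) K) := by
  let Z := Subring.center T
  letI fZ : Field Z := (IsSimpleRing.isField_center T).toField
  letI aZ : Algebra Z T := RingHom.toAlgebra' (Subring.center T).subtype
    (fun c x => (Subring.mem_center_iff.1 c.2 x).symm)
  have haZ : ∀ z : Z, algebraMap Z T z = z := fun z => rfl
  have hsc : ∀ z : Z, ∃ c : K, Matrix.scalar (Fin m) c = φ z := by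
    intro z
    refine mem_range_scalar_of_commute_single (M := φ z) fun i j _ => ?_
    have hcom : ∀ M, M * φ z = φ z * M := by
      intro M
      have hM : M ∈ Submodule.span K (Set.range φ) := by rw [hφ]; trivial
      induction hM using Submodule.span_induction with
      | zero => simp
      | add x y _ _ hx hy => rw [add_mul, mul_add, hx, hy]
      | smul b x _ hx => rw [smul_mul_assoc, mul_smul_comm, hx]
      | mem x hx =>
        obtain ⟨r, rfl⟩ := hx
        rw [← map_mul, ← map_mul, Subring.mem_center_iff.1 z.2 r]
    exact hcom _
  choose g hg using hsc
  have hinj : Function.Injective (Matrix.scalar (Fin m) : K →+* _) := fun a b h => Matrix.scalar_inj.1 h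
  let gh : Z →+* K :=
    { toFun := g
      map_one' := hinj (by rw [hg, map_one]; exact map_one φ)
      map_mul' := fun x y => hinj (by rw [hg, map_mul, hg, hg]; exact map_mul φ _ _)
      map_zero' := hinj (by rw [hg, map_zero]; exact map_zero φ)
      map_add' := fun x y => hinj (by rw [hg, map_add, hg, hg]; exact map_add φ _ _) }
  letI aK : Algebra Z K := gh.toAlgebra
  let φa : T →ₐ[Z] Matrix (Fin m) (Fin m) K :=
    { φ with
      commutes' := fun z => by
        change φ z = _
        rw [← hg]
        rfl }
  have hcen : Algebra.IsCentral Z T := ⟨fun x hx => by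
    rw [Algebra.mem_bot]
    exact ⟨⟨x, Subring.mem_center_iff.2 (Subalgebra.mem_center_iff.1 hx)⟩, rfl⟩⟩
  obtain ⟨e⟩ := csa_split φa hφ
  refine ⟨Z, fZ, aZ, aK, hcen, ?_, ⟨e⟩⟩
  have h1 : Module.Finite K (K ⊗[Z] T) := Module.Finite.equiv e.symm.toLinearEquiv
  have h2 := Module.rank_lt_aleph0_iff.2 h1
  rw [Module.rank_baseChange, Cardinal.lift_id] at h2
  exact Module.rank_lt_aleph0_iff.1 h2

end CSA
end SDL

set_option linter.unusedSectionVars false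
set_option linter.unusedSimpArgs false
namespace SDL
open SympDet
section FORMS

theorem anti_inner {K : Type*} [Field K] {m : ℕ} [NeZero m]
    (β : Matrix (Fin m) (Fin m) K →ₗ[K] Matrix (Fin m) (Fin m) K) (h1 : β 1 = 1)
    (hmul : ∀ x y, β (x * y) = β y * β x) (hinv : ∀ x, β (β x) = x) :
    ∃ u : Matrix (Fin m) (Fin m) K, IsUnit u.det ∧ (uᵀ = -u ∨ uᵀ = u) ∧ ∀ M, β M = u * Mᵀ * u⁻¹ := by
  let γl : Matrix (Fin m) (Fin m) K ≃ₗ[K] Matrix (Fin m) (Fin m) K :=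
    (Matrix.transposeLinearEquiv (Fin m) (Fin m) K K).trans
      (LinearEquiv.ofInvolutive β hinv)
  have hγl : ∀ M, γl M = β Mᵀ := fun M => rfl
  let γ : Matrix (Fin m) (Fin m) K ≃ₐ[K] Matrix (Fin m) (Fin m) K :=
    AlgEquiv.ofLinearEquiv γl (by rw [hγl, Matrix.transpose_one, h1])
      (fun x y => by rw [hγl, hγl, hγl, Matrix.transpose_mul, hmul])
  have hγ : ∀ M, γ M = β Mᵀ := fun M => rfl
  let L := (Matrix.toLinAlgEquiv' : Matrix (Fin m) (Fin m) K ≃ₐ[K] _)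
  obtain ⟨g, hg⟩ := AlgEquiv.eq_linearEquivConjAlgEquiv ((L.symm.trans γ).trans L)
  let u := L.symm g.toLinearMap
  let v := L.symm g.symm.toLinearMap
  have huv : u * v = 1 := by
    rw [← map_mul]
    have : (g.toLinearMap * g.symm.toLinearMap) = 1 := by ext x; simp
    rw [this, map_one]
  have hvu : v * u = 1 := mul_eq_one_comm.1 huv
  have hdet : IsUnit u.det := by
    have := congrArg Matrix.det huv
    rw [Matrix.det_mul, Matrix.det_one] at this
    exact IsUnit.of_mul_eq_one _ this
  have hvi : u⁻¹ = v := Matrix.inv_eq_right_inv huv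
  have hγu : ∀ M, γ M = u * M * v := by
    intro M
    apply L.injective
    have := congrArg (fun f => f (L M)) hg
    simp only [AlgEquiv.trans_apply, AlgEquiv.symm_apply_apply] at this
    rw [this, map_mul, map_mul, AlgEquiv.apply_symm_apply, AlgEquiv.apply_symm_apply,
      LinearEquiv.conjAlgEquiv_apply]
    ext x; simp
  have hβ : ∀ M, β M = u * Mᵀ * v := by
    intro M
    have := hγu Mᵀ
    rwa [hγ, Matrix.transpose_transpose] at this
  -- central element
  have hcen : ∀ M, M * (uᵀ * v) = (uᵀ * v) * M := by
    intro M
    have h3 := hinv M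
    rw [hβ M, hβ] at h3
    simp only [Matrix.transpose_mul, Matrix.transpose_transpose] at h3
    have hut : uᵀ * vᵀ = 1 := by rw [← Matrix.transpose_mul, hvu, Matrix.transpose_one]
    have hut' : vᵀ * uᵀ = 1 := by rw [← Matrix.transpose_mul, huv, Matrix.transpose_one]
    have hw : (uᵀ * v) * (u * vᵀ) = 1 := by
      rw [mul_assoc, ← mul_assoc v, hvu, one_mul, hut]
    have h4 := congrArg (fun X => (uᵀ * v) * X) h3
    rw [← h4]
    calc M * (uᵀ * v) = ((uᵀ * v) * (u * vᵀ)) * (M * (uᵀ * v)) := by rw [hw, one_mul]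
      _ = _ := by simp only [mul_assoc]
  obtain ⟨c, hc⟩ := mem_range_scalar_of_commute_single (M := uᵀ * v) fun i j _ => hcen _
  have hcu : uᵀ = c • u := by
    have h5 := congrArg (fun X => X * u) hc
    simp only [mul_assoc, hvu, mul_one] at h5
    rw [← h5, Matrix.scalar_apply, ← Matrix.smul_one_eq_diagonal, smul_mul_assoc, one_mul]
  have hu0 : u ≠ 0 := by
    intro h0
    rw [h0, zero_mul] at huv
    exact zero_ne_one huv
  have hc2 : c * c = 1 := by
    have h6 : u = (c * c) • u := by
      conv_lhs => rw [← Matrix.transpose_transpose u, hcu, Matrix.transpose_smul, hcu, smul_smul]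
    have h7 : (c * c - 1) • u = 0 := by rw [sub_smul, one_smul, ← h6, sub_self]
    exact sub_eq_zero.1 ((smul_eq_zero.1 h7).resolve_right hu0)
  refine ⟨u, hdet, ?_, fun M => by rw [hvi, hβ]⟩
  rcases mul_self_eq_one_iff.1 hc2 with rfl | rfl
  · right; simpa using hcu
  · left; simpa using hcu

theorem simple_forms {T K : Type u} [Ring T] [IsSimpleRing T] [Field K] {m : ℕ} [NeZero m]
    (φ : T →+* Matrix (Fin m) (Fin m) K) (hφ : Submodule.span K (Set.range φ) = ⊤)
    (σ : T → T) (hσ : IsAntiAutOn T σ) :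
    Nonempty (FirstKindCase T σ (-1)) ∨ Nonempty (FirstKindCase T σ 1) ∨
      Nonempty (SecondKindCase T σ) := by
  obtain ⟨Z, fZ, aZ, aK, hcen, hfin, ⟨e⟩⟩ := csa_pkg φ hφ
  have hσ' := hσ
  obtain ⟨h1, hadd, hmul, hinv⟩ := hσ
  have h0 : σ 0 = 0 := by
    have := hadd 0 0
    rw [add_zero] at this
    simpa using this
  have hinjZ : Function.Injective (algebraMap Z T) := (algebraMap Z T).injective
  have hpres : ∀ z : Z, ∃ w : Z, algebraMap Z T w = σ (algebraMap Z T z) := by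
    intro z
    have : σ (algebraMap Z T z) ∈ Subalgebra.center Z T := by
      rw [Subalgebra.mem_center_iff]
      intro b
      have := congrArg σ (Algebra.commutes z (σ b))
      rw [hmul, hmul, hinv] at this
      exact this
    exact Algebra.mem_bot.1 (Algebra.IsCentral.out this)
  choose τ hτ using hpres
  by_cases hfix : ∀ z, σ (algebraMap Z T z) = algebraMap Z T z
  · have hlin : ∀ (c : Z) (x : T), σ (algebraMap Z T c * x) = algebraMap Z T c * σ x := by
      intro c x
      rw [hmul, hfix, Algebra.commutes]
    let σl : T →ₗ[Z] T :=
      { toFun := σ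
        map_add' := hadd
        map_smul' := fun c x => by
          rw [Algebra.smul_def, hlin, RingHom.id_apply, Algebra.smul_def] }
    have hσl : ∀ x, σl x = σ x := fun x => rfl
    let σK := σl.baseChange K
    have hK : ∀ (c : K) (x : T), σK (c ⊗ₜ x) = c ⊗ₜ σ x := fun c x => rfl
    have hKmul : ∀ x y, σK (x * y) = σK y * σK x := by
      intro x y
      induction x using TensorProduct.induction_on with
      | zero => simp
      | add a b ha hb => rw [add_mul, map_add, map_add, mul_add, ha, hb]
      | tmul c x =>
        induction y using TensorProduct.induction_on with
        | zero => simp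
        | add a b ha hb => rw [mul_add, map_add, map_add, add_mul, ha, hb]
        | tmul c' x' =>
          rw [Algebra.TensorProduct.tmul_mul_tmul, hK, hK, hK, Algebra.TensorProduct.tmul_mul_tmul,
            hmul, mul_comm c c']
    have hKinv : ∀ x, σK (σK x) = x := by
      intro x
      induction x using TensorProduct.induction_on with
      | zero => simp
      | add a b ha hb => rw [map_add, map_add, ha, hb]
      | tmul c x => rw [hK, hK, hinv]
    obtain ⟨u, hu, hut, hβ⟩ := anti_inner (e.toLinearMap ∘ₗ σK ∘ₗ e.symm.toLinearMap)
      (by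
        simp only [LinearMap.comp_apply, AlgEquiv.toLinearMap_apply, map_one]
        rw [Algebra.TensorProduct.one_def, hK, h1, ← Algebra.TensorProduct.one_def, map_one])
      (fun x y => by
        simp only [LinearMap.comp_apply, AlgEquiv.toLinearMap_apply, map_mul]
        rw [hKmul, map_mul])
      (fun x => by
        simp only [LinearMap.comp_apply, AlgEquiv.toLinearMap_apply, AlgEquiv.symm_apply_apply]
        rw [hKinv, AlgEquiv.apply_symm_apply])
    have hconj : ∀ x : T, e ((1 : K) ⊗ₜ[Z] σ x) = u * (e ((1 : K) ⊗ₜ[Z] x))ᵀ * u⁻¹ := by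
      intro x
      rw [← hβ]
      simp only [LinearMap.comp_apply, AlgEquiv.toLinearMap_apply, AlgEquiv.symm_apply_apply, hK]
    rcases hut with hut | hut
    · left
      exact ⟨{ K := Z, central := hcen, simple := inferInstance, findim := hfin, linear := hlin,
               anti := hσ', n := m, L := K, split := e, u := u, hu := hu,
               hut := by rw [hut]; simp, hconj := hconj }⟩
    · right; left
      exact ⟨{ K := Z, central := hcen, simple := inferInstance, findim := hfin, linear := hlin,
               anti := hσ', n := m, L := K, split := e, u := u, hu := hu,
               hut := by rw [hut]; simp, hconj := hconj }⟩
  · right; right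
    push Not at hfix
    obtain ⟨l, hl⟩ := hfix
    have hττ : ∀ z, τ (τ z) = z := fun z => hinjZ (by rw [hτ, hτ, hinv])
    let τe : RingAut Z :=
      { toFun := τ
        invFun := τ
        left_inv := hττ
        right_inv := hττ
        map_mul' := fun x y => hinjZ (by
          rw [hτ, map_mul, map_mul, hmul, hτ, hτ]
          rw [← hτ x, Algebra.commutes])
        map_add' := fun x y => hinjZ (by rw [hτ, map_add, map_add, hadd, hτ, hτ]) }
    have hτe : ∀ z, τe z = τ z := fun z => rfl
    have hord : orderOf τe = 2 := by
      refine orderOf_eq_prime ?_ ?_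
      · ext z
        rw [pow_two]
        exact hττ z
      · intro h
        apply hl
        rw [← hτ, ← hτe, h]
        rfl
    let G := Subgroup.zpowers τe
    have hcard : Nat.card G = 2 := by rw [Nat.card_zpowers, hord]
    have hfinG : Finite G := Nat.finite_of_card_ne_zero (by rw [hcard]; norm_num)
    let fG : Fintype G := Fintype.ofFinite G
    let K0 := FixedPoints.subfield G Z
    have hquad : Module.finrank K0 Z = 2 := by
      rw [FixedPoints.finrank_eq_card, ← Nat.card_eq_fintype_card, hcard]
    have htow : IsScalarTower K0 Z T := IsScalarTower.of_algebraMap_eq fun x => rfl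
    exact ⟨{ K := K0, L := Z, quad := hquad, separable := FixedPoints.isSeparable G Z,
             central := hcen, simple := inferInstance, findim := hfin, anti := hσ',
             secondKind := ⟨l, hl⟩
             linear := fun c x => by
               have hc : τ (c : Z) = c := by
                 have := c.2 ⟨τe, Subgroup.mem_zpowers τe⟩
                 exact this
               have hc2 : algebraMap K0 T c = algebraMap Z T c := rfl
               rw [hc2, hmul, ← hτ, hc, Algebra.commutes] }⟩

end FORMS
end SDL

set_option linter.unusedSectionVars false
set_option linter.unusedSimpArgs false
namespace SDL
open SympDet
section ORB
variable {k : Type u} [Field k] {N : ℕ} {A : Fin N → Type u} [∀ i, Ring (A i)] [∀ i, Algebra k (A i)]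

theorem orb_perm [∀ i, IsSimpleRing (A i)] (s : InvAlg k (∀ i, A i)) :
    ∃ σ : Fin N → Fin N, ∀ a, s.star (Pi.single a 1) = Pi.single (σ a) 1 := by
  classical
  have hcen : ∀ a (x : ∀ i, A i), x * s.star (Pi.single a 1) = s.star (Pi.single a 1) * x := by
    intro a x
    have h : s.star x * Pi.single a 1 = Pi.single a 1 * s.star x := by
      ext b
      by_cases hb : b = a
      · subst hb; simp
      · simp [hb]
    have := congrArg s.star h
    rw [s.star_mul, s.star_mul, s.star_star] at this
    exact this.symm
  have h01 : ∀ a b, s.star (Pi.single a 1) b = 0 ∨ s.star (Pi.single a 1) b = 1 := by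
    intro a b
    let c : Subring.center (A b) := ⟨s.star (Pi.single a 1) b, by
      rw [Subring.mem_center_iff]
      intro g
      have := congrFun (hcen a (Pi.single b g)) b
      simpa using this⟩
    have hi : s.star (Pi.single a 1) * s.star (Pi.single a 1) = s.star (Pi.single a 1) := by
      rw [← s.star_mul, ← Pi.single_mul, one_mul]
    have hc : c * c = c := Subtype.ext (congrFun hi b)
    let _ : Field (Subring.center (A b)) := (IsSimpleRing.isField_center (A b)).toField
    have h2 : c * (c - 1) = 0 := by rw [mul_sub, mul_one, hc, sub_self]
    rcases mul_eq_zero.1 h2 with h | h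
    · left; exact congrArg Subtype.val h
    · right; exact congrArg Subtype.val (sub_eq_zero.1 h)
  have hex : ∀ a, ∃ b, s.star (Pi.single a 1) b = 1 := by
    intro a
    by_contra hne
    push Not at hne
    have h0 : s.star (Pi.single a (1 : A a)) = 0 := funext fun b => (h01 a b).resolve_right (hne b)
    have := congrArg s.star h0
    rw [s.star_star, map_zero] at this
    have := congrFun this a
    simp at this
  have key : ∀ a b, s.star (Pi.single a 1) b = 1 → s.star (Pi.single b 1) = Pi.single a 1 := by
    intro a b hab
    have h1 : s.star (Pi.single a 1) * Pi.single b 1 = Pi.single b 1 := by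
      ext c
      by_cases hc : c = b
      · subst hc; simp [hab]
      · simp [hc]
    have h2 := congrArg s.star h1
    rw [s.star_mul, s.star_star] at h2
    obtain ⟨c, hc⟩ := hex b
    have hca : c = a := by
      by_contra hca
      have := congrFun h2 c
      rw [hc] at this
      simp [hca] at this
    subst hca
    ext b'
    by_cases hb' : b' = c
    · subst hb'; simp [hc]
    · have := congrFun h2 b'
      rw [← this]
      simp [hb']
  choose σ hσ using hex
  refine ⟨σ, fun a => ?_⟩
  rw [← key a _ (hσ a), s.star_star]

theorem orb_idx (σ : Fin N → Fin N) (hσ : ∀ a, σ (σ a) = a) :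
    ∃ (t : ℕ) (o : Fin N → Fin t), Function.Surjective o ∧ ∀ a b, o a = o b ↔ b = a ∨ b = σ a := by
  let S : Setoid (Fin N) :=
    { r := fun a b => b = a ∨ b = σ a
      iseqv := ⟨fun a => Or.inl rfl, by
        rintro a b (rfl | rfl)
        · exact Or.inl rfl
        · exact Or.inr (hσ a).symm, by
        rintro a b c (rfl | rfl) (rfl | rfl)
        · exact Or.inl rfl
        · exact Or.inr rfl
        · exact Or.inr rfl
        · exact Or.inl (hσ a)⟩ }
  obtain ⟨t, ⟨f⟩⟩ := Finite.exists_equiv_fin (Quotient S)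
  refine ⟨t, fun a => f (Quotient.mk S a), f.surjective.comp Quotient.mk_surjective, fun a b => ?_⟩
  rw [f.apply_eq_iff_eq, Quotient.eq]
  rfl

theorem orb_loc (s : InvAlg k (∀ i, A i)) (σ : Fin N → Fin N)
    (hσ : ∀ a, s.star (Pi.single a 1) = Pi.single (σ a) 1) (hσσ : ∀ a, σ (σ a) = a)
    (x y : ∀ i, A i) (a : Fin N) (h : x (σ a) = y (σ a)) : s.star x a = s.star y a := by
  have h1 : Pi.single (σ a) 1 * x = Pi.single (σ a) 1 * y := by
    ext b
    by_cases hb : b = σ a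
    · subst hb; simp [h]
    · simp [hb]
  have h2 := congrFun (congrArg s.star h1) a
  rw [s.star_mul, s.star_mul, hσ, hσσ] at h2
  simpa using h2

variable {t : ℕ} (o : Fin N → Fin t) (A)

abbrev OT (i : Fin t) : Type u := ∀ j : {j // o j = i}, A j.1

variable (k) in
def oq (i : Fin t) : (∀ a, A a) →ₐ[k] OT A o i :=
  AlgHom.pi fun j => Pi.evalAlgHom k A j.1

variable (k) in
def oj (i : Fin t) : OT A o i →ₗ[k] (∀ a, A a) where
  toFun x a := if h : o a = i then x ⟨a, h⟩ else 0
  map_add' x y := by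
    ext a
    by_cases h : o a = i <;> simp [h]
  map_smul' c x := by
    ext a
    by_cases h : o a = i <;> simp [h]

variable {A}
theorem oq_apply (i : Fin t) (x : ∀ a, A a) (j) : oq k A o i x j = x j.1 := rfl
theorem oj_pos (i : Fin t) (x : OT A o i) (a) (h : o a = i) : oj k A o i x a = x ⟨a, h⟩ := dif_pos h
theorem oj_neg (i : Fin t) (x : OT A o i) (a) (h : ¬ o a = i) : oj k A o i x a = 0 := dif_neg h
theorem oq_oj (i : Fin t) (x : OT A o i) : oq k A o i (oj k A o i x) = x := by
  ext j
  rw [oq_apply, oj_pos o i x j.1 j.2]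

theorem oj_mul (i : Fin t) (x y : OT A o i) : oj k A o i (x * y) = oj k A o i x * oj k A o i y := by
  ext a
  by_cases h : o a = i
  · simp [oj_pos, h]
  · simp [oj_neg, h]

theorem oj_oq (i : Fin t) (x : ∀ a, A a) : oj k A o i (oq k A o i x) = oj k A o i 1 * x := by
  ext a
  by_cases h : o a = i
  · simp [oj_pos, h, oq_apply]
  · simp [oj_neg, h]

theorem oj_oq' (i : Fin t) (x : ∀ a, A a) : oj k A o i (oq k A o i x) = x * oj k A o i 1 := by
  ext a
  by_cases h : o a = i
  · simp [oj_pos, h, oq_apply]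
  · simp [oj_neg, h]

theorem oj_orth (i j : Fin t) (hij : i ≠ j) : oj k A o i 1 * oj k A o j 1 = 0 := by
  ext a
  by_cases h : o a = i
  · have : ¬ o a = j := fun h' => hij (h.symm.trans h')
    simp [oj_neg, this]
  · simp [oj_neg, h]

theorem oj_sum : ∑ i, oj k A o i 1 = 1 := by
  ext a
  rw [Finset.sum_apply, Finset.sum_eq_single (o a)]
  · rw [oj_pos o _ _ a rfl]; rfl
  · intro i _ hi
    exact oj_neg o _ _ a (Ne.symm hi)
  · simp

section
variable (s : InvAlg k (∀ i, A i))

theorem o_star (hs : ∀ (x y : ∀ i, A i) (a : Fin N),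
    (∀ b, o b = o a → x b = y b) → s.star x a = s.star y a) (i : Fin t) (x : ∀ a, A a) :
    oq k A o i (s.star (oj k A o i (oq k A o i x))) = oq k A o i (s.star x) := by
  ext ⟨a, ha⟩
  rw [oq_apply, oq_apply]
  refine hs _ _ _ fun b hb => ?_
  rw [oj_pos o i _ b (hb.trans ha)]
  rfl

def oS (hs : ∀ (x y : ∀ i, A i) (a : Fin N),
    (∀ b, o b = o a → x b = y b) → s.star x a = s.star y a) (i : Fin t) : InvAlg k (OT A o i) where
  star := (oq k A o i).toLinearMap ∘ₗ s.star ∘ₗ oj k A o i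
  star_one := by
    have := o_star o s hs i 1
    rw [map_one (oq k A o i), s.star_one, map_one (oq k A o i)] at this
    exact this
  star_mul x y := by
    simp only [LinearMap.comp_apply, AlgHom.toLinearMap_apply]
    rw [oj_mul, s.star_mul, map_mul]
  star_star x := by
    simp only [LinearMap.comp_apply, AlgHom.toLinearMap_apply]
    rw [o_star o s hs, s.star_star, oq_oj]

theorem oS_apply (hs : ∀ (x y : ∀ i, A i) (a : Fin N),
    (∀ b, o b = o a → x b = y b) → s.star x a = s.star y a) (i : Fin t) (x : OT A o i) :
    (oS o s hs i).star x = oq k A o i (s.star (oj k A o i x)) := rfl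

theorem oS_q (hs : ∀ (x y : ∀ i, A i) (a : Fin N),
    (∀ b, o b = o a → x b = y b) → s.star x a = s.star y a) (i : Fin t) (x : ∀ a, A a) :
    (oS o s hs i).star (oq k A o i x) = oq k A o i (s.star x) := o_star o s hs i x

theorem oS_j (hs : ∀ (x y : ∀ i, A i) (a : Fin N),
    (∀ b, o b = o a → x b = y b) → s.star x a = s.star y a) (i : Fin t) (x : OT A o i) :
    oj k A o i ((oS o s hs i).star x) = s.star (oj k A o i x) := by
  ext a
  by_cases h : o a = i
  · rw [oj_pos o _ _ a h]; rfl
  · rw [oj_neg o _ _ a h]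
    have := hs (oj k A o i x) 0 a (fun b hb => oj_neg o _ _ b (by rw [hb]; exact h))
    rw [this, map_zero]; rfl

end
end ORB
end SDL

set_option linter.unusedSectionVars false
set_option linter.unusedSimpArgs false
namespace SDL
open SympDet
section FIN
variable {k : Type u} [Field k]

theorem orb_forms {N : ℕ} {A : Fin N → Type u} [∀ i, Ring (A i)] [∀ i, Algebra k (A i)]
    [∀ i, IsSimpleRing (A i)] {K : Type u} [Field K]
    (hA : ∀ a, ∃ (m : ℕ) (_ : NeZero m) (φ : A a →+* Matrix (Fin m) (Fin m) K),
      Submodule.span K (Set.range φ) = ⊤)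
    {t : ℕ} (o : Fin N → Fin t) (s : InvAlg k (∀ i, A i))
    (hs : ∀ (x y : ∀ i, A i) (a : Fin N),
      (∀ b, o b = o a → x b = y b) → s.star x a = s.star y a)
    (σ : Fin N → Fin N) (hσσ : ∀ a, σ (σ a) = a)
    (hloc : ∀ (x y : ∀ i, A i) (a : Fin N), x (σ a) = y (σ a) → s.star x a = s.star y a)
    (ho : ∀ a b, o a = o b ↔ b = a ∨ b = σ a) (hsurj : Function.Surjective o) (i : Fin t) :
    Nonempty (FirstKindCase (OT A o i) (⇑(oS o s hs i).star) (-1)) ∨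
    Nonempty (FirstKindCase (OT A o i) (⇑(oS o s hs i).star) 1) ∨
    Nonempty (SecondKindCase (OT A o i) (⇑(oS o s hs i).star)) ∨
    Nonempty (SwapCase (OT A o i) (⇑(oS o s hs i).star)) := by
  classical
  obtain ⟨a, rfl⟩ := hsurj i
  obtain ⟨m, hm, φ, hφ⟩ := hA a
  have hanti : IsAntiAutOn (OT A o (o a)) (⇑(oS o s hs (o a)).star) :=
    ⟨(oS o s hs (o a)).star_one, map_add _, (oS o s hs (o a)).star_mul, (oS o s hs (o a)).star_star⟩
  by_cases haσ : σ a = a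
  · have hfib : ∀ j : {j // o j = o a}, j = ⟨a, rfl⟩ := by
      rintro ⟨b, hb⟩
      rcases (ho a b).1 hb.symm with h | h
      · exact Subtype.ext h
      · exact Subtype.ext (h.trans haσ)
    let ev : OT A o (o a) →+* A a := Pi.evalRingHom (fun j : {j // o j = o a} => A j.1) ⟨a, rfl⟩
    have hev : Function.Bijective ev := by
      constructor
      · intro x y hxy
        ext j
        rw [hfib j]
        exact hxy
      · intro y
        refine ⟨oq k A o (o a) (Pi.single a y), ?_⟩
        change (Pi.single a y : ∀ i, A i) a = y
        simp
    have hsimp : IsSimpleRing (OT A o (o a)) :=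
      IsSimpleRing.of_ringEquiv (RingEquiv.ofBijective ev hev).symm inferInstance
    have hspan : Submodule.span K (Set.range (φ.comp ev)) = ⊤ := by
      rw [RingHom.coe_comp, hev.2.range_comp, hφ]
    rcases simple_forms (φ.comp ev) hspan _ hanti with h | h | h
    · exact Or.inl h
    · exact Or.inr (Or.inl h)
    · exact Or.inr (Or.inr (Or.inl h))
  · right; right; right
    obtain ⟨Z, fZ, aZ, aK, hcen, hfin, -⟩ := csa_pkg φ hφ
    let S := oS o s hs (o a)
    let a' : {j // o j = o a} := ⟨a, rfl⟩
    let e : OT A o (o a) →+* A a × (A a)ᵐᵒᵖ :=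
      { toFun := fun x => (x a', MulOpposite.op (S.star x a'))
        map_one' := by rw [S.star_one]; rfl
        map_zero' := by rw [map_zero]; rfl
        map_add' := fun x y => by rw [map_add]; rfl
        map_mul' := fun x y => by rw [S.star_mul]; rfl }
    have he : ∀ x, e x = (x a', MulOpposite.op (S.star x a')) := fun x => rfl
    have hinj : Function.Injective e := by
      rw [injective_iff_map_eq_zero]
      intro x hx
      rw [he, Prod.ext_iff] at hx
      obtain ⟨h1, h2⟩ := hx
      have h2 : S.star x a' = 0 := by simpa using h2
      change x a' = 0 at h1
      ext ⟨b, hb⟩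
      rcases (ho a b).1 hb.symm with rfl | rfl
      · exact h1
      · rw [← S.star_star x]
        change s.star (oj k A o (o a) (S.star x)) (σ a) = 0
        rw [hloc _ 0 (σ a), map_zero]
        · rfl
        · rw [hσσ, oj_pos o _ _ a rfl]
          exact h2
    have hsur : Function.Surjective e := by
      rintro ⟨p, r⟩
      let X : ∀ i, A i := Pi.single a p + s.star (Pi.single a r.unop)
      refine ⟨oq k A o (o a) X, ?_⟩
      rw [he]
      have e1 : ∀ y : A a, s.star (Pi.single a y) a = 0 := by
        intro y
        rw [hloc _ 0 a, map_zero]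
        · rfl
        · simp [haσ]
      refine Prod.ext ?_ ?_
      · change X a = p
        simp [X, e1]
      · change MulOpposite.op ((oS o s hs (o a)).star (oq k A o (o a) X) a') = r
        rw [oS_q]
        change MulOpposite.op (s.star X a) = r
        simp [X, e1, s.star_star]
    exact ⟨{ K := Z, E := A a, central := hcen, simple := inferInstance, findim := hfin
             e := RingEquiv.ofBijective e ⟨hinj, hsur⟩
             swap := fun x => by
               change e (S.star x) = ((e x).2.unop, MulOpposite.op (e x).1)
               rw [he, he, S.star_star]
               rfl }⟩

theorem main_thm (h2 : (2 : k) ≠ 0) {R : Type u} [Ring R] [Algebra k R] (s : InvAlg k R) (d : ℕ)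
    (D : PolyLaw k R) (P : PolyLaw k ↥s.plus) (h : IsWeakSympDet s d D P) :
    Nonempty (SympDetDecomposition s d D P) := by
  obtain ⟨N, A, rA, aA, θ, hsimp, hθs, hθk, hA⟩ := semis_pkg (AlgebraicClosure k) h.homog h.mult
  have hstar : ∀ x, θ x = 0 → θ (s.star x) = 0 := by
    intro x hx
    rw [hθk] at hx ⊢
    intro B _ _ b y
    have h3 := hx B b (LinearMap.lTensor B s.star y)
    rw [← h.starInv, map_add, LinearMap.lTensor_tmul, s.star_star, h3, h.starInv]
  obtain ⟨sS, D', P', θp, hcomp, hθp, hw, hfD, hfP⟩ :=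
    descend h2 h θ hθs (fun x hx => (hθk x).1 hx) hstar
  obtain ⟨σ, hσ⟩ := orb_perm sS
  have hσσ : ∀ a, σ (σ a) = a := by
    classical
    intro a
    have h3 := sS.star_star (Pi.single a 1)
    rw [hσ, hσ] at h3
    by_contra hne
    have := congrFun h3 a
    rw [Pi.single_eq_same, Pi.single_eq_of_ne (Ne.symm hne)] at this
    exact zero_ne_one this
  obtain ⟨t, o, hosurj, ho⟩ := orb_idx σ hσσ
  have hloc := orb_loc sS σ hσ hσσ
  have hs : ∀ (x y : ∀ i, A i) (a : Fin N),
      (∀ b, o b = o a → x b = y b) → sS.star x a = sS.star y a :=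
    fun x y a hxy => hloc x y a (hxy _ ((ho a _).2 (Or.inr rfl)).symm)
  let qp : ∀ i, sS.plus →ₗ[k] (oS o sS hs i).plus := fun i =>
    LinearMap.restrict (oq k A o i).toLinearMap (fun x hx => by
      rw [mem_plus] at hx ⊢
      rw [AlgHom.toLinearMap_apply, oS_q, hx])
  obtain ⟨di, D'', P'', hsum, hw', hfD', hfP'⟩ := split_laws h2 hw (OT A o) (oq k A o) (oj k A o)
    (oj_mul o) (oj_oq o) (oj_oq' o) (fun a b => oj_orth o a b) (oj_sum o) (oS o sS hs)
    (oS_j o sS hs) qp (fun i y => rfl)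
  let π : R →ₐ[k] (∀ i, OT A o i) := AlgHom.pi fun i => (oq k A o i).comp θ
  have hπ : ∀ x i, π x i = oq k A o i (θ x) := fun x i => rfl
  exact ⟨{
    t := t
    F := fun i => { carrier := OT A o i, inv := oS o sS hs i }
    π := π
    surj := by
      intro y
      obtain ⟨x, hx⟩ := hθs (fun a => y (o a) ⟨a, rfl⟩)
      refine ⟨x, ?_⟩
      ext i ⟨a, rfl⟩
      rw [hπ, hx]
      rfl
    ker_eq := by
      intro x
      rw [← hθk]
      constructor
      · intro hx
        ext a
        exact congrFun (congrFun hx (o a)) ⟨a, rfl⟩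
      · intro hx
        ext i
        rw [hπ, hx]
        rfl
    compat := by
      intro x i
      change oq k A o i (θ (s.star x)) = (oS o sS hs i).star (oq k A o i (θ x))
      rw [hcomp, oS_q]
    di := di
    dimsum := hsum
    Dlaw := D''
    Plaw := P''
    sympdet := fun i => weak_isSymp h2 (hw' i)
    forms := orb_forms hA o sS hs σ hσσ hloc ho hosurj
    factorD := by
      intro B _ _ x
      rw [hfD, hfD']
      refine Finset.prod_congr rfl fun i _ => ?_
      rw [lT_comp]
      rfl
    q := fun i => qp i ∘ₗ θp
    hq := by
      intro i y
      change oq k A o i (θp y : ∀ i, A i) = oq k A o i (θ y)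
      rw [hθp]
    factorP := by
      intro B _ _ y
      rw [hfP, hfP']
      refine Finset.prod_congr rfl fun i _ => ?_
      rw [lT_comp]
  }⟩
end FIN
end SDL

open SympDet in
theorem stmt_6 {k : Type u} [Field k] (h2 : IsUnit (2 : k))
    {R : Type u} [Ring R] [Algebra k R] (s : InvAlg k R) (d : ℕ)
    (D : PolyLaw k R) (P : PolyLaw k ↥s.plus) (h : IsWeakSympDet s d D P) :
    Nonempty (SympDetDecomposition s d D P) ∧ IsSympDet s d D P := by
  exact ⟨SDL.main_thm h2.ne_zero s d D P h, SDL.weak_isSymp h2.ne_zero h⟩
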